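/- arXiv:1403.5302 — 5 statements merged into one kernel-verified Lean document; each statement's English description precedes it below -/
import Mathlib

section
/- Fix δ ≠ 0, and let f and g be positive functions on [0,∞) such that g is slowly varying and f is slowly varying with remainder g. Suppose also that the functions f, g, 1/f, and 1/g are locally bounded on [0,∞). Then there exists A > 0 such that |f(λx) − f(x)| ≤ A·f(x)·g(x)·max{λ^δ, λ^{−δ}} for all λ > 0 and x ≥ 0. -/
open Filter Asymptotics MeasureTheory

/-- Uniformity from pointwise eventual validity, via outer measure. -/
lemma svr_uniform (Q : ℕ → ℝ → ℝ → Prop)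
    (hmeas : ∀ n t, MeasurableSet {v | Q n t v})
    (hmono : ∀ n m t v, n ≤ m → Q n t v → Q m t v)
    (hev : ∀ v : ℝ, 0 ≤ v → ∃ n : ℕ, ∀ t : ℝ, (n:ℝ) ≤ t → Q n t v) :
    ∃ n : ℕ, ∀ t : ℝ, (n:ℝ) ≤ t → ∀ u ∈ Set.Icc (0:ℝ) 1,
      ∃ v, Q n t v ∧ Q n (t + u) (v - u) := by
  let K : ℕ → Set ℝ := fun n => {v | v ∈ Set.Icc (0:ℝ) 3 ∧ ∀ t : ℝ, (n:ℝ) ≤ t → Q n t v}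
  have hK : Monotone K := by
    intro n m hnm v hv
    refine ⟨hv.1, fun t ht => hmono n m t v hnm (hv.2 t ?_)⟩
    have : (n:ℝ) ≤ m := by exact_mod_cast hnm
    linarith
  have hU : (⋃ n, K n) = Set.Icc (0:ℝ) 3 := by
    ext v
    simp only [Set.mem_iUnion]
    constructor
    · rintro ⟨n, hn⟩; exact hn.1
    · intro hv
      obtain ⟨n, hn⟩ := hev v hv.1
      exact ⟨n, hv, hn⟩
  have hlim : Tendsto (fun n => volume (K n)) atTop (nhds (volume (⋃ n, K n))) :=
    tendsto_measure_iUnion_atTop hK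
  rw [hU, Real.volume_Icc] at hlim
  have h1 : ENNReal.ofReal (5/2) < ENNReal.ofReal (3 - 0) :=
    (ENNReal.ofReal_lt_ofReal_iff (by norm_num)).2 (by norm_num)
  obtain ⟨n, hn⟩ := (hlim.eventually (lt_mem_nhds h1)).exists
  refine ⟨n, fun t ht u hu => ?_⟩
  let S : ℝ → Set ℝ := fun t => Set.Icc (0:ℝ) 3 ∩ {v | Q n t v}
  have hS : ∀ t : ℝ, (n:ℝ) ≤ t → ENNReal.ofReal (5/2) < volume (S t) := by
    intro t ht
    exact hn.trans_le (measure_mono fun v hv => ⟨hv.1, hv.2 t ht⟩)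
  have hSm : ∀ t, MeasurableSet (S t) := fun t => measurableSet_Icc.inter (hmeas n t)
  let S' : Set ℝ := (fun v => v - u) ⁻¹' (S (t + u))
  have hS'v : volume S' = volume (S (t+u)) := by
    have h := measure_preimage_add_right volume (-u) (S (t + u))
    simpa only [S', sub_eq_add_neg] using h
  have hS'm : MeasurableSet S' := (measurable_id.sub_const u) (hSm _)
  by_contra hcon
  push Not at hcon
  have hdisj : Disjoint (S t) S' := by
    rw [Set.disjoint_left]
    intro v hv hv'
    exact hcon v hv.2 hv'.2
  have hun : volume (S t ∪ S') = volume (S t) + volume S' := measure_union hdisj hS'm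
  have hle : volume (S t ∪ S') ≤ volume (Set.Icc (0:ℝ) 4) := by
    apply measure_mono
    rintro v (hv | hv)
    · exact ⟨hv.1.1, by linarith [hv.1.2]⟩
    · have h := hv.1
      simp only [Set.mem_Icc] at h hu ⊢
      constructor <;> linarith [h.1, h.2, hu.1, hu.2]
  rw [hun, hS'v, Real.volume_Icc] at hle
  have h2 := ENNReal.add_lt_add (hS t ht) (hS (t+u) (by linarith [hu.1]))
  have h3 := h2.trans_le hle
  rw [← ENNReal.ofReal_add (by norm_num) (by norm_num),
    ENNReal.ofReal_lt_ofReal_iff (by norm_num)] at h3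
  norm_num at h3

/-- Additive Potter-type bounds. -/
lemma svr_potter (F G : ℝ → ℝ) (hFm : Measurable F) (hGm : Measurable G)
    (hF : ∀ t, 0 < F t) (hG : ∀ t, 0 < G t)
    (hFs : ∀ v, 0 ≤ v → Tendsto (fun t => F (t + v) / F t) atTop (nhds 1))
    (hGs : ∀ v, 0 ≤ v → Tendsto (fun t => G (t + v) / G t) atTop (nhds 1))
    (hR : ∀ v, 0 ≤ v → ∃ c : ℝ, ∀ᶠ t in atTop, |F (t + v) - F t| ≤ c * (F t * G t))
    (ε : ℝ) (hε : 0 < ε) :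
    ∃ T D : ℝ, 1 ≤ D ∧ ∀ t, T ≤ t → ∀ s, 0 ≤ s →
      F (t + s) ≤ D * Real.exp (ε * s) * F t ∧ F t ≤ D * Real.exp (ε * s) * F (t + s) ∧
      G (t + s) ≤ D * Real.exp (ε * s) * G t ∧ G t ≤ D * Real.exp (ε * s) * G (t + s) ∧
      |F (t + s) - F t| ≤ D * Real.exp (2 * ε * s) * (F t * G t) := by
  -- eventual comparability
  have key : ∀ H : ℝ → ℝ, (∀ t, 0 < H t) → ∀ v : ℝ,
      Tendsto (fun t => H (t + v) / H t) atTop (nhds 1) → ∀ q : ℝ, 1 < q →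
      ∀ᶠ t in atTop, H (t + v) ≤ q * H t ∧ H t ≤ q * H (t + v) := by
    intro H hH v hv q hq
    have hq' : q⁻¹ < 1 := inv_lt_one_of_one_lt₀ hq
    filter_upwards [hv.eventually (gt_mem_nhds hq), hv.eventually (lt_mem_nhds hq')] with t h1 h2
    rw [div_lt_iff₀ (hH t)] at h1
    rw [lt_div_iff₀ (hH t), inv_mul_lt_iff₀ (by linarith)] at h2
    exact ⟨h1.le, h2.le⟩
  obtain ⟨n, hn⟩ := svr_uniform (fun n t v => (|F (t + v) - F t| ≤ n * (F t * G t)) ∧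
      (F (t + v) ≤ 2 * F t ∧ F t ≤ 2 * F (t + v)) ∧ (G (t + v) ≤ 2 * G t ∧ G t ≤ 2 * G (t + v)))
    (by
      intro n t
      have h1 : Measurable fun v => F (t + v) := hFm.comp (measurable_const_add t)
      have h2 : Measurable fun v => G (t + v) := hGm.comp (measurable_const_add t)
      refine MeasurableSet.inter (s₁ := {v | |F (t + v) - F t| ≤ n * (F t * G t)}) ?_
        (MeasurableSet.inter (s₁ := {v | F (t + v) ≤ 2 * F t ∧ F t ≤ 2 * F (t + v)})
          (MeasurableSet.inter (s₁ := {v | F (t + v) ≤ 2 * F t}) ?_ ?_)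
          (MeasurableSet.inter (s₁ := {v | G (t + v) ≤ 2 * G t}) ?_ ?_))
      · have h3 : Measurable fun v => |F (t + v) - F t| := by
          simpa [Real.norm_eq_abs] using (h1.sub_const (F t)).norm
        exact measurableSet_le h3 measurable_const
      · exact measurableSet_le h1 measurable_const
      · exact measurableSet_le measurable_const (h1.const_mul 2)
      · exact measurableSet_le h2 measurable_const
      · exact measurableSet_le measurable_const (h2.const_mul 2))
    (by
      rintro n m t v hnm ⟨h1, h2⟩
      refine ⟨h1.trans ?_, h2⟩
      have : (n:ℝ) ≤ m := by exact_mod_cast hnm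
      exact mul_le_mul_of_nonneg_right this (mul_pos (hF t) (hG t)).le)
    (by
      intro v hv
      obtain ⟨c, hc⟩ := hR v hv
      have := (hc.and ((key F hF v (hFs v hv) 2 (by norm_num)).and
        (key G hG v (hGs v hv) 2 (by norm_num))))
      obtain ⟨N, hN⟩ := eventually_atTop.1 this
      obtain ⟨k, hk⟩ := exists_nat_ge (max N c)
      refine ⟨k, fun t ht => ?_⟩
      obtain ⟨h1, h2⟩ := hN t (by linarith [le_max_left N c])
      refine ⟨h1.trans ?_, h2⟩
      exact mul_le_mul_of_nonneg_right (by linarith [le_max_right N c])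
        (mul_pos (hF t) (hG t)).le)
  -- local bounds
  have loc : ∀ t : ℝ, (n:ℝ) ≤ t → ∀ u ∈ Set.Icc (0:ℝ) 1,
      F (t + u) ≤ 4 * F t ∧ F t ≤ 4 * F (t + u) ∧ G (t + u) ≤ 4 * G t ∧ G t ≤ 4 * G (t + u) ∧
      |F (t + u) - F t| ≤ 17 * n * (F t * G t) := by
    intro t ht u hu
    obtain ⟨v, ⟨h1, ⟨h2, h3⟩, h4, h5⟩, h6, ⟨h7, h8⟩, h9, h10⟩ := hn t ht u hu
    have e : t + u + (v - u) = t + v := by ring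
    rw [e] at h6 h7 h8 h9 h10
    have a1 : F (t + u) ≤ 4 * F t := by linarith
    have a2 : G (t + u) ≤ 4 * G t := by linarith
    refine ⟨a1, by linarith, a2, by linarith, ?_⟩
    have a3 : F (t + u) * G (t + u) ≤ (4 * F t) * (4 * G t) :=
      mul_le_mul a1 a2 (hG _).le (by linarith [hF t])
    have a4 := mul_le_mul_of_nonneg_left a3 (Nat.cast_nonneg (α := ℝ) n)
    rw [abs_le] at *
    constructor <;> nlinarith
  set q := Real.exp ε with hq
  have hq1 : 1 < q := Real.one_lt_exp_iff.2 hε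
  have step := (key F hF 1 (hFs 1 zero_le_one) q hq1).and (key G hG 1 (hGs 1 zero_le_one) q hq1)
  obtain ⟨N, hN⟩ := eventually_atTop.1 step
  set C : ℝ := 17 * n with hC
  have hC0 : 0 ≤ C := by positivity
  have hqq : 0 < q ^ 2 - 1 := by nlinarith
  set B : ℝ := C / (q ^ 2 - 1) with hB
  have hB0 : 0 ≤ B := div_nonneg hC0 hqq.le
  have hBC : B + C = B * q ^ 2 := by
    rw [hB]; field_simp; ring
  have hqpos : 0 < q := by linarith
  have ind : ∀ t, max N n ≤ t → ∀ k : ℕ,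
      F (t + k) ≤ q ^ k * F t ∧ F t ≤ q ^ k * F (t + k) ∧
      G (t + k) ≤ q ^ k * G t ∧ G t ≤ q ^ k * G (t + k) ∧
      |F (t + k) - F t| ≤ B * (q ^ 2) ^ k * (F t * G t) := by
    intro t ht k
    induction k with
    | zero => simp; positivity [hF t, hG t]
    | succ k ih =>
      obtain ⟨h1, h2, h3, h4, h5⟩ := ih
      have hk : (0:ℝ) ≤ k := Nat.cast_nonneg k
      have e : t + ((k + 1 : ℕ) : ℝ) = t + k + 1 := by push_cast; ring
      rw [e]
      obtain ⟨⟨a1, a2⟩, a3, a4⟩ := hN (t + k) (by linarith [le_max_left N (n:ℝ)])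
      obtain ⟨-, -, -, -, a5⟩ := loc (t + k) (by linarith [le_max_right N (n:ℝ)]) 1
        ⟨zero_le_one, le_rfl⟩
      have hqk : 0 < q ^ k := by positivity
      refine ⟨?_, ?_, ?_, ?_, ?_⟩
      · calc F (t + k + 1) ≤ q * F (t + k) := a1
          _ ≤ q * (q ^ k * F t) := by gcongr
          _ = _ := by ring
      · calc F t ≤ q ^ k * F (t + k) := h2
          _ ≤ q ^ k * (q * F (t + k + 1)) := by gcongr
          _ = _ := by ring
      · calc G (t + k + 1) ≤ q * G (t + k) := a3
          _ ≤ q * (q ^ k * G t) := by gcongr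
          _ = _ := by ring
      · calc G t ≤ q ^ k * G (t + k) := h4
          _ ≤ q ^ k * (q * G (t + k + 1)) := by gcongr
          _ = _ := by ring
      · have b : F (t + k) * G (t + k) ≤ (q ^ k * F t) * (q ^ k * G t) :=
          mul_le_mul h1 h3 (hG _).le (mul_pos hqk (hF t)).le
        calc |F (t + k + 1) - F t| ≤ |F (t + k + 1) - F (t + k)| + |F (t + k) - F t| :=
              abs_sub_le _ _ _
          _ ≤ C * ((q ^ k * F t) * (q ^ k * G t)) + B * (q ^ 2) ^ k * (F t * G t) :=
              add_le_add (a5.trans (mul_le_mul_of_nonneg_left b hC0)) h5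
          _ = (B + C) * (q ^ 2) ^ k * (F t * G t) := by ring
          _ = _ := by rw [hBC]; ring
  refine ⟨max N n, 4 + B + C, by linarith, fun t ht s hs => ?_⟩
  obtain ⟨h1, h2, h3, h4, h5⟩ := ind t ht ⌊s⌋₊
  set k := ⌊s⌋₊
  have hks : (k:ℝ) ≤ s := Nat.floor_le hs
  have hsk : s < k + 1 := Nat.lt_floor_add_one s
  have hk0 : (0:ℝ) ≤ k := Nat.cast_nonneg k
  obtain ⟨a1, a2, a3, a4, a5⟩ := loc (t + k) (by linarith [le_max_right N (n:ℝ)]) (s - k)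
    ⟨by linarith, by linarith⟩
  have e : t + k + (s - k) = t + s := by ring
  rw [e] at a1 a2 a3 a4 a5
  have hqk : 0 < q ^ k := by positivity
  have hqE : q ^ k ≤ Real.exp (ε * s) := by
    rw [hq, ← Real.exp_nat_mul]
    apply Real.exp_le_exp.2
    nlinarith
  have hqE2 : (q ^ 2) ^ k ≤ Real.exp (2 * ε * s) := by
    rw [hq, ← Real.exp_nat_mul, ← Real.exp_nat_mul]
    apply Real.exp_le_exp.2
    push_cast
    nlinarith
  have hD : 4 * q ^ k ≤ (4 + B + C) * Real.exp (ε * s) :=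
    mul_le_mul (by linarith) hqE hqk.le (by linarith)
  refine ⟨?_, ?_, ?_, ?_, ?_⟩
  · calc F (t + s) ≤ 4 * (q ^ k * F t) := by linarith
      _ = (4 * q ^ k) * F t := by ring
      _ ≤ _ := mul_le_mul_of_nonneg_right hD (hF _).le
  · calc F t ≤ q ^ k * F (t + k) := h2
      _ ≤ q ^ k * (4 * F (t + s)) := by gcongr
      _ = (4 * q ^ k) * F (t + s) := by ring
      _ ≤ _ := mul_le_mul_of_nonneg_right hD (hF _).le
  · calc G (t + s) ≤ 4 * (q ^ k * G t) := by linarith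
      _ = (4 * q ^ k) * G t := by ring
      _ ≤ _ := mul_le_mul_of_nonneg_right hD (hG _).le
  · calc G t ≤ q ^ k * G (t + k) := h4
      _ ≤ q ^ k * (4 * G (t + s)) := by gcongr
      _ = (4 * q ^ k) * G (t + s) := by ring
      _ ≤ _ := mul_le_mul_of_nonneg_right hD (hG _).le
  · have b : F (t + k) * G (t + k) ≤ (q ^ k * F t) * (q ^ k * G t) :=
      mul_le_mul h1 h3 (hG _).le (mul_pos hqk (hF t)).le
    have hFG := mul_pos (hF t) (hG t)
    calc |F (t + s) - F t| ≤ |F (t + s) - F (t + k)| + |F (t + k) - F t| :=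
          abs_sub_le _ _ _
      _ ≤ C * ((q ^ k * F t) * (q ^ k * G t)) + B * (q ^ 2) ^ k * (F t * G t) :=
          add_le_add (a5.trans (mul_le_mul_of_nonneg_left b hC0)) h5
      _ = (B + C) * (q ^ 2) ^ k * (F t * G t) := by ring
      _ ≤ (4 + B + C) * Real.exp (2 * ε * s) * (F t * G t) := by
          gcongr
          linarith

/-- Theorem 3.8.6(b) of Bingham–Goldie–Teugels, as used in the paper.
Fix `δ ≠ 0`, and let `f` and `g` be positive functions on `[0,∞)` such that `g` is slowly
varying and `f` is slowly varying with remainder `g`.  Suppose also that `f`, `g`, `1/f`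
and `1/g` are locally bounded on `[0,∞)`.  Then there exists `A > 0` such that
`|f(λx) − f(x)| ≤ A f(x) g(x) max{λ^δ, λ^{−δ}}` for all `λ > 0` and `x ≥ 0`. -/
theorem slowly_varying_with_remainder_growth_bound
    (δ : ℝ) (hδ : δ ≠ 0) (f g : ℝ → ℝ)
    (hf_meas : Measurable f) (hg_meas : Measurable g)
    (hf_pos : ∀ x : ℝ, 0 ≤ x → 0 < f x) (hg_pos : ∀ x : ℝ, 0 ≤ x → 0 < g x)
    -- `g` is slowly varying
    (hg_slow : ∀ lam : ℝ, 0 < lam →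
      Tendsto (fun x => g (lam * x) / g x) atTop (nhds 1))
    -- `g(x) → 0` as `x → ∞`
    (hg_zero : Tendsto g atTop (nhds 0))
    -- `f` is slowly varying with remainder `g`
    (hf_rem : ∀ lam : ℝ, 1 < lam →
      (fun x => f (lam * x) / f x - 1) =O[atTop] g)
    -- `f`, `g`, `1/f`, `1/g` are locally bounded on `[0,∞)`
    (hloc : ∀ a : ℝ, 0 < a → ∃ M : ℝ, ∀ x ∈ Set.Icc (0:ℝ) a,
      f x ≤ M ∧ g x ≤ M ∧ (f x)⁻¹ ≤ M ∧ (g x)⁻¹ ≤ M) :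
    ∃ A : ℝ, 0 < A ∧ ∀ lam : ℝ, 0 < lam → ∀ x : ℝ, 0 ≤ x →
      |f (lam * x) - f x| ≤ A * f x * g x * max (lam ^ δ) (lam ^ (-δ)) := by
  have hε : 0 < |δ| / 4 := by positivity
  have hFp : ∀ t, 0 < f (Real.exp t) := fun t => hf_pos _ (Real.exp_pos t).le
  have hGp : ∀ t, 0 < g (Real.exp t) := fun t => hg_pos _ (Real.exp_pos t).le
  have hexp : ∀ t v : ℝ, Real.exp (t + v) = Real.exp v * Real.exp t := fun t v => by
    rw [Real.exp_add, mul_comm]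
  have hf_slow : ∀ lam : ℝ, 1 ≤ lam → Tendsto (fun x => f (lam * x) / f x) atTop (nhds 1) := by
    intro lam hlam
    rcases hlam.eq_or_lt with h | h
    · subst h
      refine tendsto_const_nhds.congr' ?_
      filter_upwards [eventually_ge_atTop 0] with x hx
      rw [one_mul, div_self (hf_pos x hx).ne']
    · have := ((hf_rem lam h).trans_tendsto hg_zero).add_const 1
      simpa using this
  obtain ⟨T, D, hD, hP⟩ := svr_potter (fun t => f (Real.exp t)) (fun t => g (Real.exp t))
    (hf_meas.comp Real.measurable_exp) (hg_meas.comp Real.measurable_exp) hFp hGp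
    (by
      intro v hv
      have := (hf_slow (Real.exp v) (Real.one_le_exp hv)).comp Real.tendsto_exp_atTop
      refine this.congr fun t => ?_
      simp only [Function.comp, hexp])
    (by
      intro v hv
      have := (hg_slow (Real.exp v) (Real.exp_pos v)).comp Real.tendsto_exp_atTop
      refine this.congr fun t => ?_
      simp only [Function.comp, hexp])
    (by
      intro v hv
      rcases hv.eq_or_lt with h | h
      · subst h
        exact ⟨0, by simp⟩
      · obtain ⟨c, hc⟩ := (hf_rem (Real.exp v) (Real.one_lt_exp_iff.2 h)).bound
        refine ⟨c, ?_⟩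
        filter_upwards [Real.tendsto_exp_atTop.eventually hc] with t ht
        simp only [hexp]
        rw [Real.norm_eq_abs, Real.norm_eq_abs, abs_of_pos (hGp t), div_sub_one (hFp t).ne',
          abs_div, abs_of_pos (hFp t), div_le_iff₀ (hFp t)] at ht
        linarith)
    (|δ| / 4) hε
  set a := Real.exp T with ha
  have ha0 : 0 < a := Real.exp_pos T
  obtain ⟨M, hM⟩ := hloc a ha0
  have hM0 : 0 < M := (hf_pos 0 le_rfl).trans_le (hM 0 ⟨le_rfl, ha0.le⟩).1
  -- Potter bounds in multiplicative form, monotone in the exponent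
  have hP' : ∀ x, a ≤ x → ∀ y, x ≤ y → ∀ L, Real.log y - Real.log x ≤ L →
      f y ≤ D * Real.exp (|δ| / 4 * L) * f x ∧ f x ≤ D * Real.exp (|δ| / 4 * L) * f y ∧
      g y ≤ D * Real.exp (|δ| / 4 * L) * g x ∧ g x ≤ D * Real.exp (|δ| / 4 * L) * g y ∧
      |f y - f x| ≤ D * Real.exp (2 * (|δ| / 4) * L) * (f x * g x) := by
    intro x hx y hxy L hL
    have hx0 : 0 < x := by linarith
    have hy0 : 0 < y := by linarith
    have h := hP (Real.log x) ((Real.le_log_iff_exp_le hx0).2 hx) (Real.log y - Real.log x)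
      (sub_nonneg.2 (Real.log_le_log hx0 hxy))
    simp only [add_sub_cancel, Real.exp_log hx0, Real.exp_log hy0] at h
    obtain ⟨h1, h2, h3, h4, h5⟩ := h
    have e1 : D * Real.exp (|δ| / 4 * (Real.log y - Real.log x)) ≤ D * Real.exp (|δ| / 4 * L) := by
      gcongr
    have e2 : D * Real.exp (2 * (|δ| / 4) * (Real.log y - Real.log x)) ≤
        D * Real.exp (2 * (|δ| / 4) * L) := by
      gcongr
    have fx := hf_pos x hx0.le
    have fy := hf_pos y hy0.le
    have gx := hg_pos x hx0.le
    have gy := hg_pos y hy0.le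
    exact ⟨h1.trans (mul_le_mul_of_nonneg_right e1 fx.le),
      h2.trans (mul_le_mul_of_nonneg_right e1 fy.le),
      h3.trans (mul_le_mul_of_nonneg_right e1 gx.le),
      h4.trans (mul_le_mul_of_nonneg_right e1 gy.le),
      h5.trans (mul_le_mul_of_nonneg_right e2 (mul_pos fx gx).le)⟩
  have hD0 : 0 < D := by linarith
  refine ⟨2 * M ^ 3 + (D * M + M) * M ^ 2 + (M ^ 3 * D ^ 2 + M * D) + D ^ 3, by positivity,
    fun lam hlam x hx => ?_⟩
  set A := 2 * M ^ 3 + (D * M + M) * M ^ 2 + (M ^ 3 * D ^ 2 + M * D) + D ^ 3 with hA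
  have hmax : max (lam ^ δ) (lam ^ (-δ)) = Real.exp (|δ| * |Real.log lam|) := by
    rw [Real.rpow_def_of_pos hlam, Real.rpow_def_of_pos hlam, ← abs_mul, abs_eq_max_neg,
      Real.exp_monotone.map_max]
    congr 2 <;> ring
  rw [hmax]
  set w := Real.exp (|δ| / 4 * |Real.log lam|) with hw
  have hw1 : 1 ≤ w := Real.one_le_exp (by positivity)
  have hw2 : Real.exp (2 * (|δ| / 4) * |Real.log lam|) = w ^ 2 := by
    rw [hw, ← Real.exp_nat_mul]; congr 1; push_cast; ring
  have hw4 : Real.exp (|δ| * |Real.log lam|) = w ^ 4 := by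
    rw [hw, ← Real.exp_nat_mul]; congr 1; push_cast; ring
  rw [hw4]
  have hw0 : 0 < w := by linarith
  have w14 : w ≤ w ^ 4 := le_self_pow₀ hw1 (by norm_num)
  have w24 : w ^ 2 ≤ w ^ 4 := pow_le_pow_right₀ hw1 (by norm_num)
  have w04 : 1 ≤ w ^ 4 := one_le_pow₀ hw1
  have hy : 0 ≤ lam * x := by positivity
  have fx := hf_pos x hx
  have gx := hg_pos x hx
  have fy := hf_pos _ hy
  have gy := hg_pos _ hy
  have hfg := mul_pos fx gx
  have habs : |f (lam * x) - f x| ≤ f (lam * x) + f x := by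
    rw [abs_le]; constructor <;> linarith
  -- it suffices to bound with any smaller constant
  have fin : ∀ A', A' ≤ A → |f (lam * x) - f x| ≤ A' * (w ^ 4 * (f x * g x)) →
      |f (lam * x) - f x| ≤ A * f x * g x * w ^ 4 := by
    intro A' h1 h2
    calc _ ≤ A' * (w ^ 4 * (f x * g x)) := h2
      _ ≤ A * (w ^ 4 * (f x * g x)) := mul_le_mul_of_nonneg_right h1 (by positivity)
      _ = _ := by ring
  have hlog : 0 < x → Real.log (lam * x) = Real.log lam + Real.log x := fun h =>
    Real.log_mul hlam.ne' h.ne'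
  have P1 : 0 < 2 * M ^ 3 := by positivity
  have P2 : 0 < (D * M + M) * M ^ 2 := by positivity
  have P3 : 0 < M ^ 3 * D ^ 2 + M * D := by positivity
  have P4 : 0 < D ^ 3 := by positivity
  have one_le : ∀ z, 0 < z → z⁻¹ ≤ M → 1 ≤ M * z := by
    intro z hz h
    rwa [inv_le_iff_one_le_mul₀ hz] at h
  have labs := le_abs_self (Real.log lam)
  have nabs := neg_le_abs (Real.log lam)
  rcases le_or_gt x a with hxa | hxa
  · obtain ⟨m1, m2, m3, m4⟩ := hM x ⟨hx, hxa⟩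
    have k1 := one_le _ fx m3
    have k2 := one_le _ gx m4
    have k3 : 1 ≤ M ^ 2 * (f x * g x) := by nlinarith
    rcases le_or_gt (lam * x) a with hya | hya
    · obtain ⟨n1, -⟩ := hM _ ⟨hy, hya⟩
      apply fin (2 * M ^ 3) (by linarith)
      calc _ ≤ 2 * M * 1 * 1 := by linarith
        _ ≤ 2 * M * w ^ 4 * (M ^ 2 * (f x * g x)) := by gcongr
        _ = _ := by ring
    · have hx0 : 0 < x := by
        rcases hx.eq_or_lt with h | h
        · subst h; simp at hya; linarith
        · exact h
      obtain ⟨p1, -⟩ := hP' a le_rfl (lam * x) hya.le |Real.log lam| (by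
        rw [hlog hx0]
        linarith [Real.log_le_log hx0 hxa])
      obtain ⟨n1, -⟩ := hM a ⟨ha0.le, le_rfl⟩
      apply fin ((D * M + M) * M ^ 2) (by linarith)
      calc _ ≤ D * w * f a + f x := by linarith
        _ ≤ D * w ^ 4 * M + M * w ^ 4 := by
            have : f x ≤ M * w ^ 4 := by nlinarith
            have hfa := (hf_pos a ha0.le).le
            gcongr
        _ = (D * M + M) * w ^ 4 * 1 := by ring
        _ ≤ (D * M + M) * w ^ 4 * (M ^ 2 * (f x * g x)) := by gcongr
        _ = _ := by ring
  · have hx0 : 0 < x := by linarith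
    rcases le_or_gt (lam * x) a with hya | hya
    · have hy0 : 0 < lam * x := by positivity
      obtain ⟨-, p2, -, p4, -⟩ := hP' a le_rfl x hxa.le |Real.log lam| (by
        have := Real.log_le_log hy0 hya
        rw [hlog hx0] at this
        linarith)
      obtain ⟨n1, -⟩ := hM _ ⟨hy, hya⟩
      obtain ⟨-, -, m3, m4⟩ := hM a ⟨ha0.le, le_rfl⟩
      have k1 := one_le _ (hf_pos a ha0.le) m3
      have k2 := one_le _ (hg_pos a ha0.le) m4
      have j1 : 1 ≤ M * (D * w * f x) := k1.trans (mul_le_mul_of_nonneg_left p2 hM0.le)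
      have j2 : 1 ≤ M * (D * w * g x) := k2.trans (mul_le_mul_of_nonneg_left p4 hM0.le)
      have j3 : 1 ≤ (M * (D * w * f x)) * (M * (D * w * g x)) := one_le_mul_of_one_le_of_one_le j1 j2
      apply fin (M ^ 3 * D ^ 2 + M * D) (by linarith)
      calc _ ≤ M * 1 + f x * 1 := by linarith
        _ ≤ M * ((M * (D * w * f x)) * (M * (D * w * g x))) + f x * (M * (D * w * g x)) := by
            gcongr
        _ = (M ^ 3 * D ^ 2) * (w ^ 2 * (f x * g x)) + M * D * (w * (f x * g x)) := by ring
        _ ≤ (M ^ 3 * D ^ 2) * (w ^ 4 * (f x * g x)) + M * D * (w ^ 4 * (f x * g x)) := by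
            gcongr
        _ = _ := by ring
    · rcases le_total x (lam * x) with hxy | hxy
      · obtain ⟨-, -, -, -, p5⟩ := hP' x hxa.le (lam * x) hxy |Real.log lam| (by
          rw [hlog hx0]; linarith)
        rw [hw2] at p5
        apply fin (D ^ 3) (by linarith)
        calc _ ≤ D * w ^ 2 * (f x * g x) := p5
          _ ≤ D ^ 3 * w ^ 4 * (f x * g x) := by
              have : D ≤ D ^ 3 := le_self_pow₀ hD (by norm_num)
              gcongr
          _ = _ := by ring
      · obtain ⟨-, p2, -, p4, p5⟩ := hP' (lam * x) hya.le x hxy |Real.log lam| (by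
          rw [hlog hx0]; linarith)
        rw [hw2, abs_sub_comm] at p5
        apply fin (D ^ 3) (by linarith)
        calc _ ≤ D * w ^ 2 * (f (lam * x) * g (lam * x)) := p5
          _ ≤ D * w ^ 2 * ((D * w * f x) * (D * w * g x)) := by gcongr
          _ = _ := by ring
end

section
/- Suppose the Mellin transform MU of a nonnegative measurable function U on (0,∞) converges absolutely at least in the strip σ ≤ Re(z) ≤ τ, where −∞ < σ < τ < ∞. Let f be a measurable function on (0,∞), and assume: (1) f(x) = x^ρ l(x)(1 + O(h(x))) as x → ∞, where ρ ∈ (σ,τ), l is slowly varying with remainder g for some slowly varying g, h belongs to the Zygmund class, and g(x) → 0 and h(x) → 0 as x → ∞; (2) the functions g, 1/l, and 1/g are locally bounded on the interval (x_0,∞) for some x_0 > 0; (3) the function x ↦ x^{−σ} f(x) is bounded on every interval (0,a] with a > 0. Then the Mellin convolution satisfies U ⋆_M f(x) = MU(ρ)·x^ρ l(x)·(1 + O(g(x)) + O(h(x))) as x → ∞. -/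
open Filter Asymptotics MeasureTheory

/-- The Mellin convolution of two measurable functions on `(0,∞)`:
`f ⋆_M g (x) = ∫_0^∞ f(x/t) g(t) dt/t`. -/
noncomputable def mellinConv (f g : ℝ → ℝ) (x : ℝ) : ℝ :=
  ∫ t in Set.Ioi (0:ℝ), f (x / t) * g t / t

/-- The Mellin transform of a function on `(0,∞)` at a real point `s`:
`MU(s) = ∫_0^∞ t^{−s} U(t) dt/t`. -/
noncomputable def mellinT (U : ℝ → ℝ) (s : ℝ) : ℝ :=
  ∫ t in Set.Ioi (0:ℝ), t ^ (-s) * U t / t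

lemma aux_uct (F γ : ℝ → ℝ) (hF : Measurable F) (c : ℕ → ℝ) (hc : Monotone c)
    (hγ : ∀ t, 0 ≤ γ t)
    (H : ∀ s : ℝ, 0 ≤ s → ∃ K : ℕ, ∀ t : ℝ, (K:ℝ) ≤ t → |F (t + s) - F t| ≤ c K * γ t) :
    ∃ k : ℕ, ∀ t : ℝ, (k:ℝ) ≤ t → ∀ s ∈ Set.Icc (0:ℝ) 1,
      |F (t + s) - F t| ≤ c k * (γ t + γ (t + s)) := by
  by_contra hcon
  push Not at hcon
  choose t ht s hs hlt using hcon
  have key : ∀ r : ℕ → ℝ, (∀ n : ℕ, (n:ℝ) ≤ r n) → ∃ A : ℕ → Set ℝ,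
      (∀ k, MeasurableSet (A k)) ∧ Monotone A ∧ (⋃ k, A k) = Set.Icc 0 2 ∧
      ∀ k, ∀ u ∈ A k, |F (r k + u) - F (r k)| ≤ c k * γ (r k) := by
    intro r hr
    refine ⟨fun k => Set.Icc 0 2 ∩ ⋂ n : ℕ, ⋂ _ : k ≤ n,
      {u | |F (r n + u) - F (r n)| ≤ c k * γ (r n)}, ?_, ?_, ?_, ?_⟩
    · intro k
      refine measurableSet_Icc.inter (MeasurableSet.iInter fun n => MeasurableSet.iInter fun _ => ?_)
      refine measurableSet_le ?_ measurable_const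
      have : Measurable fun u => F (r n + u) - F (r n) :=
        (hF.comp (measurable_const_add _)).sub_const _
      exact this.abs
    · intro k k' hk u hu
      refine ⟨hu.1, ?_⟩
      have h2 := hu.2
      simp only [Set.mem_iInter, Set.mem_ofPred_eq] at h2 ⊢
      intro n hn
      exact (h2 n (hk.trans hn)).trans (mul_le_mul_of_nonneg_right (hc hk) (hγ _))
    · ext u
      simp only [Set.mem_iUnion, Set.mem_inter_iff, Set.mem_iInter, Set.mem_ofPred_eq]
      constructor
      · rintro ⟨k, h, -⟩; exact h
      · intro hu
        obtain ⟨K, hK⟩ := H u hu.1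
        refine ⟨K, hu, fun n hn => hK _ (le_trans (by exact_mod_cast hn) (hr n))⟩
    · intro k u hu
      have h2 := hu.2
      simp only [Set.mem_iInter, Set.mem_ofPred_eq] at h2
      exact h2 k le_rfl
  obtain ⟨A, hAm, hAmono, hAU, hA⟩ := key t ht
  obtain ⟨B, hBm, hBmono, hBU, hB⟩ := key (fun n => t n + s n)
    (fun n => by have := ht n; have := (hs n).1; linarith)
  have big : ∀ A : ℕ → Set ℝ, Monotone A → (⋃ k, A k) = Set.Icc (0:ℝ) 2 →
      ∀ᶠ k in atTop, ENNReal.ofReal (3/2) < volume (A k) := by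
    intro A hm hU
    have h1 := tendsto_measure_iUnion_atTop (μ := (volume : Measure ℝ)) hm
    rw [hU, Real.volume_Icc] at h1
    refine h1.eventually (lt_mem_nhds ?_)
    rw [ENNReal.ofReal_lt_ofReal_iff] <;> norm_num
  obtain ⟨k, hk1, hk2⟩ := ((big A hAmono hAU).and (big B hBmono hBU)).exists
  have hAs : A k ⊆ Set.Icc 0 2 := hAU ▸ Set.subset_iUnion A k
  have hBs : B k ⊆ Set.Icc 0 2 := hBU ▸ Set.subset_iUnion B k
  set B' : Set ℝ := (fun u => u + (- s k)) ⁻¹' B k with hB'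
  have hvB' : volume B' = volume (B k) := measure_preimage_add_right _ _ _
  have hne : (A k ∩ B').Nonempty := by
    by_contra hemp
    rw [Set.not_nonempty_iff_eq_empty, ← Set.disjoint_iff_inter_eq_empty] at hemp
    have hB'm : MeasurableSet B' := (measurable_add_const _) (hBm k)
    have h1 := measure_union (μ := (volume : Measure ℝ)) hemp hB'm
    have h2 : A k ∪ B' ⊆ Set.Icc 0 3 := by
      rintro u (hu | hu)
      · have := hAs hu; exact ⟨this.1, by linarith [this.2]⟩
      · have h3 := hBs hu
        have h4 := hs k
        simp only [Set.mem_Icc] at h3 h4 ⊢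
        constructor <;> linarith [h3.1, h3.2, h4.1, h4.2]
    have h3 := measure_mono (μ := (volume : Measure ℝ)) h2
    rw [h1, hvB', Real.volume_Icc] at h3
    have h4 := ENNReal.add_lt_add hk1 hk2
    rw [← ENNReal.ofReal_add (by norm_num) (by norm_num)] at h4
    norm_num at h3 h4
    exact absurd h3 (not_le.mpr h4)
  obtain ⟨u, hu1, hu2⟩ := hne
  have e1 := hA k u hu1
  have e2 := hB k _ hu2
  have e3 := hlt k
  have : t k + s k + (u + -s k) = t k + u := by ring
  simp only [this] at e2
  rw [abs_le] at e1 e2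
  have : |F (t k + s k) - F (t k)| ≤ c k * (γ (t k) + γ (t k + s k)) := by
    rw [abs_le]; constructor <;> linarith [e1.1, e1.2, e2.1, e2.2]
  linarith

lemma aux_chain1 (F : ℝ → ℝ) (T ε : ℝ) (hε : 0 ≤ ε)
    (H : ∀ t : ℝ, T ≤ t → ∀ s ∈ Set.Icc (0:ℝ) 1, |F (t + s) - F t| ≤ ε) :
    ∀ a b : ℝ, T ≤ a → T ≤ b → |F a - F b| ≤ ε * (|a - b| + 1) := by
  have h1 : ∀ n : ℕ, ∀ t, T ≤ t → ∀ s ∈ Set.Icc (0:ℝ) n, |F (t + s) - F t| ≤ ε * n := by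
    intro n
    induction n with
    | zero =>
      intro t ht s hs
      have : s = 0 := le_antisymm (by simpa using hs.2) hs.1
      simp [this]
    | succ n ih =>
      intro t ht s hs
      push_cast at hs ⊢
      rcases le_total s n with h | h
      · have := ih t ht s ⟨hs.1, h⟩
        linarith
      · have e1 := ih t ht n ⟨by positivity, le_rfl⟩
        have hn : (0:ℝ) ≤ n := by positivity
        have e2 := H (t + n) (by linarith) (s - n) ⟨by linarith, by linarith [hs.2]⟩
        have : t + n + (s - n) = t + s := by ring
        rw [this] at e2
        rw [abs_le] at e1 e2 ⊢
        constructor <;> linarith [e1.1, e1.2, e2.1, e2.2]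
  have h2 : ∀ a b, T ≤ a → a ≤ b → |F a - F b| ≤ ε * (|a - b| + 1) := by
    intro a b ha hab
    have hb0 : 0 ≤ b - a := by linarith
    have e := h1 ⌈b - a⌉₊ a ha (b - a) ⟨hb0, Nat.le_ceil _⟩
    rw [add_sub_cancel, abs_sub_comm] at e
    rw [abs_sub_comm a b, abs_of_nonneg hb0]
    exact e.trans (mul_le_mul_of_nonneg_left (Nat.ceil_lt_add_one hb0).le hε)
  intro a b ha hb
  rcases le_total a b with h | h
  · exact h2 a b ha h
  · rw [abs_sub_comm, abs_sub_comm a b]; exact h2 b a hb h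

lemma aux_chain2 (F γ : ℝ → ℝ) (T ε C : ℝ) (hε : 0 < ε) (hε1 : ε ≤ 1) (hC : 0 ≤ C)
    (hγ : ∀ t, 0 ≤ γ t)
    (Hγ : ∀ a b : ℝ, T ≤ a → T ≤ b → γ a ≤ Real.exp (ε * (|a - b| + 1)) * γ b)
    (H : ∀ t : ℝ, T ≤ t → ∀ s ∈ Set.Icc (0:ℝ) 1, |F (t + s) - F t| ≤ C * γ t) :
    ∃ C' : ℝ, 0 ≤ C' ∧ ∀ a b : ℝ, T ≤ a → T ≤ b →
      |F a - F b| ≤ C' * Real.exp (3 * ε * |a - b|) * γ b := by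
  have h1 : ∀ n : ℕ, ∀ t, T ≤ t → ∀ s ∈ Set.Icc (0:ℝ) n,
      |F (t + s) - F t| ≤ n * (C * Real.exp (ε * (n + 1)) * γ t) := by
    intro n
    induction n with
    | zero =>
      intro t ht s hs
      have : s = 0 := le_antisymm (by simpa using hs.2) hs.1
      simp [this]
    | succ n ih =>
      intro t ht s hs
      have hn : (0:ℝ) ≤ n := by positivity
      push_cast at hs ⊢
      have mono : C * Real.exp (ε * (n + 1)) * γ t ≤ C * Real.exp (ε * (n + 1 + 1)) * γ t := by
        have := hγ t
        gcongr
        linarith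
      have nn : 0 ≤ C * Real.exp (ε * (n + 1 + 1)) * γ t := by
        have := hγ t
        positivity
      have mono2 := mul_le_mul_of_nonneg_left mono hn
      rcases le_total s n with h | h
      · have := ih t ht s ⟨hs.1, h⟩
        linarith
      · have e1 := ih t ht n ⟨by positivity, le_rfl⟩
        have e2 := H (t + n) (by linarith) (s - n) ⟨by linarith, by linarith [hs.2]⟩
        have : t + n + (s - n) = t + s := by ring
        rw [this] at e2
        have e3 := Hγ (t + n) t (by linarith) ht
        rw [add_sub_cancel_left, abs_of_nonneg hn] at e3
        have e4 := mul_le_mul_of_nonneg_left e3 hC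
        rw [abs_le] at e1 e2 ⊢
        constructor <;> linarith [e1.1, e1.2, e2.1, e2.2]
  have h2 : ∀ a b, T ≤ a → a ≤ b →
      |F a - F b| ≤ C / ε * Real.exp (2 * ε) * Real.exp (2 * ε * |a - b|) * γ a := by
    intro a b ha hab
    have hb0 : 0 ≤ b - a := by linarith
    have e := h1 ⌈b - a⌉₊ a ha (b - a) ⟨hb0, Nat.le_ceil _⟩
    rw [add_sub_cancel, abs_sub_comm] at e
    rw [abs_sub_comm a b, abs_of_nonneg hb0]
    refine e.trans ?_
    set s := b - a
    have hc : (⌈s⌉₊ : ℝ) ≤ s + 1 := (Nat.ceil_lt_add_one hb0).le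
    have g1 : (⌈s⌉₊ : ℝ) ≤ Real.exp (ε * s) / ε := by
      rw [le_div_iff₀ hε]
      have := Real.add_one_le_exp (ε * s)
      nlinarith
    have hga := hγ a
    calc (⌈s⌉₊:ℝ) * (C * Real.exp (ε * (⌈s⌉₊ + 1)) * γ a)
        ≤ (Real.exp (ε * s) / ε) * (C * Real.exp (ε * ((s + 1) + 1)) * γ a) := by gcongr
      _ = C / ε * (Real.exp (ε * s) * Real.exp (ε * ((s + 1) + 1))) * γ a := by ring
      _ = C / ε * (Real.exp (2 * ε) * Real.exp (2 * ε * s)) * γ a := by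
          rw [← Real.exp_add, ← Real.exp_add]; congr 3; ring
      _ = _ := by ring
  refine ⟨C / ε * Real.exp (3 * ε), by positivity, ?_⟩
  intro a b ha hb
  have hgb := hγ b
  rcases le_total a b with h | h
  · refine (h2 a b ha h).trans ?_
    calc C / ε * Real.exp (2 * ε) * Real.exp (2 * ε * |a - b|) * γ a
        ≤ C / ε * Real.exp (2 * ε) * Real.exp (2 * ε * |a - b|) *
          (Real.exp (ε * (|a - b| + 1)) * γ b) := by
          gcongr; exact Hγ a b ha hb
      _ = C / ε * (Real.exp (2 * ε) * Real.exp (2 * ε * |a - b|) *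
          Real.exp (ε * (|a - b| + 1))) * γ b := by ring
      _ = C / ε * (Real.exp (3 * ε) * Real.exp (3 * ε * |a - b|)) * γ b := by
          rw [← Real.exp_add, ← Real.exp_add, ← Real.exp_add]; congr 3; ring
      _ = _ := by ring
  · have := h2 b a hb h
    rw [abs_sub_comm, abs_sub_comm a b]
    refine this.trans ?_
    gcongr <;> linarith

/-- change of variables -/
lemma aux_cov (φ : ℝ → ℝ) (x : ℝ) (hx : 0 < x)
    (hφ : IntegrableOn (fun u => φ u / u) (Set.Ioi 0)) :
    IntegrableOn (fun t => φ (x / t) / t) (Set.Ioi 0) ∧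
    ∫ t in Set.Ioi (0:ℝ), φ (x / t) / t = ∫ u in Set.Ioi (0:ℝ), φ u / u := by
  have h1 : IntegrableOn (fun u => φ (x * u) / (x * u)) (Set.Ioi 0) := by
    have := (integrableOn_Ioi_comp_mul_left_iff (fun u => φ u / u) 0 hx).2 (by simpa using hφ)
    exact this
  have h1' := integral_comp_mul_left_Ioi (fun u => φ u / u) 0 hx
  have e : ∀ t ∈ Set.Ioi (0:ℝ), (|(-1:ℝ)| * t ^ ((-1:ℝ) - 1)) •
      (x * (φ (x * t ^ (-1:ℝ)) / (x * t ^ (-1:ℝ)))) = φ (x / t) / t := by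
    intro t ht
    have ht : 0 < t := ht
    have : t ^ ((-1:ℝ) - 1) = (t ^ 2)⁻¹ := by
      rw [show ((-1:ℝ) - 1) = -((2:ℕ):ℝ) by norm_num, Real.rpow_neg ht.le, Real.rpow_natCast]
    rw [this, Real.rpow_neg_one, smul_eq_mul, ← div_eq_mul_inv]
    simp only [abs_neg, abs_one]
    field_simp
  constructor
  · have h2 := (integrableOn_Ioi_comp_rpow_iff (fun u => x * (φ (x * u) / (x * u)))
      (p := -1) (by norm_num)).2 (h1.const_mul x)
    exact h2.congr_fun e measurableSet_Ioi
  · have h2 := integral_comp_rpow_Ioi (fun u => x * (φ (x * u) / (x * u)))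
      (p := -1) (by norm_num)
    rw [setIntegral_congr_fun measurableSet_Ioi e, integral_const_mul] at h2
    rw [h2, h1']
    simp
    field_simp

lemma aux_nat (P : ℝ → Prop) (h : ∀ᶠ t in atTop, P t) : ∃ K : ℕ, ∀ t : ℝ, (K:ℝ) ≤ t → P t := by
  obtain ⟨T, hT⟩ := eventually_atTop.1 h
  exact ⟨⌈T⌉₊, fun t ht => hT t ((Nat.le_ceil T).trans ht)⟩

set_option maxHeartbeats 1000000 in
lemma aux_key (l g : ℝ → ℝ) (hl_meas : Measurable l) (hl_nonneg : ∀ x, 0 ≤ l x)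
    (hg_meas : Measurable g) (hg_nonneg : ∀ x, 0 ≤ g x)
    (hg_slow : ∀ lam : ℝ, 0 < lam → Tendsto (fun x => g (lam * x) / g x) atTop (nhds 1))
    (hg_zero : Tendsto g atTop (nhds 0))
    (hl_rem : ∀ lam : ℝ, 1 < lam → (fun x => l (lam * x) / l x - 1) =O[atTop] g)
    (δ : ℝ) (hδ : 0 < δ) :
    ∃ X C : ℝ, 1 ≤ X ∧ 0 ≤ C ∧ ∀ x, X ≤ x → 0 < l x ∧ 0 < g x ∧
      x ^ (-δ) ≤ C * l x ∧ x ^ (-δ) ≤ C * g x ∧ ∀ y, X ≤ y →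
        |l y - l x| ≤ C * Real.exp (δ * |Real.log x - Real.log y|) * (g x * l x) ∧
        l y ≤ C * Real.exp (δ * |Real.log x - Real.log y|) * l x := by
  have hgpos : ∀ᶠ x in atTop, 0 < g x := by
    filter_upwards [(hg_slow 1 one_pos).eventually (lt_mem_nhds (zero_lt_one))] with x hx
    refine lt_of_le_of_ne (hg_nonneg x) fun h => ?_
    simp [← h] at hx
  have hlim : ∀ lam : ℝ, 1 < lam → Tendsto (fun x => l (lam * x) / l x - 1) atTop (nhds 0) :=
    fun lam h => (hl_rem lam h).trans_tendsto hg_zero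
  have hlpos : ∀ᶠ x in atTop, 0 < l x := by
    filter_upwards [(hlim 2 one_lt_two).eventually (lt_mem_nhds (show (-1:ℝ) < 0 by norm_num))]
      with x hx
    refine lt_of_le_of_ne (hl_nonneg x) fun h => ?_
    simp [← h] at hx
  have hexp := Real.tendsto_exp_atTop
  set G : ℝ → ℝ := fun t => Real.log (g (Real.exp t)) with hG
  set F : ℝ → ℝ := fun t => Real.log (l (Real.exp t)) with hF
  set γ : ℝ → ℝ := fun t => g (Real.exp t) with hγd
  have hGm : Measurable G := (hg_meas.comp Real.measurable_exp).log
  have hFm : Measurable F := (hl_meas.comp Real.measurable_exp).log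
  have hγ0 : ∀ t, 0 ≤ γ t := fun t => hg_nonneg _
  have hγz : Tendsto γ atTop (nhds 0) := hg_zero.comp hexp
  have hγp : ∀ᶠ t in atTop, 0 < γ t := hexp.eventually hgpos
  have hFp : ∀ᶠ t in atTop, 0 < l (Real.exp t) := hexp.eventually hlpos
  have shift : ∀ (P : ℝ → Prop) (s : ℝ), (∀ᶠ t in atTop, P t) → ∀ᶠ t in atTop, P (t + s) :=
    fun P s h => (tendsto_atTop_add_const_right atTop s tendsto_id).eventually h
  -- Potter for G
  have HG : ∀ ε : ℝ, 0 < ε → ∃ T : ℝ, ∀ a b : ℝ, T ≤ a → T ≤ b →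
      |G a - G b| ≤ ε * (|a - b| + 1) := by
    intro ε hε
    obtain ⟨k, hk⟩ := aux_uct G (fun _ => 1) hGm (fun _ => ε / 2) monotone_const
      (fun _ => zero_le_one) (by
        intro s hs
        apply aux_nat
        have h1 := ((hg_slow (Real.exp s) (Real.exp_pos s)).comp hexp).log one_ne_zero
        rw [Real.log_one] at h1
        have h2 := h1.abs
        rw [abs_zero] at h2
        filter_upwards [h2.eventually (ge_mem_nhds (show (0:ℝ) < ε / 2 by linarith)), hγp,
          shift _ s hγp] with t h3 h4 h5
        simp only [Function.comp, ← Real.exp_add] at h3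
        rw [add_comm s t, Real.log_div h5.ne' h4.ne'] at h3
        simpa using h3)
    refine ⟨k, aux_chain1 G k ε hε.le fun t ht s hs => (hk t ht s hs).trans (le_of_eq (by ring))⟩
  -- O-bound for F
  obtain ⟨T1, hT1⟩ := HG (1/4) (by norm_num)
  have loglem : ∀ z : ℝ, |z| ≤ 1/2 → |Real.log (1 + z)| ≤ 2 * |z| := by
    intro z hz
    have hz' := abs_le.1 hz
    have hp : 0 < 1 + z := by linarith
    have u := Real.log_le_sub_one_of_pos hp
    have v := Real.one_sub_inv_le_log_of_pos hp
    have w : -(2 * |z|) ≤ 1 - (1 + z)⁻¹ := by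
      have : 1 - (1 + z)⁻¹ = z / (1 + z) := by field_simp; ring
      rw [this, le_div_iff₀ hp]
      rcases abs_cases z with ⟨h, _⟩ | ⟨h, _⟩ <;> rw [h] <;> nlinarith
    have := le_abs_self z
    have := abs_nonneg z
    rw [abs_le]; constructor <;> linarith
  obtain ⟨k, hk⟩ := aux_uct F γ hFm (fun n => (n:ℝ)) Nat.mono_cast hγ0 (by
    intro s hs
    rcases hs.eq_or_lt with h0 | hs0
    · subst h0
      exact ⟨0, fun t _ => by simp⟩
    obtain ⟨c, hc⟩ := (hl_rem (Real.exp s) (by simpa using hs0)).bound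
    have h1 := (hlim (Real.exp s) (by simpa using hs0)).abs
    rw [abs_zero] at h1
    have h2 : ∀ᶠ t in atTop, |F (t + s) - F t| ≤ 2 * c * γ t := by
      filter_upwards [hexp.eventually (h1.eventually (ge_mem_nhds (show (0:ℝ) < 1/2 by norm_num))),
        hexp.eventually hc, hFp, shift _ s hFp] with t e1 e2 e3 e4
      have e5 := loglem _ e1
      rw [← Real.exp_add, add_comm s t, add_sub_cancel, Real.log_div e4.ne' e3.ne'] at e5
      rw [Real.norm_eq_abs, Real.norm_eq_abs, abs_of_nonneg (hg_nonneg _), ← Real.exp_add,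
        add_comm s t] at e2
      simp only [hF, hγd]
      linarith
    obtain ⟨K, hK⟩ := aux_nat _ h2
    refine ⟨max K ⌈2 * c⌉₊, fun t ht => (hK t (le_trans (by simp) ht)).trans ?_⟩
    refine mul_le_mul_of_nonneg_right ((Nat.le_ceil _).trans ?_) (hγ0 t)
    simp)
  obtain ⟨T2, hT2⟩ := eventually_atTop.1 hγp
  have expG : ∀ a b : ℝ, T2 ≤ a → T2 ≤ b → ∀ r : ℝ, |G a - G b| ≤ r → γ a ≤ Real.exp r * γ b := by
    intro a b ha hb r hr
    have h1 : γ a = Real.exp (G a - G b) * γ b := by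
      have e1 : Real.exp (G a) = γ a := Real.exp_log (hT2 a ha)
      have e2 : Real.exp (G b) = γ b := Real.exp_log (hT2 b hb)
      rw [Real.exp_sub, e1, e2]
      have := (hT2 b hb).ne'
      field_simp
    rw [h1]
    exact mul_le_mul_of_nonneg_right (Real.exp_le_exp.2 ((le_abs_self _).trans hr)) (hγ0 b)
  set Cb : ℝ := k * (1 + Real.exp 1) with hCb
  have hCb0 : 0 ≤ Cb := by positivity
  set T3 := max (k:ℝ) (max T1 T2) with hT3
  have hFO : ∀ t : ℝ, T3 ≤ t → ∀ s ∈ Set.Icc (0:ℝ) 1, |F (t + s) - F t| ≤ Cb * γ t := by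
    intro t ht s hs
    simp only [hT3, max_le_iff] at ht
    refine (hk t ht.1 s hs).trans ?_
    have e := hT1 (t + s) t (by linarith [hs.1]) (by linarith)
    rw [add_sub_cancel_left, abs_of_nonneg hs.1] at e
    have e2 := expG (t + s) t (by linarith [hs.1]) (by linarith) 1 (by linarith [hs.2])
    rw [hCb, mul_assoc]
    refine mul_le_mul_of_nonneg_left ?_ (by positivity)
    linarith
  -- choose ε
  set ε := min (δ / 4) 1 with hεd
  have hε : 0 < ε := by positivity
  have hε1 : ε ≤ 1 := min_le_right _ _
  have hε4 : 4 * ε ≤ δ := by have := min_le_left (δ / 4) 1; linarith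
  obtain ⟨T4, hT4⟩ := HG ε hε
  have hsm : ∀ᶠ t in atTop, Cb * γ t ≤ ε := by
    have : Tendsto (fun t => Cb * γ t) atTop (nhds 0) := by simpa using hγz.const_mul Cb
    exact this.eventually (ge_mem_nhds hε)
  obtain ⟨T5, hT5⟩ := eventually_atTop.1 hsm
  obtain ⟨T6, hT6⟩ := eventually_atTop.1 hFp
  set T := max T3 (max T4 (max T5 (max T6 0))) with hTd
  have hTT : ∀ t, T ≤ t → T3 ≤ t ∧ T2 ≤ t ∧ T4 ≤ t ∧ T5 ≤ t ∧ T6 ≤ t := by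
    intro t ht
    simp only [hTd, hT3, max_le_iff] at ht ⊢
    tauto
  have hT0 : 0 ≤ T := by simp [hTd]
  have PF := aux_chain1 F T ε hε.le (fun t ht s hs =>
    (hFO t (hTT t ht).1 s hs).trans (hT5 t (hTT t ht).2.2.2.1))
  have PG : ∀ a b : ℝ, T ≤ a → T ≤ b → |G a - G b| ≤ ε * (|a - b| + 1) :=
    fun a b ha hb => hT4 a b (hTT a ha).2.2.1 (hTT b hb).2.2.1
  obtain ⟨D, hD0, hD⟩ := aux_chain2 F γ T ε Cb hε hε1 hCb0 hγ0
    (fun a b ha hb => expG a b (hTT a ha).2.1 (hTT b hb).2.1 _ (PG a b ha hb))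
    (fun t ht => hFO t (hTT t ht).1)
  have expF : ∀ a, T ≤ a → Real.exp (F a) = l (Real.exp a) :=
    fun a ha => Real.exp_log (hT6 a (hTT a ha).2.2.2.2)
  have expG' : ∀ a, T ≤ a → Real.exp (G a) = g (Real.exp a) :=
    fun a ha => Real.exp_log (hT2 a (hTT a ha).2.1)
  set C1 := Real.exp (1 + |F T|) with hC1
  set C2 := Real.exp (1 + |G T|) with hC2
  set C3 := D * Real.exp 1 with hC3
  have hC3' : 0 ≤ C3 := by positivity
  have hC1' : 0 < C1 := Real.exp_pos _
  have hC2' : 0 < C2 := Real.exp_pos _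
  have hC4' : 0 < Real.exp 1 := Real.exp_pos _
  refine ⟨Real.exp T, C1 + C2 + C3 + Real.exp 1, Real.one_le_exp hT0, by positivity, ?_⟩
  intro x hx
  have hx0 : 0 < x := (Real.exp_pos T).trans_le hx
  obtain ⟨a, rfl⟩ : ∃ a, x = Real.exp a := ⟨Real.log x, (Real.exp_log hx0).symm⟩
  have ha : T ≤ a := Real.exp_le_exp.1 hx
  have hla := hT6 a (hTT a ha).2.2.2.2
  have hga : 0 < g (Real.exp a) := hT2 a (hTT a ha).2.1
  have low : ∀ (E : ℝ → ℝ), |E a - E T| ≤ ε * (|a - T| + 1) →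
      (Real.exp a) ^ (-δ) ≤ Real.exp (1 + |E T|) * Real.exp (E a) := by
    intro E hE
    rw [← Real.exp_mul, ← Real.exp_add]
    apply Real.exp_le_exp.2
    rw [abs_of_nonneg (show 0 ≤ a - T by linarith), abs_le] at hE
    have := neg_abs_le (E T)
    nlinarith [hE.1]
  refine ⟨hla, hga, ?_, ?_, ?_⟩
  · refine (low F (PF a T ha le_rfl)).trans ?_
    rw [expF a ha]
    refine mul_le_mul_of_nonneg_right ?_ hla.le
    linarith
  · refine (low G (PG a T ha le_rfl)).trans ?_
    rw [expG' a ha]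
    refine mul_le_mul_of_nonneg_right ?_ hga.le
    linarith
  intro y hy
  have hy0 : 0 < y := (Real.exp_pos T).trans_le hy
  obtain ⟨b, rfl⟩ : ∃ b, y = Real.exp b := ⟨Real.log y, (Real.exp_log hy0).symm⟩
  have hb : T ≤ b := Real.exp_le_exp.1 hy
  rw [Real.log_exp, Real.log_exp]
  have e1 := PF b a hb ha
  have e2 := hD b a hb ha
  rw [abs_sub_comm b a] at e1 e2
  set d := |a - b| with hd
  have hd0 : 0 ≤ d := abs_nonneg _
  set Δ := F b - F a with hΔ
  have hlb : l (Real.exp b) = Real.exp Δ * l (Real.exp a) := by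
    rw [← expF a ha, ← expF b hb, ← Real.exp_add]; congr 1; ring
  have eΔ : Real.exp |Δ| ≤ Real.exp 1 * Real.exp (ε * d) := by
    rw [← Real.exp_add]; apply Real.exp_le_exp.2; nlinarith
  constructor
  · have hm : |Real.exp Δ - 1| ≤ |Δ| * Real.exp |Δ| := by
      rw [abs_le]
      have i1 := Real.add_one_le_exp Δ
      have i2 : Real.exp Δ * (1 - Δ) ≤ 1 := by
        have := Real.add_one_le_exp (-Δ)
        calc Real.exp Δ * (1 - Δ) ≤ Real.exp Δ * Real.exp (-Δ) := by gcongr; linarith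
          _ = 1 := by rw [← Real.exp_add]; simp
      have i3 : Real.exp Δ ≤ Real.exp |Δ| := Real.exp_le_exp.2 (le_abs_self _)
      have i4 : 1 ≤ Real.exp |Δ| := Real.one_le_exp (abs_nonneg _)
      have i5 := le_abs_self Δ
      have i6 := neg_abs_le Δ
      have i7 := abs_nonneg Δ
      have i8 := Real.exp_pos Δ
      constructor
      · nlinarith
      · nlinarith
    have : l (Real.exp b) - l (Real.exp a) = (Real.exp Δ - 1) * l (Real.exp a) := by
      rw [hlb]; ring
    rw [this, abs_mul, abs_of_pos hla, ← mul_assoc]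
    refine mul_le_mul_of_nonneg_right (hm.trans ?_) hla.le
    calc |Δ| * Real.exp |Δ|
        ≤ (D * Real.exp (3 * ε * d) * γ a) * (Real.exp 1 * Real.exp (ε * d)) := by
          gcongr
      _ = C3 * (Real.exp (3 * ε * d) * Real.exp (ε * d)) * γ a := by ring
      _ = C3 * Real.exp (4 * ε * d) * γ a := by rw [← Real.exp_add]; congr 3; ring
      _ ≤ (C1 + C2 + C3 + Real.exp 1) * Real.exp (δ * d) * γ a := by
          have := hγ0 a
          gcongr
          linarith
  · rw [hlb]
    refine mul_le_mul_of_nonneg_right ?_ hla.le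
    calc Real.exp Δ ≤ Real.exp |Δ| := Real.exp_le_exp.2 (le_abs_self _)
      _ ≤ Real.exp 1 * Real.exp (ε * d) := eΔ
      _ ≤ (C1 + C2 + C3 + Real.exp 1) * Real.exp (δ * d) := by
          have h1 : Real.exp 1 ≤ C1 + C2 + C3 + Real.exp 1 := by linarith
          have h2 : Real.exp (ε * d) ≤ Real.exp (δ * d) :=
            Real.exp_le_exp.2 (mul_le_mul_of_nonneg_right (by linarith) hd0)
          exact mul_le_mul h1 h2 (Real.exp_pos _).le (by linarith)

set_option maxHeartbeats 1000000 in
/-- generalization of Arandelović's theorem with an error estimate,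
behavior at infinity.  If the Mellin transform of a nonnegative measurable `U`
converges absolutely in the strip `σ ≤ Re z ≤ τ`, `f(x) = x^ρ l(x)(1 + O(h(x)))` as
`x → ∞` with `ρ ∈ (σ,τ)`, `l` slowly varying with remainder `g`, `g` slowly varying,
`h` in the Zygmund class, `g, h → 0`, `g`, `1/l`, `1/g` locally bounded on `(x₀,∞)`,
and `x ↦ x^{−σ} f(x)` bounded on every `(0,a]`, then
`U ⋆_M f(x) = MU(ρ) x^ρ l(x) (1 + O(g(x)) + O(h(x)))` as `x → ∞`. -/
theorem mellin_convolution_asymptotics_at_infinity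
    (U f l g h : ℝ → ℝ) (σ τ ρ x₀ : ℝ)
    (hστ : σ < τ) (hρ : ρ ∈ Set.Ioo σ τ) (hx₀ : 0 < x₀)
    (hU_meas : Measurable U) (hU_nonneg : ∀ x, 0 ≤ U x)
    (hf_meas : Measurable f)
    (hl_meas : Measurable l) (hl_nonneg : ∀ x, 0 ≤ l x)
    (hg_meas : Measurable g) (hg_nonneg : ∀ x, 0 ≤ g x)
    (hh_meas : Measurable h) (hh_nonneg : ∀ x, 0 ≤ h x)
    -- absolute convergence of the Mellin transform of `U` in the strip `σ ≤ Re z ≤ τ`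
    (hMellin : ∀ s ∈ Set.Icc σ τ,
      MeasureTheory.IntegrableOn (fun t => t ^ (-s) * U t / t) (Set.Ioi 0))
    -- `g` is slowly varying and `g(x) → 0`
    (hg_slow : ∀ lam : ℝ, 0 < lam →
      Tendsto (fun x => g (lam * x) / g x) atTop (nhds 1))
    (hg_zero : Tendsto g atTop (nhds 0))
    -- `l` is slowly varying with remainder `g`
    (hl_rem : ∀ lam : ℝ, 1 < lam →
      (fun x => l (lam * x) / l x - 1) =O[atTop] g)
    -- `h` belongs to the Zygmund class and `h(x) → 0`
    (hh_zyg : ∀ α : ℝ, 0 < α →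
      (∃ x₁ : ℝ, 0 < x₁ ∧ MonotoneOn (fun x => x ^ α * h x) (Set.Ici x₁)) ∧
      (∃ x₁ : ℝ, 0 < x₁ ∧ AntitoneOn (fun x => x ^ (-α) * h x) (Set.Ici x₁)))
    (hh_zero : Tendsto h atTop (nhds 0))
    -- condition (1): `f(x) = x^ρ l(x)(1 + O(h(x)))` as `x → ∞`
    (hf_asymp : (fun x => f x - x ^ ρ * l x) =O[atTop] (fun x => x ^ ρ * l x * h x))
    -- condition (2): `g`, `1/l`, `1/g` are locally bounded on `(x₀,∞)`
    (hloc : ∀ K : Set ℝ, IsCompact K → K ⊆ Set.Ioi x₀ →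
      ∃ M : ℝ, ∀ x ∈ K, g x ≤ M ∧ (l x)⁻¹ ≤ M ∧ (g x)⁻¹ ≤ M)
    -- condition (3): `x ↦ x^{−σ} f(x)` is bounded on every `(0,a]`
    (hf_bdd : ∀ a : ℝ, 0 < a → ∃ M : ℝ, ∀ x ∈ Set.Ioc (0:ℝ) a, |x ^ (-σ) * f x| ≤ M) :
    (fun x => mellinConv U f x - mellinT U ρ * (x ^ ρ * l x)) =O[atTop]
      (fun x => x ^ ρ * l x * (g x + h x)) := by
  obtain ⟨hρ1, hρ2⟩ := hρ
  set δ := min (ρ - σ) (τ - ρ) / 2 with hδd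
  have hδ : 0 < δ := by
    have : 0 < min (ρ - σ) (τ - ρ) := lt_min (by linarith) (by linarith)
    linarith
  have hδσ : 2 * δ ≤ ρ - σ := by have := min_le_left (ρ - σ) (τ - ρ); linarith
  have hδτ : 2 * δ ≤ τ - ρ := by have := min_le_right (ρ - σ) (τ - ρ); linarith
  obtain ⟨X0, C, hX0, hC, key⟩ := aux_key l g hl_meas hl_nonneg hg_meas hg_nonneg hg_slow hg_zero
    hl_rem δ hδ
  obtain ⟨⟨x1, hx1, hmono⟩, ⟨x2, hx2, hanti⟩⟩ := hh_zyg δ hδ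
  obtain ⟨Cf, hCf, hf1⟩ := hf_asymp.exists_nonneg
  obtain ⟨x3, hx3⟩ := eventually_atTop.1 hf1.bound
  set X := max X0 (max x1 (max x2 x3)) with hX
  have hXX : ∀ x, X ≤ x → X0 ≤ x ∧ x1 ≤ x ∧ x2 ≤ x ∧ x3 ≤ x := by
    intro x hx
    simp only [hX, max_le_iff] at hx
    tauto
  have hX1 : 1 ≤ X := hX0.trans (hXX X le_rfl).1
  have hXp : 0 < X := by linarith
  obtain ⟨M, hM⟩ := hf_bdd X hXp
  have hM0 : 0 ≤ M := (abs_nonneg _).trans (hM X ⟨hXp, le_rfl⟩)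
  set A := C + Cf * C + M * C ^ 2 + X ^ (ρ - σ) * C with hA
  have hXr : 0 ≤ X ^ (ρ - σ) := by positivity
  have hA0 : 0 ≤ A := by positivity
  set B : ℝ → ℝ := fun x => x ^ ρ * l x * (g x + h x) with hB
  have hB0 : ∀ x, 0 < x → 0 ≤ B x := fun x hx =>
    mul_nonneg (mul_nonneg (by positivity) (hl_nonneg x)) (add_nonneg (hg_nonneg x) (hh_nonneg x))
  -- Zygmund comparison
  have hhcmp : ∀ x t, X ≤ x → X ≤ t →
      h t ≤ Real.exp (δ * |Real.log x - Real.log t|) * h x := by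
    intro x t hx ht
    have hx0 : 0 < x := by linarith
    have ht0 : 0 < t := by linarith
    rcases le_total t x with htx | hxt
    · have e := hmono (hXX t ht).2.1 (hXX x hx).2.1 htx
      simp only at e
      rw [abs_of_nonneg (sub_nonneg.2 (Real.log_le_log ht0 htx))]
      have e2 : Real.exp (δ * (Real.log x - Real.log t)) = x ^ δ / t ^ δ := by
        rw [Real.rpow_def_of_pos hx0, Real.rpow_def_of_pos ht0, ← Real.exp_sub]; congr 1; ring
      have htd : 0 < t ^ δ := by positivity
      rw [e2, div_mul_eq_mul_div, le_div_iff₀ htd]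
      linarith
    · have e := hanti (hXX x hx).2.2.1 (hXX t ht).2.2.1 hxt
      simp only at e
      rw [abs_sub_comm, abs_of_nonneg (sub_nonneg.2 (Real.log_le_log hx0 hxt))]
      have e2 : Real.exp (δ * (Real.log t - Real.log x)) = x ^ (-δ) / t ^ (-δ) := by
        rw [Real.rpow_def_of_pos hx0, Real.rpow_def_of_pos ht0, ← Real.exp_sub]; congr 1; ring
      have htd : 0 < t ^ (-δ) := by positivity
      rw [e2, div_mul_eq_mul_div, le_div_iff₀ htd]
      linarith
  have hpw : ∀ x t, X ≤ x → 0 < t →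
      |f t - t ^ ρ * l x| ≤ A * B x * ((t / x) ^ σ + (t / x) ^ τ) := by
    intro x t hx ht0
    have hx0 : 0 < x := by linarith
    obtain ⟨klx, kgx, kl, kg, kk⟩ := key x (hXX x hx).1
    have hq : 0 < t / x := by positivity
    have hgh : 0 ≤ g x + h x := add_nonneg (hg_nonneg x) (hh_nonneg x)
    have hhx := hh_nonneg x
    rcases le_total X t with ht | ht
    · obtain ⟨k1, k2⟩ := kk t (hXX t ht).1
      have k3 := hhcmp x t hx ht
      have k4 := hx3 t (hXX t ht).2.2.2
      have hlt := hl_nonneg t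
      have hht := hh_nonneg t
      have htr : 0 < t ^ ρ := by positivity
      rw [Real.norm_eq_abs, Real.norm_eq_abs, abs_of_nonneg (show 0 ≤ t ^ ρ * l t * h t by positivity)] at k4
      set d := |Real.log x - Real.log t| with hd
      have hd0 : 0 ≤ d := abs_nonneg _
      set E := Real.exp (δ * d) with hE
      have hE1 : 1 ≤ E := Real.one_le_exp (by positivity)
      have s1 : |f t - t ^ ρ * l x| ≤ |f t - t ^ ρ * l t| + t ^ ρ * |l t - l x| := by
        have : f t - t ^ ρ * l x = (f t - t ^ ρ * l t) + t ^ ρ * (l t - l x) := by ring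
        rw [this]
        refine (abs_add_le _ _).trans ?_
        rw [abs_mul, abs_of_pos htr]
      have s2 : l t * h t ≤ (C * E * l x) * (E * h x) := mul_le_mul k2 k3 hht (by positivity)
      have s3 : |f t - t ^ ρ * l x| ≤ t ^ ρ * E ^ 2 * ((C + Cf * C) * (l x * (g x + h x))) := by
        calc |f t - t ^ ρ * l x| ≤ Cf * (t ^ ρ * l t * h t) + t ^ ρ * |l t - l x| := by linarith
          _ = t ^ ρ * (Cf * (l t * h t) + |l t - l x|) := by ring
          _ ≤ t ^ ρ * (Cf * ((C * E * l x) * (E * h x)) + C * E * (g x * l x)) := by gcongr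
          _ ≤ t ^ ρ * (E ^ 2 * ((C + Cf * C) * (l x * (g x + h x)))) := by
              refine mul_le_mul_of_nonneg_left ?_ htr.le
              have i1 : C * E * (g x * l x) ≤ C * E ^ 2 * (g x * l x) := by
                gcongr; nlinarith
              have i2 : 0 ≤ C * E ^ 2 * (l x * h x) := by positivity
              have i3 : 0 ≤ Cf * C * E ^ 2 * (l x * g x) := by positivity
              nlinarith
          _ = _ := by ring
      have s4 : t ^ ρ * E ^ 2 ≤ x ^ ρ * ((t / x) ^ σ + (t / x) ^ τ) := by
        have j1 : t ^ ρ = x ^ ρ * (t / x) ^ ρ := by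
          rw [← Real.mul_rpow hx0.le hq.le]; congr 1; field_simp
        rw [j1, mul_assoc]
        refine mul_le_mul_of_nonneg_left ?_ (by positivity)
        have j2 : E ^ 2 = Real.exp (2 * δ * d) := by
          rw [hE, ← Real.exp_nat_mul]; congr 1; push_cast; ring
        have j3 : Real.log (t / x) = Real.log t - Real.log x := Real.log_div ht0.ne' hx0.ne'
        rw [j2, Real.rpow_def_of_pos hq, Real.rpow_def_of_pos hq, Real.rpow_def_of_pos hq,
          ← Real.exp_add, j3]
        have p1 := Real.exp_pos ((Real.log t - Real.log x) * σ)
        have p2 := Real.exp_pos ((Real.log t - Real.log x) * τ)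
        rcases abs_cases (Real.log x - Real.log t) with ⟨q1, q2⟩ | ⟨q1, q2⟩
        · have : Real.exp ((Real.log t - Real.log x) * ρ + 2 * δ * d) ≤
              Real.exp ((Real.log t - Real.log x) * σ) := by
            apply Real.exp_le_exp.2; rw [hd, q1]; nlinarith
          linarith
        · have : Real.exp ((Real.log t - Real.log x) * ρ + 2 * δ * d) ≤
              Real.exp ((Real.log t - Real.log x) * τ) := by
            apply Real.exp_le_exp.2; rw [hd, q1]; nlinarith
          linarith
      calc |f t - t ^ ρ * l x| ≤ t ^ ρ * E ^ 2 * ((C + Cf * C) * (l x * (g x + h x))) := s3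
        _ ≤ x ^ ρ * ((t / x) ^ σ + (t / x) ^ τ) * (A * (l x * (g x + h x))) := by
            have hAle : C + Cf * C ≤ A := by
              have : 0 ≤ M * C ^ 2 + X ^ (ρ - σ) * C := by positivity
              linarith
            gcongr
        _ = _ := by simp only [hB]; ring
    · have m1 := hM t ⟨ht0, ht⟩
      have htσ : 0 < t ^ σ := by positivity
      have m2 : |f t| ≤ M * t ^ σ := by
        rw [abs_mul, abs_of_pos (by positivity), Real.rpow_neg ht0.le, inv_mul_eq_div,
          div_le_iff₀ htσ] at m1
        exact m1
      have m3 : t ^ ρ ≤ t ^ σ * X ^ (ρ - σ) := by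
        calc t ^ ρ = t ^ σ * t ^ (ρ - σ) := by rw [← Real.rpow_add ht0]; congr 1; ring
          _ ≤ _ := by gcongr
      have m4 : t ^ σ = (t / x) ^ σ * x ^ σ := by
        rw [← Real.mul_rpow hq.le hx0.le]; congr 1; field_simp
      have hx1' : 1 ≤ x := by linarith
      have xd : 0 < x ^ (-δ) := by positivity
      have m5 : x ^ σ ≤ x ^ ρ * (x ^ (-δ) * x ^ (-δ)) := by
        rw [← Real.rpow_add hx0, ← Real.rpow_add hx0]
        exact Real.rpow_le_rpow_of_exponent_le hx1' (by linarith)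
      have m6 : x ^ σ ≤ x ^ ρ * x ^ (-δ) := by
        rw [← Real.rpow_add hx0]
        exact Real.rpow_le_rpow_of_exponent_le hx1' (by linarith)
      have hxr : 0 < x ^ ρ := by positivity
      have m7 : x ^ σ ≤ x ^ ρ * ((C * l x) * (C * g x)) :=
        m5.trans (mul_le_mul_of_nonneg_left (mul_le_mul kl kg xd.le (by positivity)) hxr.le)
      have m8 : x ^ σ ≤ x ^ ρ * (C * g x) :=
        m6.trans (mul_le_mul_of_nonneg_left kg hxr.le)
      have m9 : x ^ σ * (M + X ^ (ρ - σ) * l x) ≤ A * B x := by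
        calc x ^ σ * (M + X ^ (ρ - σ) * l x) = M * x ^ σ + X ^ (ρ - σ) * l x * x ^ σ := by ring
          _ ≤ M * (x ^ ρ * ((C * l x) * (C * g x))) +
              X ^ (ρ - σ) * l x * (x ^ ρ * (C * g x)) := by gcongr
          _ = (M * C ^ 2 + X ^ (ρ - σ) * C) * (x ^ ρ * l x * g x) := by ring
          _ ≤ A * (x ^ ρ * l x * (g x + h x)) := by
              have hAle : M * C ^ 2 + X ^ (ρ - σ) * C ≤ A := by
                have : 0 ≤ C + Cf * C := by positivity
                linarith
              gcongr
              linarith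
      calc |f t - t ^ ρ * l x| ≤ |f t| + |t ^ ρ * l x| := abs_sub _ _
        _ ≤ M * t ^ σ + t ^ σ * X ^ (ρ - σ) * l x := by
            rw [abs_of_nonneg (by positivity : 0 ≤ t ^ ρ * l x)]
            gcongr
        _ = (t / x) ^ σ * (x ^ σ * (M + X ^ (ρ - σ) * l x)) := by rw [m4]; ring
        _ ≤ (t / x) ^ σ * (A * B x) := by gcongr
        _ ≤ A * B x * ((t / x) ^ σ + (t / x) ^ τ) := by
            have := hB0 x hx0
            have : 0 ≤ A * B x * (t / x) ^ τ := by positivity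
            linarith
  -- integration
  have hint : ∀ s ∈ Set.Icc σ τ, ∀ x, 0 < x →
      IntegrableOn (fun t => U (x / t) * (t / x) ^ s / t) (Set.Ioi 0) ∧
      ∫ t in Set.Ioi (0:ℝ), U (x / t) * (t / x) ^ s / t = mellinT U s := by
    intro s hs x hx
    have c := aux_cov (fun u => u ^ (-s) * U u) x hx (hMellin s hs)
    have e : ∀ t ∈ Set.Ioi (0:ℝ), (x / t) ^ (-s) * U (x / t) / t = U (x / t) * (t / x) ^ s / t := by
      intro t ht
      have ht : 0 < t := ht
      rw [Real.rpow_neg (by positivity), ← Real.inv_rpow (by positivity), inv_div, mul_comm]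
    refine ⟨c.1.congr_fun e measurableSet_Ioi, ?_⟩
    rw [← setIntegral_congr_fun measurableSet_Ioi e]
    exact c.2
  refine IsBigO.of_bound (A * (mellinT U σ + mellinT U τ)) ?_
  filter_upwards [eventually_ge_atTop X] with x hx
  have hx0 : 0 < x := by linarith
  obtain ⟨iσ, vσ⟩ := hint σ ⟨le_rfl, hστ.le⟩ x hx0
  obtain ⟨iτ, vτ⟩ := hint τ ⟨hστ.le, le_rfl⟩ x hx0
  obtain ⟨iρ, vρ⟩ := hint ρ ⟨hρ1.le, hρ2.le⟩ x hx0
  have iρ' := iρ.const_mul (x ^ ρ * l x)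
  have eρ : ∀ t ∈ Set.Ioi (0:ℝ), x ^ ρ * l x * (U (x / t) * (t / x) ^ ρ / t) =
      U (x / t) * (t ^ ρ * l x) / t := by
    intro t ht
    have ht : 0 < t := ht
    have hxr : 0 < x ^ ρ := by positivity
    rw [Real.div_rpow ht.le hx0.le]
    field_simp
  have ibd := (iσ.add iτ).const_mul (A * B x)
  have hbd : ∀ t ∈ Set.Ioi (0:ℝ), ‖U (x / t) * (f t - t ^ ρ * l x) / t‖ ≤
      A * B x * (U (x / t) * (t / x) ^ σ / t + U (x / t) * (t / x) ^ τ / t) := by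
    intro t ht
    have ht : 0 < t := ht
    have p := hpw x t hx ht
    have hU := hU_nonneg (x / t)
    rw [Real.norm_eq_abs, abs_div, abs_mul, abs_of_nonneg hU, abs_of_pos ht]
    calc U (x / t) * |f t - t ^ ρ * l x| / t
        ≤ U (x / t) * (A * B x * ((t / x) ^ σ + (t / x) ^ τ)) / t := by gcongr
      _ = _ := by ring
  have hae := (ae_restrict_iff' (μ := (volume : Measure ℝ)) measurableSet_Ioi).2
    (Eventually.of_forall hbd)
  have hUx : Measurable fun t : ℝ => U (x / t) :=
    hU_meas.comp (measurable_const.div measurable_id)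
  have idiff : IntegrableOn (fun t => U (x / t) * (f t - t ^ ρ * l x) / t) (Set.Ioi 0) := by
    refine Integrable.mono' ibd ?_ hae
    have : Measurable fun t : ℝ => U (x / t) * (f t - t ^ ρ * l x) / t :=
      (hUx.mul (hf_meas.sub ((measurable_id.pow_const ρ).mul_const _))).div measurable_id
    exact this.aestronglyMeasurable
  have imain : IntegrableOn (fun t => U (x / t) * (t ^ ρ * l x) / t) (Set.Ioi 0) :=
    IntegrableOn.congr_fun iρ' eρ measurableSet_Ioi
  have vmain : ∫ t in Set.Ioi (0:ℝ), U (x / t) * (t ^ ρ * l x) / t =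
      mellinT U ρ * (x ^ ρ * l x) := by
    rw [← setIntegral_congr_fun measurableSet_Ioi eρ, integral_const_mul, vρ, mul_comm]
  have hconv : mellinConv U f x - mellinT U ρ * (x ^ ρ * l x) =
      ∫ t in Set.Ioi (0:ℝ), U (x / t) * (f t - t ^ ρ * l x) / t := by
    have := integral_add idiff imain
    rw [vmain] at this
    have e : mellinConv U f x = ∫ t in Set.Ioi (0:ℝ),
        (U (x / t) * (f t - t ^ ρ * l x) / t + U (x / t) * (t ^ ρ * l x) / t) := by
      unfold mellinConv
      refine setIntegral_congr_fun measurableSet_Ioi fun t _ => ?_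
      ring
    rw [e, this]; ring
  rw [hconv]
  refine (norm_integral_le_of_norm_le ibd hae).trans ?_
  have vb : ∫ t in Set.Ioi (0:ℝ),
      A * B x * (U (x / t) * (t / x) ^ σ / t + U (x / t) * (t / x) ^ τ / t) =
      A * B x * (mellinT U σ + mellinT U τ) := by
    rw [integral_const_mul, integral_add iσ iτ, vσ, vτ]
  have hBx := hB0 x hx0
  refine (le_of_eq vb).trans ?_
  rw [Real.norm_eq_abs, abs_of_nonneg hBx]
  apply le_of_eq
  ring
end

section
/- Let t > 0, λ > 0, η₁ > 1, η₂ > 0, and p, q > 0 with p + q = 1, and set s = 2√π·C₁ and r = 2√B₁ with C₁ = (η₁λtp/(2π))·exp{η₂λtq/(η₁+η₂) − λt} and B₁ = η₁λtp. Then there exists a positive constant c such that |G₁(t,u) − u^{−3/2}·D^{−3/2}λ_{s,r}(u)| ≤ c·u^{−5/2}·D^{−5/2}λ_{s,r}(u) for all u > 0, where λ_{s,r}(u) = s·cosh(r√u) and D^α denotes the Riemann–Liouville fractional integral D^α f(u) = (1/Γ(−α))·∫_0^u f(y)(u−y)^{−α−1} dy for α < 0. -/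
open Filter Asymptotics MeasureTheory

/-- `P_{n,k}` from Kou's double exponential jump model: `P_{n,n} = p^n` and, for
`1 ≤ k ≤ n−1`,
`P_{n,k} = Σ_{i=k}^{n−1} C(n−k−1, i−k) C(n,i) (η₁/(η₁+η₂))^{i−k} (η₂/(η₁+η₂))^{n−i} p^i q^{n−i}`. -/
noncomputable def Pcoef (η₁ η₂ p q : ℝ) (n k : ℕ) : ℝ :=
  if k = n then p ^ n
  else ∑ i ∈ Finset.Ico k n,
    ((n - k - 1).choose (i - k) : ℝ) * (n.choose i : ℝ) *
      (η₁ / (η₁ + η₂)) ^ (i - k) * (η₂ / (η₁ + η₂)) ^ (n - i) * p ^ i * q ^ (n - i)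

/-- `Q_{n,k}` from Kou's double exponential jump model: `Q_{n,n} = q^n` and, for
`1 ≤ k ≤ n−1`,
`Q_{n,k} = Σ_{i=k}^{n−1} C(n−k−1, i−k) C(n,i) (η₁/(η₁+η₂))^{n−i} (η₂/(η₁+η₂))^{i−k} p^{n−i} q^i`. -/
noncomputable def Qcoef (η₁ η₂ p q : ℝ) (n k : ℕ) : ℝ :=
  if k = n then q ^ n
  else ∑ i ∈ Finset.Ico k n,
    ((n - k - 1).choose (i - k) : ℝ) * (n.choose i : ℝ) *
      (η₁ / (η₁ + η₂)) ^ (n - i) * (η₂ / (η₁ + η₂)) ^ (i - k) * p ^ (n - i) * q ^ i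

/-- The Poisson weights `π_n = e^{−λt} (λt)^n / n!`. -/
noncomputable def poisCoef (lam t : ℝ) (n : ℕ) : ℝ :=
  Real.exp (-(lam * t)) * (lam * t) ^ n / (n.factorial : ℝ)

/-- `a_k = (η₁^{k+1}/k!) Σ_{n=k+1}^∞ π_n P_{n,k+1}` (the series is reindexed by
`n = m + (k+1)`, `m ≥ 0`). -/
noncomputable def aCoef (lam t η₁ η₂ p q : ℝ) (k : ℕ) : ℝ :=
  η₁ ^ (k + 1) / (k.factorial : ℝ) *
    ∑' m : ℕ, poisCoef lam t (m + (k + 1)) * Pcoef η₁ η₂ p q (m + (k + 1)) (k + 1)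

/-- `b_k = (η₂^{k+1}/k!) Σ_{n=k+1}^∞ π_n Q_{n,k+1}` (the series is reindexed by
`n = m + (k+1)`, `m ≥ 0`). -/
noncomputable def bCoef (lam t η₁ η₂ p q : ℝ) (k : ℕ) : ℝ :=
  η₂ ^ (k + 1) / (k.factorial : ℝ) *
    ∑' m : ℕ, poisCoef lam t (m + (k + 1)) * Qcoef η₁ η₂ p q (m + (k + 1)) (k + 1)

/-- `G₁(t,u) = Σ_{k=0}^∞ a_k u^k`. -/
noncomputable def G1 (lam t η₁ η₂ p q : ℝ) (u : ℝ) : ℝ :=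
  ∑' k : ℕ, aCoef lam t η₁ η₂ p q k * u ^ k

/-- `G₂(t,−u) = Σ_{k=0}^∞ b_k u^k`; `G2m lam t η₁ η₂ p q u` stands for `G₂(t,−u)`. -/
noncomputable def G2m (lam t η₁ η₂ p q : ℝ) (u : ℝ) : ℝ :=
  ∑' k : ℕ, bCoef lam t η₁ η₂ p q k * u ^ k

/-- `H₁(t,x) = G₁(t, log x)` for `x > 1`. -/
noncomputable def H1fun (lam t η₁ η₂ p q : ℝ) (x : ℝ) : ℝ :=
  G1 lam t η₁ η₂ p q (Real.log x)

/-- `H₂(t,x) = G₂(t, log x) = G2m(t, log(1/x))` for `0 < x < 1`. -/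
noncomputable def H2fun (lam t η₁ η₂ p q : ℝ) (x : ℝ) : ℝ :=
  G2m lam t η₁ η₂ p q (Real.log x⁻¹)

/-- The density of the absolutely continuous part of the law of the exponential compound
Poisson factor: `H(t,x) = H₁(t,x) x^{−η₁−1}` for `x > 1` and `H(t,x) = H₂(t,x) x^{η₂−1}`
for `0 < x < 1`. -/
noncomputable def Hfun (lam t η₁ η₂ p q : ℝ) (x : ℝ) : ℝ :=
  if 1 < x then H1fun lam t η₁ η₂ p q x * x ^ (-η₁ - 1)
  else H2fun lam t η₁ η₂ p q x * x ^ (η₂ - 1)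

/-- The Riemann–Liouville fractional integral of order `α < 0`:
`D^α f(u) = (1/Γ(−α)) ∫_0^u f(y)(u−y)^{−α−1} dy`. -/
noncomputable def rlInt (α : ℝ) (f : ℝ → ℝ) (u : ℝ) : ℝ :=
  (1 / Real.Gamma (-α)) * ∫ y in (0:ℝ)..u, f y * (u - y) ^ (-α - 1)

/-- `λ_{s,r}(u) = s cosh(r√u)`. -/
noncomputable def lambdaFun (s r : ℝ) (u : ℝ) : ℝ :=
  s * Real.cosh (r * Real.sqrt u)


lemma aux_log_conv (x y a b : ℝ) (hx : 0 < x) (hy : 0 < y) (ha : 0 ≤ a) (hb : 0 ≤ b)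
    (hab : a + b = 1) :
    Real.log (Real.Gamma (a * x + b * y)) ≤
      a * Real.log (Real.Gamma x) + b * Real.log (Real.Gamma y) := by
  have := Real.convexOn_log_Gamma.2 (Set.mem_Ioi.2 hx) (Set.mem_Ioi.2 hy) ha hb hab
  simpa using this

lemma aux_gamma_lower (x : ℝ) (hx : 0 ≤ x) :
    Real.Gamma (x + 1) * Real.Gamma (x + 2) ≤ Real.Gamma (x + 1/2) * Real.Gamma (x + 5/2) := by
  have h1 := aux_log_conv (x + 1/2) (x + 5/2) (3/4) (1/4) (by linarith) (by linarith)
    (by norm_num) (by norm_num) (by norm_num)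
  have h2 := aux_log_conv (x + 1/2) (x + 5/2) (1/4) (3/4) (by linarith) (by linarith)
    (by norm_num) (by norm_num) (by norm_num)
  rw [show (3/4:ℝ) * (x + 1/2) + 1/4 * (x + 5/2) = x + 1 by ring] at h1
  rw [show (1/4:ℝ) * (x + 1/2) + 3/4 * (x + 5/2) = x + 2 by ring] at h2
  have g1 := Real.Gamma_pos_of_pos (show 0 < x + 1 by linarith)
  have g2 := Real.Gamma_pos_of_pos (show 0 < x + 2 by linarith)
  have g3 := Real.Gamma_pos_of_pos (show 0 < x + 1/2 by linarith)
  have g4 := Real.Gamma_pos_of_pos (show 0 < x + 5/2 by linarith)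
  rw [← Real.log_le_log_iff (by positivity) (by positivity), Real.log_mul g1.ne' g2.ne',
    Real.log_mul g3.ne' g4.ne']
  linarith

lemma aux_gamma_upper (x : ℝ) (hx : 0 ≤ x) :
    Real.Gamma (x + 1/2) * Real.Gamma (x + 5/2) * (x + 1/2) ≤
      (x + 3/2) * (Real.Gamma (x + 1) * Real.Gamma (x + 2)) := by
  have h1 := aux_log_conv (x + 1) (x + 2) (1/2) (1/2) (by linarith) (by linarith)
    (by norm_num) (by norm_num) (by norm_num)
  rw [show (1/2:ℝ) * (x + 1) + 1/2 * (x + 2) = x + 3/2 by ring] at h1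
  have g1 := Real.Gamma_pos_of_pos (show 0 < x + 1 by linarith)
  have g2 := Real.Gamma_pos_of_pos (show 0 < x + 2 by linarith)
  have g3 := Real.Gamma_pos_of_pos (show 0 < x + 3/2 by linarith)
  have e1 := Real.Gamma_add_one (show x + 1/2 ≠ 0 by linarith)
  have e2 := Real.Gamma_add_one (show x + 3/2 ≠ 0 by linarith)
  rw [show x + 1/2 + 1 = x + 3/2 by ring] at e1
  rw [show x + 3/2 + 1 = x + 5/2 by ring] at e2
  have h : Real.Gamma (x + 3/2) * Real.Gamma (x + 3/2) ≤ Real.Gamma (x + 1) * Real.Gamma (x + 2) := by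
    rw [← Real.log_le_log_iff (by positivity) (by positivity), Real.log_mul g1.ne' g2.ne',
      Real.log_mul g3.ne' g3.ne']
    linarith
  calc Real.Gamma (x + 1/2) * Real.Gamma (x + 5/2) * (x + 1/2)
      = (x + 3/2) * (Real.Gamma (x + 3/2) * Real.Gamma (x + 3/2)) := by
        rw [e2, e1]; ring
    _ ≤ _ := by gcongr

lemma aux_fact (k : ℕ) : ((2 * k).factorial : ℝ) * Real.sqrt Real.pi =
    4 ^ k * (k.factorial : ℝ) * Real.Gamma (k + 1/2) := by
  induction k with
  | zero => simpa using Real.Gamma_one_half_eq.symm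
  | succ k ih =>
    have e : Real.Gamma ((k + 1 : ℕ) + 1/2) = (k + 1/2) * Real.Gamma (k + 1/2) := by
      rw [← Real.Gamma_add_one (by positivity)]; push_cast; ring_nf
    rw [e, show 2 * (k + 1) = 2 * k + 1 + 1 by ring, Nat.factorial_succ, Nat.factorial_succ,
      Nat.factorial_succ]
    push_cast
    rw [pow_succ]
    linear_combination (2 * (k:ℝ) + 1 + 1) * (2 * k + 1) * ih

lemma aux_beta (k : ℕ) (β u : ℝ) (hβ : 0 < β) (hu : 0 < u) :
    ∫ y in (0:ℝ)..u, y ^ k * (u - y) ^ (β - 1) =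
      u ^ (k + β) * (k.factorial * Real.Gamma β / Real.Gamma (k + 1 + β)) := by
  have h := Complex.betaIntegral_scaled ((k:ℂ) + 1) (β : ℂ) hu
  have hb := Complex.Gamma_mul_Gamma_eq_betaIntegral (s := (k:ℂ) + 1) (t := (β:ℂ))
    (by simp; positivity) (by simpa using hβ)
  have hG : Real.Gamma (k + 1 + β) ≠ 0 := (Real.Gamma_pos_of_pos (by positivity)).ne'
  have e1 : Complex.Gamma ((k:ℂ) + 1 + β) = ((Real.Gamma (k + 1 + β) : ℝ) : ℂ) := by
    rw [← Complex.Gamma_ofReal]; push_cast; rfl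
  rw [Complex.Gamma_nat_eq_factorial, Complex.Gamma_ofReal, e1] at hb
  have hbeta : Complex.betaIntegral ((k:ℂ) + 1) β =
      ((k.factorial * Real.Gamma β / Real.Gamma (k + 1 + β) : ℝ) : ℂ) := by
    push_cast
    rw [eq_div_iff (by exact_mod_cast hG), hb]; ring
  rw [hbeta] at h
  have e2 : ((u:ℂ) ^ ((k:ℂ) + 1 + β - 1)) = ((u ^ ((k:ℝ) + β) : ℝ) : ℂ) := by
    rw [Complex.ofReal_cpow hu.le]; push_cast; congr 1; ring
  rw [e2, ← Complex.ofReal_mul] at h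
  rw [← Complex.ofReal_inj, ← h, ← intervalIntegral.integral_ofReal]
  apply intervalIntegral.integral_congr
  intro y hy
  rw [Set.uIcc_of_le hu.le] at hy
  have hc : (((u - y) ^ (β - 1) : ℝ) : ℂ) = ((u:ℂ) - y) ^ ((β:ℂ) - 1) := by
    rw [Complex.ofReal_cpow (by linarith [hy.2])]; push_cast; rfl
  simp only [Complex.ofReal_mul, hc]
  congr 1
  simp

lemma aux_rl (s r β u : ℝ) (hβ : 1 ≤ β) (hu : 0 < u) :
    HasSum (fun k : ℕ => s * (r ^ (2 * k) / ((2 * k).factorial : ℝ)) *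
        (k.factorial / Real.Gamma (k + 1 + β)) * u ^ k)
      (u ^ (-β) * rlInt (-β) (lambdaFun s r) u) := by
  have hG : Real.Gamma β ≠ 0 := (Real.Gamma_pos_of_pos (by linarith)).ne'
  have hsum : Summable fun k : ℕ => |s| * (r ^ (2 * k) / ((2 * k).factorial : ℝ) * u ^ k)
      * u ^ (β - 1) := by
    apply Summable.mul_right
    apply Summable.mul_left
    have := (Real.hasSum_cosh (r * Real.sqrt u)).summable
    refine this.congr fun k => ?_
    rw [mul_pow, pow_mul (Real.sqrt u), Real.sq_sqrt hu.le]; ring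
  have key : HasSum (fun k : ℕ => ∫ y in (0:ℝ)..u,
      s * (r ^ (2 * k) / ((2 * k).factorial : ℝ)) * (y ^ k * (u - y) ^ (β - 1)))
      (∫ y in (0:ℝ)..u, lambdaFun s r y * (u - y) ^ (β - 1)) := by
    apply intervalIntegral.hasSum_integral_of_dominated_convergence
      (bound := fun k _ => |s| * (r ^ (2 * k) / ((2 * k).factorial : ℝ) * u ^ k) * u ^ (β - 1))
    · intro k
      apply Continuous.aestronglyMeasurable
      have : Continuous fun y : ℝ => (u - y) ^ (β - 1) :=
        (continuous_const.sub continuous_id).rpow_const (fun _ => Or.inr (by linarith))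
      fun_prop
    · intro k
      refine Eventually.of_forall fun y hy => ?_
      rw [Set.uIoc_of_le hu.le] at hy
      have h0 : 0 ≤ u - y := by linarith [hy.2]
      have h1 : 0 ≤ r ^ (2 * k) := by rw [pow_mul]; positivity
      have h2 : 0 ≤ y := hy.1.le
      have h3 : 0 ≤ (u - y) ^ (β - 1) := Real.rpow_nonneg h0 _
      rw [Real.norm_eq_abs, abs_mul, abs_mul, abs_of_nonneg (a := _ / _) (by positivity),
        abs_of_nonneg (a := _ * _) (by positivity)]
      rw [show |s| * (r ^ (2 * k) / ((2 * k).factorial : ℝ) * u ^ k) * u ^ (β - 1) =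
        |s| * (r ^ (2 * k) / ((2 * k).factorial : ℝ)) * (u ^ k * u ^ (β - 1)) by ring]
      have h4 : (u - y) ^ (β - 1) ≤ u ^ (β - 1) :=
        Real.rpow_le_rpow h0 (by linarith) (by linarith)
      have h5 : y ^ k ≤ u ^ k := pow_le_pow_left₀ h2 hy.2 k
      gcongr
    · exact Eventually.of_forall fun y hy => hsum
    · exact intervalIntegrable_const
    · refine Eventually.of_forall fun y hy => ?_
      rw [Set.uIoc_of_le hu.le] at hy
      have := ((Real.hasSum_cosh (r * Real.sqrt y)).mul_left s).mul_right ((u - y) ^ (β - 1))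
      refine this.congr_fun ?_ 
      intro k
      rw [mul_pow, pow_mul (Real.sqrt y), Real.sq_sqrt hy.1.le]; ring
  have k2 := (key.mul_left (1 / Real.Gamma β)).mul_left (u ^ (-β))
  rw [rlInt]
  simp only [neg_neg]
  refine k2.congr_fun fun k => ?_
  rw [intervalIntegral.integral_const_mul, aux_beta k β u (by linarith) hu, Real.rpow_add hu,
    Real.rpow_neg hu.le, Real.rpow_natCast]
  have : u ^ β ≠ 0 := (Real.rpow_pos_of_pos hu _).ne'
  have hG2 : Real.Gamma (k + 1 + β) ≠ 0 := (Real.Gamma_pos_of_pos (by positivity)).ne'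
  field_simp

lemma aux_choose (m K i : ℕ) (hi : 1 ≤ i) (him : i ≤ m) :
    ((m + K).choose (K + i) : ℝ) / ((m + K).factorial : ℝ) ≤
      (m.choose i : ℝ) / (m.factorial * (K + 1).factorial) := by
  rw [Nat.cast_choose ℝ (show K + i ≤ m + K by omega), Nat.cast_choose ℝ him,
    show m + K - (K + i) = m - i by omega]
  have h : (K + 1).factorial * i.factorial ≤ (K + i).factorial := by
    induction i, hi using Nat.le_induction with
    | base => simp
    | succ n hn ih =>
      rw [← Nat.add_assoc, Nat.factorial_succ (K + n), Nat.factorial_succ n]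
      calc (K + 1).factorial * ((n + 1) * n.factorial)
          = (n + 1) * ((K + 1).factorial * n.factorial) := by ring
        _ ≤ (K + n + 1) * (K + n).factorial := by
          apply Nat.mul_le_mul (by omega) (ih (by omega))
  have h' : ((K + 1).factorial : ℝ) * i.factorial ≤ (K + i).factorial := by exact_mod_cast h
  have p1 : (0:ℝ) < (m + K).factorial := by positivity
  have p2 : (0:ℝ) < m.factorial := by positivity
  have p3 : (0:ℝ) < (m - i).factorial := by positivity
  rw [show ((m + K).factorial : ℝ) / ((K + i).factorial * (m - i).factorial) / (m + K).factorial
     = 1 / ((K + i).factorial * (m - i).factorial) by field_simp,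
    show (m.factorial : ℝ) / (i.factorial * (m - i).factorial) / (m.factorial * (K + 1).factorial)
     = 1 / ((K + 1).factorial * i.factorial * (m - i).factorial) by field_simp]
  apply one_div_le_one_div_of_le (by positivity)
  gcongr

lemma aux_choose0 (m K : ℕ) :
    ((m + K).choose K : ℝ) / ((m + K).factorial : ℝ) = 1 / (m.factorial * K.factorial) := by
  rw [Nat.cast_choose ℝ (show K ≤ m + K by omega), show m + K - K = m by omega]
  have p1 : ((m + K).factorial : ℝ) ≠ 0 := by positivity
  field_simp

lemma aux_term (lam t η₁ η₂ p q : ℝ)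
    (ht : 0 < t) (hlam : 0 < lam) (hη₁ : 1 < η₁) (hη₂ : 0 < η₂)
    (hp : 0 < p) (hq : 0 < q) (hpq : p + q = 1) (K m : ℕ) :
    Real.exp (-(lam * t)) * ((lam * t * p) ^ K / K.factorial) *
        ((lam * t * q * (η₂ / (η₁ + η₂))) ^ m / m.factorial) ≤
      poisCoef lam t (m + K) * Pcoef η₁ η₂ p q (m + K) K ∧
    poisCoef lam t (m + K) * Pcoef η₁ η₂ p q (m + K) K ≤
      Real.exp (-(lam * t)) * ((lam * t * p) ^ K / K.factorial) *
        ((lam * t * q * (η₂ / (η₁ + η₂))) ^ m / m.factorial) +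
      Real.exp (-(lam * t)) * ((lam * t * p) ^ K / (K + 1).factorial) *
        ((2 * (lam * t)) ^ m / m.factorial) := by
  have hL : 0 < lam * t := by positivity
  have hh : 0 < η₁ + η₂ := by linarith
  have hρ1 : 0 < η₁ / (η₁ + η₂) := by positivity
  have hρ2 : 0 < η₂ / (η₁ + η₂) := by positivity
  have hρ1' : η₁ / (η₁ + η₂) ≤ 1 := by rw [div_le_one hh]; linarith
  have hρ2' : η₂ / (η₁ + η₂) ≤ 1 := by rw [div_le_one hh]; linarith
  unfold poisCoef Pcoef
  generalize η₁ / (η₁ + η₂) = ρ1 at *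
  generalize η₂ / (η₁ + η₂) = ρ2 at *
  generalize lam * t = L at *
  rcases m with _ | l
  · have e : Real.exp (-L) * L ^ (0 + K) / ((0 + K).factorial : ℝ) * p ^ (0 + K) =
      Real.exp (-L) * ((L * p) ^ K / K.factorial) * ((L * q * ρ2) ^ 0 / (Nat.factorial 0)) := by
      simp [mul_pow]; ring
    rw [if_pos (by simp), e]
    refine ⟨le_rfl, le_add_of_nonneg_right (by positivity)⟩
  · rw [if_neg (by omega), Finset.sum_Ico_eq_sum_range,
      show l + 1 + K - K = l + 1 by omega, Finset.sum_range_succ', mul_add]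
    have e0 : Real.exp (-L) * L ^ (l + 1 + K) / ((l + 1 + K).factorial : ℝ) *
        (((l + 1 - 1).choose (K + 0 - K) : ℝ) * ((l + 1 + K).choose (K + 0) : ℝ) *
          ρ1 ^ (K + 0 - K) * ρ2 ^ (l + 1 + K - (K + 0)) * p ^ (K + 0) *
          q ^ (l + 1 + K - (K + 0))) =
        Real.exp (-L) * ((L * p) ^ K / K.factorial) *
          ((L * q * ρ2) ^ (l + 1) / (l + 1).factorial) := by
      have := aux_choose0 (l + 1) K
      simp only [Nat.add_zero, Nat.sub_self, Nat.choose_zero_right, Nat.add_sub_cancel]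
      calc _ = Real.exp (-L) * L ^ (l + 1 + K) * ρ2 ^ (l + 1) * p ^ K * q ^ (l + 1) *
            (((l + 1 + K).choose K : ℝ) / ((l + 1 + K).factorial : ℝ)) := by
              push_cast; ring
        _ = _ := by rw [this]; field_simp; ring
    rw [e0]
    refine ⟨le_add_of_nonneg_left (by positivity), ?_⟩
    refine (add_comm _ _).le.trans ?_
    refine add_le_add le_rfl ?_
    rw [Finset.mul_sum]
    have hterm : ∀ j ∈ Finset.range l,
        Real.exp (-L) * L ^ (l + 1 + K) / ((l + 1 + K).factorial : ℝ) *
        (((l + 1 - 1).choose (K + (j + 1) - K) : ℝ) * ((l + 1 + K).choose (K + (j + 1)) : ℝ) *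
          ρ1 ^ (K + (j + 1) - K) * ρ2 ^ (l + 1 + K - (K + (j + 1))) * p ^ (K + (j + 1)) *
          q ^ (l + 1 + K - (K + (j + 1)))) ≤
        Real.exp (-L) * ((L * p) ^ K / (K + 1).factorial) * ((2 * L) ^ (l + 1) / (l + 1).factorial) *
          (p ^ (j + 1) * q ^ (l + 1 - (j + 1)) * ((l + 1).choose (j + 1) : ℝ)) := by
      intro j hj
      have hj' := Finset.mem_range.1 hj
      rw [show K + (j + 1) - K = j + 1 by omega, show l + 1 - 1 = l by omega,
        show l + 1 + K - (K + (j + 1)) = l + 1 - (j + 1) by omega]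
      have c1 := aux_choose (l + 1) K (j + 1) (by omega) (by omega)
      have c2 : (l.choose (j + 1) : ℝ) ≤ 2 ^ (l + 1) := by
        have : l.choose (j + 1) ≤ 2 ^ (l + 1) :=
          (Nat.choose_le_two_pow _ _).trans (Nat.pow_le_pow_right (by norm_num) (by omega))
        exact_mod_cast this
      have c3 : ρ1 ^ (j + 1) ≤ 1 := pow_le_one₀ hρ1.le hρ1'
      have c4 : ρ2 ^ (l + 1 - (j + 1)) ≤ 1 := pow_le_one₀ hρ2.le hρ2'
      calc _ = Real.exp (-L) * L ^ (l + 1 + K) * p ^ (K + (j + 1)) * q ^ (l + 1 - (j + 1)) *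
            ((((l + 1 + K).choose (K + (j + 1)) : ℝ) / ((l + 1 + K).factorial : ℝ)) *
            (l.choose (j + 1) : ℝ) * ρ1 ^ (j + 1) * ρ2 ^ (l + 1 - (j + 1))) := by ring
        _ ≤ Real.exp (-L) * L ^ (l + 1 + K) * p ^ (K + (j + 1)) * q ^ (l + 1 - (j + 1)) *
            ((((l + 1).choose (j + 1) : ℝ) / ((l + 1).factorial * (K + 1).factorial)) *
              2 ^ (l + 1) * 1 * 1) := by gcongr
        _ = _ := by field_simp; ring
    refine (Finset.sum_le_sum hterm).trans ?_
    rw [← Finset.mul_sum]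
    have hb : ∑ j ∈ Finset.range l, p ^ (j + 1) * q ^ (l + 1 - (j + 1)) *
        ((l + 1).choose (j + 1) : ℝ) ≤ 1 := by
      have h1 := add_pow p q (l + 1)
      rw [hpq, one_pow, Finset.sum_range_succ, Finset.sum_range_succ'] at h1
      rw [h1]
      have : 0 ≤ p ^ 0 * q ^ (l + 1 - 0) * ((l + 1).choose 0 : ℝ) := by positivity
      have : 0 ≤ p ^ (l + 1) * q ^ (l + 1 - (l + 1)) * ((l + 1).choose (l + 1) : ℝ) := by
        positivity
      linarith
    exact mul_le_of_le_one_right (by positivity) hb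

lemma aux_exp (x : ℝ) : HasSum (fun m : ℕ => x ^ m / m.factorial) (Real.exp x) := by
  rw [Real.exp_eq_exp_ℝ]
  exact NormedSpace.expSeries_div_hasSum_exp x

lemma aux_a (lam t η₁ η₂ p q : ℝ)
    (ht : 0 < t) (hlam : 0 < lam) (hη₁ : 1 < η₁) (hη₂ : 0 < η₂)
    (hp : 0 < p) (hq : 0 < q) (hpq : p + q = 1) (k : ℕ) :
    (η₁ * lam * t * p) ^ (k + 1) * Real.exp (η₂ * lam * t * q / (η₁ + η₂) - lam * t) /
        (k.factorial * (k + 1).factorial) ≤ aCoef lam t η₁ η₂ p q k ∧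
    aCoef lam t η₁ η₂ p q k ≤
      (η₁ * lam * t * p) ^ (k + 1) * Real.exp (η₂ * lam * t * q / (η₁ + η₂) - lam * t) /
        (k.factorial * (k + 1).factorial) +
      (η₁ * lam * t * p) ^ (k + 1) * Real.exp (lam * t) / (k.factorial * (k + 2).factorial) := by
  have H := aux_term lam t η₁ η₂ p q ht hlam hη₁ hη₂ hp hq hpq (k + 1)
  have s1 := (aux_exp (lam * t * q * (η₂ / (η₁ + η₂)))).mul_left
    (Real.exp (-(lam * t)) * ((lam * t * p) ^ (k + 1) / (k + 1).factorial))
  have s2 := (aux_exp (2 * (lam * t))).mul_left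
    (Real.exp (-(lam * t)) * ((lam * t * p) ^ (k + 1) / (k + 1 + 1).factorial))
  have hh : 0 < η₁ + η₂ := by linarith
  have hη : 0 < η₁ := by linarith
  have s12 := s1.add s2
  have hs : Summable fun m : ℕ =>
      poisCoef lam t (m + (k + 1)) * Pcoef η₁ η₂ p q (m + (k + 1)) (k + 1) := by
    refine Summable.of_nonneg_of_le (fun m => le_trans (by positivity) (H m).1)
      (fun m => (H m).2) s12.summable
  have l1 := hasSum_le (fun m => (H m).1) s1 hs.hasSum
  have l2 := hasSum_le (fun m => (H m).2) hs.hasSum s12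
  have e1 : Real.exp (η₂ * lam * t * q / (η₁ + η₂) - lam * t) =
      Real.exp (-(lam * t)) * Real.exp (lam * t * q * (η₂ / (η₁ + η₂))) := by
    rw [← Real.exp_add]; congr 1; ring
  have e2 : Real.exp (lam * t) = Real.exp (-(lam * t)) * Real.exp (2 * (lam * t)) := by
    rw [← Real.exp_add]; congr 1; ring
  have e3 : (η₁ * lam * t * p) ^ (k + 1) = η₁ ^ (k + 1) * (lam * t * p) ^ (k + 1) := by
    rw [← mul_pow]; ring
  rw [e1, e3]
  unfold aCoef
  have hpos : 0 ≤ η₁ ^ (k + 1) / (k.factorial : ℝ) := by positivity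
  constructor
  · refine le_trans (le_of_eq ?_) (mul_le_mul_of_nonneg_left l1 hpos)
    field_simp
  · refine le_trans (mul_le_mul_of_nonneg_left l2 hpos) (le_of_eq ?_)
    rw [e2]
    simp only [show k + 1 + 1 = k + 2 by rfl]
    field_simp

theorem G1_fractional_integral_comparison
    (t lam η₁ η₂ p q : ℝ)
    (ht : 0 < t) (hlam : 0 < lam) (hη₁ : 1 < η₁) (hη₂ : 0 < η₂)
    (hp : 0 < p) (hq : 0 < q) (hpq : p + q = 1)
    (s r : ℝ)
    (hs : s = 2 * Real.sqrt Real.pi *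
      (η₁ * lam * t * p / (2 * Real.pi) *
        Real.exp (η₂ * lam * t * q / (η₁ + η₂) - lam * t)))
    (hr : r = 2 * Real.sqrt (η₁ * lam * t * p)) :
    ∃ c : ℝ, 0 < c ∧ ∀ u : ℝ, 0 < u →
      |G1 lam t η₁ η₂ p q u -
          u ^ (-(3:ℝ)/2) * rlInt (-(3:ℝ)/2) (lambdaFun s r) u| ≤
        c * u ^ (-(5:ℝ)/2) * rlInt (-(5:ℝ)/2) (lambdaFun s r) u := by
  have Ha := aux_a lam t η₁ η₂ p q ht hlam hη₁ hη₂ hp hq hpq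
  have hB : 0 < η₁ * lam * t * p := by positivity
  have hE : 0 < Real.exp (η₂ * lam * t * q / (η₁ + η₂) - lam * t) := Real.exp_pos _
  generalize η₁ * lam * t * p = B at *
  generalize Real.exp (η₂ * lam * t * q / (η₁ + η₂) - lam * t) = E at *
  have hF : 0 < Real.exp (lam * t) := Real.exp_pos _
  generalize Real.exp (lam * t) = F at *
  have hpi : 0 < Real.sqrt Real.pi := Real.sqrt_pos.2 Real.pi_pos
  have hs' : s * Real.sqrt Real.pi = B * E := by
    have := Real.mul_self_sqrt Real.pi_pos.le
    have hp0 := Real.pi_pos.ne'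
    rw [hs]
    calc _ = 2 * (Real.sqrt Real.pi * Real.sqrt Real.pi) * (B / (2 * Real.pi) * E) := by ring
      _ = _ := by rw [this]; field_simp
  have hcoef : ∀ (k : ℕ) (β : ℝ), 0 < β → s * (r ^ (2 * k) / ((2 * k).factorial : ℝ)) *
        (k.factorial / Real.Gamma (k + 1 + β)) =
        B ^ (k + 1) * E / (Real.Gamma (k + 1/2) * Real.Gamma (k + 1 + β)) := by
    intro k β hβ
    have h1 : r ^ (2 * k) = 4 ^ k * B ^ k := by
      rw [hr, pow_mul, mul_pow, Real.sq_sqrt hB.le, mul_pow]; norm_num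
    have h2 := aux_fact k
    have g1 : 0 < Real.Gamma ((k:ℝ) + 1/2) := Real.Gamma_pos_of_pos (by positivity)
    have g2 : 0 < Real.Gamma ((k:ℝ) + 1 + β) := Real.Gamma_pos_of_pos (by positivity)
    have f1 : (0:ℝ) < (2 * k).factorial := by positivity
    rw [h1, pow_succ, mul_assoc (B ^ k), ← hs']
    generalize Real.Gamma ((k:ℝ) + 1/2) = g at *
    field_simp
    linear_combination (-s) * h2
  refine ⟨5 + 4 * F / E, by positivity, fun u hu => ?_⟩
  have S1 := aux_rl s r (3/2) u (by norm_num) hu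
  have S2 := aux_rl s r (5/2) u (by norm_num) hu
  rw [show -(3/2 : ℝ) = -(3:ℝ)/2 by norm_num] at S1
  rw [show -(5/2 : ℝ) = -(5:ℝ)/2 by norm_num] at S2
  simp only [hcoef _ (3/2) (by norm_num)] at S1
  simp only [hcoef _ (5/2) (by norm_num)] at S2
  have S2c := S2.mul_left (5 + 4 * F / E)
  have hbound : ∀ k : ℕ, |aCoef lam t η₁ η₂ p q k * u ^ k -
      B ^ (k + 1) * E / (Real.Gamma (k + 1/2) * Real.Gamma (k + 1 + 3/2)) * u ^ k| ≤
      (5 + 4 * F / E) *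
        (B ^ (k + 1) * E / (Real.Gamma (k + 1/2) * Real.Gamma (k + 1 + 5/2)) * u ^ k) := by
    intro k
    rw [← sub_mul, abs_mul, abs_of_pos (pow_pos hu k), ← mul_assoc]
    refine mul_le_mul_of_nonneg_right ?_ (pow_pos hu k).le
    obtain ⟨A1, A2⟩ := Ha k
    have lo := aux_gamma_lower (k:ℝ) (by positivity)
    have up := aux_gamma_upper (k:ℝ) (by positivity)
    have e1 : Real.Gamma ((k:ℝ) + 1) = k.factorial := Real.Gamma_nat_eq_factorial k
    have e2 : Real.Gamma ((k:ℝ) + 2) = (k + 1).factorial := by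
      rw [← Real.Gamma_nat_eq_factorial (k + 1)]; push_cast; ring_nf
    have e3 : Real.Gamma ((k:ℝ) + 1 + 5/2) = (k + 5/2) * Real.Gamma (k + 5/2) := by
      rw [← Real.Gamma_add_one (by positivity)]; ring_nf
    have e4 : ((k + 2).factorial : ℝ) = (k + 2) * (k + 1).factorial := by
      rw [Nat.factorial_succ]; push_cast; ring
    rw [e1, e2] at lo up
    rw [e3, show (k:ℝ) + 1 + 3/2 = k + 5/2 by ring]
    rw [e4] at A2
    have g1 : 0 < Real.Gamma ((k:ℝ) + 1/2) := Real.Gamma_pos_of_pos (by positivity)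
    have g2 : 0 < Real.Gamma ((k:ℝ) + 5/2) := Real.Gamma_pos_of_pos (by positivity)
    have hX : 0 < Real.Gamma ((k:ℝ) + 1/2) * Real.Gamma ((k:ℝ) + 5/2) := by positivity
    have hY : (0:ℝ) < k.factorial * (k + 1).factorial := by positivity
    rw [show Real.Gamma ((k:ℝ) + 1/2) * ((k + 5/2) * Real.Gamma (k + 5/2)) =
      (k + 5/2) * (Real.Gamma ((k:ℝ) + 1/2) * Real.Gamma ((k:ℝ) + 5/2)) by ring]
    rw [show (k.factorial : ℝ) * ((k + 2) * (k + 1).factorial) =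
      (k + 2) * (k.factorial * (k + 1).factorial) by ring] at A2
    generalize Real.Gamma ((k:ℝ) + 1/2) * Real.Gamma ((k:ℝ) + 5/2) = X at *
    generalize (k.factorial : ℝ) * (k + 1).factorial = Y at *
    have hk : (0:ℝ) ≤ k := by positivity
    generalize (k:ℝ) = x at *
    have hBk : 0 < B ^ (k + 1) := by positivity
    generalize B ^ (k + 1) = D at *
    have b1 : D * E / X ≤ D * E / Y := div_le_div_of_nonneg_left (by positivity) hY lo
    have b2 : D * E / Y - D * E / X ≤ 5 * (D * E / ((x + 5/2) * X)) := by
      rw [div_sub_div _ _ hY.ne' hX.ne', ← mul_div_assoc,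
        div_le_div_iff₀ (by positivity) (by positivity)]
      have : (X - Y) * (x + 5/2) ≤ 5 * Y := by
        have h1 : (X - Y) * (x + 1/2) ≤ Y := by linarith
        have h2 : 0 ≤ X - Y := by linarith
        nlinarith [mul_nonneg h2 hk]
      have := mul_le_mul_of_nonneg_left this (show 0 ≤ D * E * X by positivity)
      linarith
    have b3 : D * F / ((x + 2) * Y) ≤ 4 * F / E * (D * E / ((x + 5/2) * X)) := by
      rw [show 4 * F / E * (D * E / ((x + 5/2) * X)) = 4 * (D * F) / ((x + 5/2) * X) by
        field_simp]
      rw [div_le_div_iff₀ (by positivity) (by positivity)]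
      have h3 : X ≤ 3 * Y := by
        have h2 : 0 ≤ X - Y := by linarith
        nlinarith [mul_nonneg h2 hk]
      have h4 : (x + 5/2) * X ≤ 4 * ((x + 2) * Y) := by
        calc (x + 5/2) * X ≤ (x + 5/2) * (3 * Y) := by gcongr
          _ ≤ _ := by nlinarith [mul_nonneg hk hY.le]
      have := mul_le_mul_of_nonneg_left h4 (show 0 ≤ D * F by positivity)
      linarith
    have b4 : 0 ≤ D * E / ((x + 5/2) * X) := by positivity
    rw [abs_of_nonneg (by linarith), add_mul]
    linarith
  have hsd : Summable fun k : ℕ => aCoef lam t η₁ η₂ p q k * u ^ k -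
      B ^ (k + 1) * E / (Real.Gamma (k + 1/2) * Real.Gamma (k + 1 + 3/2)) * u ^ k :=
    Summable.of_norm_bounded S2c.summable hbound
  have hsa : Summable fun k : ℕ => aCoef lam t η₁ η₂ p q k * u ^ k := by
    refine (hsd.add S1.summable).congr fun k => ?_
    ring
  have hd := hsa.hasSum.sub S1
  have hfin := tsum_of_norm_bounded (f := fun k : ℕ => aCoef lam t η₁ η₂ p q k * u ^ k -
      B ^ (k + 1) * E / (Real.Gamma (k + 1/2) * Real.Gamma (k + 1 + 3/2)) * u ^ k) S2c hbound
  rw [hd.tsum_eq, Real.norm_eq_abs, ← mul_assoc] at hfin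
  exact hfin
end

section
/- Let t > 0, λ > 0, η₁ > 1, η₂ > 0, and p, q > 0 with p + q = 1. Then H₁(t,x) = (1/(2√π))·(η₁λtp)^{1/4}·exp{η₂λtq/(η₁+η₂) − λt}·(log x)^{−3/4}·exp{2√(η₁λtp)·√(log x)}·(1 + O((log x)^{−1/2})) as x → ∞. -/
open Filter Asymptotics MeasureTheory

lemma fact_aux (K l : ℕ) (hK : 1 ≤ K) (hl : 1 ≤ l) :
    (K+1).factorial * l.factorial ≤ (K + l).factorial := by
  induction l, hl using Nat.le_induction with
  | base => simp
  | succ l hl ih =>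
    rw [← add_assoc K l 1, Nat.factorial_succ (K + l), Nat.factorial_succ l]
    calc (K+1).factorial * ((l+1) * l.factorial)
        = (l+1) * ((K+1).factorial * l.factorial) := by ring
      _ ≤ (K + l + 1) * (K+l).factorial := Nat.mul_le_mul (by omega) ih

lemma term_eq (lam t η₁ η₂ p q : ℝ) (m K : ℕ) (hm : 1 ≤ m) :
    poisCoef lam t (m + K) * Pcoef η₁ η₂ p q (m + K) K =
    Real.exp (-(lam * t)) * ∑ l ∈ Finset.range m, ((m-1).choose l : ℝ) *
      (η₁ / (η₁ + η₂)) ^ l * (η₂ / (η₁ + η₂)) ^ (m - l) *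
      ((lam * t * p) ^ (K + l) / ((K + l).factorial : ℝ)) *
      ((lam * t * q) ^ (m - l) / ((m - l).factorial : ℝ)) := by
  unfold poisCoef Pcoef
  rw [if_neg (by omega), Finset.sum_Ico_eq_sum_range, Finset.mul_sum, Finset.mul_sum,
    show m + K - K = m by omega]
  refine Finset.sum_congr rfl fun l hl => ?_
  have hl' := Finset.mem_range.1 hl
  obtain ⟨j, rfl⟩ : ∃ j, m = l + j := ⟨m - l, by omega⟩
  rw [show K + l - K = l by omega, show l + j + K - (K + l) = j by omega,
    show l + j - l = j by omega]
  have h : (((l + j + K).choose (K + l) : ℕ) : ℝ) = (l+j+K).factorial / ((K+l).factorial * j.factorial) := by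
    rw [show l + j + K = (K + l) + j by omega, Nat.cast_add_choose]
  rw [h, mul_pow (lam * t) p, mul_pow (lam * t) q, show l + j + K = (K + l) + j by omega, pow_add (lam * t) (K+l) j]
  have h1 : ((K + l + j).factorial : ℝ) ≠ 0 := by positivity
  have h2 : ((K + l).factorial : ℝ) ≠ 0 := by positivity
  have h3 : ((j).factorial : ℝ) ≠ 0 := by positivity
  field_simp

lemma term_bound (lam t η₁ η₂ p q : ℝ) (ht : 0 < t) (hlam : 0 < lam) (hη₁ : 0 < η₁) (hη₂ : 0 < η₂)
    (hp : 0 < p) (hq : 0 < q) (m K : ℕ) (hK : 1 ≤ K) :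
    |poisCoef lam t (m + K) * Pcoef η₁ η₂ p q (m + K) K -
      Real.exp (-(lam * t)) * ((lam * t * p) ^ K / (K.factorial : ℝ)) *
        ((η₂ / (η₁ + η₂) * (lam * t * q)) ^ m / (m.factorial : ℝ))| ≤
    Real.exp (-(lam * t)) * ((lam * t * p) ^ K / ((K+1).factorial : ℝ)) *
      ((2 * (η₁ / (η₁ + η₂) * (lam * t * p) + η₂ / (η₁ + η₂) * (lam * t * q))) ^ m
        / (m.factorial : ℝ)) := by
  rcases Nat.eq_zero_or_pos m with rfl | hm
  · have : poisCoef lam t (0 + K) * Pcoef η₁ η₂ p q (0 + K) K -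
      Real.exp (-(lam * t)) * ((lam * t * p) ^ K / (K.factorial : ℝ)) *
        ((η₂ / (η₁ + η₂) * (lam * t * q)) ^ 0 / ((0:ℕ).factorial : ℝ)) = 0 := by
      simp [poisCoef, Pcoef, mul_pow]; ring
    rw [this, abs_zero]
    positivity
  rw [term_eq _ _ _ _ _ _ _ _ hm]
  obtain ⟨m, rfl⟩ : ∃ m', m = m' + 1 := ⟨m - 1, by omega⟩
  set r := η₁ / (η₁ + η₂) with hr
  set s := η₂ / (η₁ + η₂) with hs
  set a := lam * t * p with ha
  set b := lam * t * q with hb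
  have hr0 : 0 < r := by positivity
  have hs0 : 0 < s := by positivity
  have ha0 : 0 < a := by positivity
  have hb0 : 0 < b := by positivity
  rw [Finset.sum_range_succ']
  have e0 : ((m + 1 - 1).choose 0 : ℝ) * r ^ 0 * s ^ (m + 1 - 0) * (a ^ (K + 0) / ((K + 0).factorial : ℝ)) *
      (b ^ (m + 1 - 0) / ((m + 1 - 0).factorial : ℝ)) = (a ^ K / (K.factorial : ℝ)) *
        ((s * b) ^ (m+1) / ((m+1).factorial : ℝ)) := by
    simp [mul_pow]; ring
  rw [e0, mul_add, mul_assoc (Real.exp _) (a ^ K / _) , add_sub_cancel_right, abs_of_nonneg (by positivity), mul_assoc]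
  refine mul_le_mul_of_nonneg_left ?_ (Real.exp_pos _).le
  rw [mul_pow 2 (r * a + s * b), add_pow, Finset.mul_sum, Finset.sum_div, Finset.mul_sum,
    Finset.sum_range_succ' _ (m+1), Finset.sum_range_succ]
  have key : ∀ l ∈ Finset.range m, ((m + 1 - 1).choose (l+1) : ℝ) * r ^ (l+1) * s ^ (m + 1 - (l+1)) * (a ^ (K + (l+1)) / ((K + (l+1)).factorial : ℝ)) *
      (b ^ (m + 1 - (l+1)) / ((m + 1 - (l+1)).factorial : ℝ)) ≤
      a ^ K / ((K + 1).factorial : ℝ) *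
      (2 ^ (m + 1) * ((r * a) ^ (l + 1) * (s * b) ^ (m + 1 - (l + 1)) * ((m + 1).choose (l + 1) : ℝ)) / ((m + 1).factorial : ℝ)) := by
    intro l hl
    have hl' := Finset.mem_range.1 hl
    have hch : (((m+1).choose (l+1) : ℕ) : ℝ) = (m+1).factorial / ((l+1).factorial * (m + 1 - (l+1)).factorial) := by
      rw [Nat.cast_choose ℝ (by omega)]
    rw [hch]
    generalize (m + 1 - (l + 1)) = j
    have h1 : ((m + 1 - 1).choose (l+1) : ℝ) ≤ 2 ^ (m+1) := by
      calc ((m + 1 - 1).choose (l+1) : ℝ) ≤ 2 ^ m := by exact_mod_cast Nat.choose_le_two_pow _ _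
        _ ≤ 2 ^ (m+1) := pow_le_pow_right₀ (by norm_num) (by omega)
    have h2 : ((K+1).factorial * (l+1).factorial : ℝ) ≤ (K + (l+1)).factorial := by
      exact_mod_cast fact_aux K (l+1) hK (by omega)
    have h3 : (1:ℝ) / (K + (l+1)).factorial ≤ 1 / ((K+1).factorial * (l+1).factorial) :=
      one_div_le_one_div_of_le (by positivity) h2
    have hF : (0:ℝ) < (m+1).factorial := by positivity
    calc _ = (((m + 1 - 1).choose (l+1) : ℝ) * (1 / (K + (l+1)).factorial)) * (r ^ (l+1) * s ^ j * a ^ (K + (l+1)) * b ^ j / j.factorial) := by ring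
      _ ≤ (2 ^ (m+1) * (1 / ((K+1).factorial * (l+1).factorial))) * (r ^ (l+1) * s ^ j * a ^ (K + (l+1)) * b ^ j / j.factorial) := by
        gcongr
      _ = _ := by
        rw [mul_pow r a, mul_pow s b, pow_add a K]
        field_simp
  refine (Finset.sum_le_sum key).trans ?_
  rw [add_assoc]
  apply le_add_of_nonneg_right
  positivity

lemma S_bound (lam t η₁ η₂ p q : ℝ) (ht : 0 < t) (hlam : 0 < lam) (hη₁ : 0 < η₁) (hη₂ : 0 < η₂)
    (hp : 0 < p) (hq : 0 < q) : ∃ C : ℝ, 0 ≤ C ∧ ∀ K : ℕ, 1 ≤ K →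
    |(∑' m : ℕ, poisCoef lam t (m + K) * Pcoef η₁ η₂ p q (m + K) K) -
      Real.exp (η₂ * lam * t * q / (η₁ + η₂) - lam * t) * ((lam * t * p) ^ K / (K.factorial : ℝ))| ≤
      C * ((lam * t * p) ^ K / ((K+1).factorial : ℝ)) := by
  set w := 2 * (η₁ / (η₁ + η₂) * (lam * t * p) + η₂ / (η₁ + η₂) * (lam * t * q)) with hw
  refine ⟨Real.exp (-(lam * t)) * Real.exp w, by positivity, fun K hK => ?_⟩
  have hexp : ∀ x : ℝ, HasSum (fun n : ℕ => x ^ n / (n.factorial : ℝ)) (Real.exp x) := by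
    intro x
    rw [Real.exp_eq_exp_ℝ]
    exact NormedSpace.expSeries_div_hasSum_exp x
  have hb := fun m => term_bound lam t η₁ η₂ p q ht hlam hη₁ hη₂ hp hq m K hK
  rw [← hw] at hb
  have h1 := (hexp w).mul_left (Real.exp (-(lam * t)) * ((lam * t * p) ^ K / ((K+1).factorial : ℝ)))
  have h2 := (hexp (η₂ / (η₁ + η₂) * (lam * t * q))).mul_left (Real.exp (-(lam * t)) * ((lam * t * p) ^ K / ((K).factorial : ℝ)))
  have h3 := Summable.of_norm_bounded h1.summable (fun m => (Real.norm_eq_abs _).trans_le (hb m))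
  have h4 : Summable (fun m => poisCoef lam t (m + K) * Pcoef η₁ η₂ p q (m + K) K) := by
    refine (h3.add h2.summable).congr fun m => ?_
    ring
  have h5 := tsum_of_norm_bounded h1 (fun m => (Real.norm_eq_abs _).trans_le (hb m))
  rw [h4.tsum_sub h2.summable, h2.tsum_eq, Real.norm_eq_abs] at h5
  have e : Real.exp (η₂ * lam * t * q / (η₁ + η₂) - lam * t) = Real.exp (-(lam * t)) * Real.exp (η₂ / (η₁ + η₂) * (lam * t * q)) := by
    rw [← Real.exp_add]; congr 1; ring
  rw [e]
  convert h5 using 1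
  · congr 2; ring
  · ring

lemma hasSum_congr_aux {f g : ℕ → ℝ} {a : ℝ} (h : ∀ k, f k = g k) : HasSum f a ↔ HasSum g a := by
  rw [funext h]

lemma moment_trig (k : ℕ) : ∫ s in (-1:ℝ)..1, Real.sqrt (1 - s^2) * s^(2*k) =
    (∫ x in (0:ℝ)..Real.pi, Real.cos x ^ (2*k)) - ∫ x in (0:ℝ)..Real.pi, Real.cos x ^ (2*k+2) := by
  have h := intervalIntegral.integral_comp_mul_deriv (a := 0) (b := Real.pi) (f := Real.cos)
    (f' := fun x => - Real.sin x) (g := fun s => Real.sqrt (1 - s^2) * s^(2*k))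
    (fun x _ => Real.hasDerivAt_cos x) (by fun_prop) (by fun_prop)
  rw [Real.cos_zero, Real.cos_pi, intervalIntegral.integral_symm (-1) 1] at h
  have h' := neg_eq_iff_eq_neg.2 h
  rw [← h', ← intervalIntegral.integral_neg,
    ← intervalIntegral.integral_sub (Continuous.intervalIntegrable (by fun_prop) _ _)
      (Continuous.intervalIntegrable (by fun_prop) _ _)]
  refine intervalIntegral.integral_congr fun x hx => ?_
  rw [Set.uIcc_of_le Real.pi_pos.le] at hx
  have hs := Real.sin_nonneg_of_mem_Icc hx
  have h1 : Real.sqrt (1 - Real.cos x ^ 2) = Real.sin x := by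
    rw [← Real.sin_sq, Real.sqrt_sq hs]
  simp only [Function.comp, h1]
  have := Real.sin_sq x
  rw [pow_add]
  linear_combination (Real.cos x ^ (2*k)) * this

lemma wallis_cos (k : ℕ) : (∫ x in (0:ℝ)..Real.pi, Real.cos x ^ (2*k)) =
    Real.pi * (2*k).factorial / (4^k * k.factorial * k.factorial) := by
  induction k with
  | zero => simp
  | succ k ih =>
    rw [show 2 * (k+1) = 2*k+2 by ring, integral_cos_pow, ih]
    simp only [Real.sin_pi, Real.sin_zero, Nat.factorial_succ]
    push_cast
    have : (k.factorial : ℝ) ≠ 0 := by positivity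
    field_simp
    ring

lemma moment (k : ℕ) : ∫ s in (-1:ℝ)..1, Real.sqrt (1 - s^2) * s^(2*k) =
    Real.pi / 2 * ((2*k).factorial / (4^k * k.factorial * (k+1).factorial)) := by
  rw [moment_trig, show 2*k+2 = 2*(k+1) by ring, wallis_cos, wallis_cos, show 2*(k+1) = 2*k+2 by ring]
  simp only [Nat.factorial_succ]
  push_cast
  have : (k.factorial : ℝ) ≠ 0 := by positivity
  field_simp
  ring

lemma hasSum_int (f : ℝ → ℝ) (hf : Continuous f) (heven : ∀ s, f (-s) = f s) (z : ℝ) :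
    HasSum (fun k : ℕ => z^(2*k) / (2*k).factorial * ∫ s in (-1:ℝ)..1, f s * s^(2*k))
      (∫ s in (-1:ℝ)..1, f s * Real.exp (z * s)) := by
  have e : (∫ s in (-1:ℝ)..1, f s * Real.exp (z * s)) = ∫ s in (-1:ℝ)..1, f s * Real.cosh (z * s) := by
    have h1 : (∫ s in (-1:ℝ)..1, f s * Real.exp (z * s)) = ∫ s in (-1:ℝ)..1, f s * Real.exp (-(z * s)) := by
      have := intervalIntegral.integral_comp_neg (a := -1) (b := 1) (fun s => f s * Real.exp (z * s))
      rw [neg_neg] at this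
      rw [← this]
      refine intervalIntegral.integral_congr fun x _ => ?_
      simp [heven]
    have h2 : (∫ s in (-1:ℝ)..1, f s * Real.cosh (z * s)) = 
       ∫ s in (-1:ℝ)..1, ((1/2) * (f s * Real.exp (z * s)) + (1/2) * (f s * Real.exp (-(z * s)))) := by
      refine intervalIntegral.integral_congr fun x _ => ?_
      simp only [Real.cosh_eq]; ring
    rw [h2, intervalIntegral.integral_add (Continuous.intervalIntegrable (by fun_prop) _ _)
      (Continuous.intervalIntegrable (by fun_prop) _ _), intervalIntegral.integral_const_mul,
      intervalIntegral.integral_const_mul, ← h1]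
    ring
  rw [e]
  have hs : ∀ s : ℝ, HasSum (fun k : ℕ => |f s| * ((|z| * |s|)^(2*k) / (2*k).factorial)) (|f s| * Real.cosh (|z| * |s|)) :=
    fun s => (Real.hasSum_cosh _).mul_left _
  have := intervalIntegral.hasSum_integral_of_dominated_convergence (a := -1) (b := 1) (μ := volume)
    (F := fun (k : ℕ) s => f s * ((z * s)^(2*k) / (2*k).factorial))
    (f := fun s => f s * Real.cosh (z * s))
    (fun (k : ℕ) s => |f s| * ((|z| * |s|)^(2*k) / (2*k).factorial))
    (fun n => (Continuous.aestronglyMeasurable (by fun_prop)))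
    (fun n => Filter.Eventually.of_forall fun s _ => by
      simp)
    (Filter.Eventually.of_forall fun s _ => (hs s).summable)
    (by
      simp_rw [fun s => (hs s).tsum_eq]
      have := Real.continuous_cosh
      exact Continuous.intervalIntegrable (by fun_prop) _ _)
    (Filter.Eventually.of_forall fun s _ => (Real.hasSum_cosh _).mul_left _)
  refine (hasSum_congr_aux fun k => ?_).2 this
  rw [← intervalIntegral.integral_const_mul]
  congr 1
  ext s
  rw [mul_pow]; ring

lemma hasSum_F1 (z : ℝ) : HasSum (fun k : ℕ => (z^2/4)^k / (k.factorial * (k+1).factorial))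
    (2 / Real.pi * ∫ s in (-1:ℝ)..1, Real.sqrt (1 - s^2) * Real.exp (z * s)) := by
  refine (hasSum_congr_aux fun k => ?_).2 ((hasSum_int (fun s => Real.sqrt (1 - s^2)) (by fun_prop) (by simp) z).mul_left (2/Real.pi))
  rw [moment]
  have : (k.factorial : ℝ) ≠ 0 := by positivity
  have : ((k+1).factorial : ℝ) ≠ 0 := by positivity
  have : ((2*k).factorial : ℝ) ≠ 0 := by positivity
  have := Real.pi_ne_zero
  rw [div_pow, ← pow_mul]
  field_simp

lemma hasSum_F2 (z : ℝ) : HasSum (fun k : ℕ => (z^2/4)^k / (k.factorial * (k+2).factorial))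
    (4 / (3 * Real.pi) * ∫ s in (-1:ℝ)..1, (1 - s^2) * Real.sqrt (1 - s^2) * Real.exp (z * s)) := by
  refine (hasSum_congr_aux fun k => ?_).2 ((hasSum_int (fun s => (1-s^2) * Real.sqrt (1 - s^2)) (by fun_prop) (by simp) z).mul_left (4 / (3 * Real.pi)))
  have e : ∫ s in (-1:ℝ)..1, (1 - s^2) * Real.sqrt (1 - s^2) * s^(2*k) =
    (∫ s in (-1:ℝ)..1, Real.sqrt (1 - s^2) * s^(2*k)) - ∫ s in (-1:ℝ)..1, Real.sqrt (1 - s^2) * s^(2*(k+1)) := by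
    rw [← intervalIntegral.integral_sub (Continuous.intervalIntegrable (by fun_prop) _ _)
      (Continuous.intervalIntegrable (by fun_prop) _ _)]
    congr 1; ext s; ring
  rw [e, moment, moment, show 2*(k+1) = 2*k+2 by ring]
  simp only [Nat.factorial_succ]
  push_cast
  have : (k.factorial : ℝ) ≠ 0 := by positivity
  have : ((2*k).factorial : ℝ) ≠ 0 := by positivity
  have := Real.pi_ne_zero
  rw [div_pow, ← pow_mul]
  field_simp
  ring

lemma shift (g : ℝ → ℝ) (z : ℝ) : ∫ s in (-1:ℝ)..1, g (1 - s) * Real.exp (z * s) =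
    Real.exp z * ∫ v in (0:ℝ)..2, g v * Real.exp (-(z * v)) := by
  have := intervalIntegral.integral_comp_sub_left (a := -1) (b := 1) (fun v => g v * Real.exp (z * (1 - v))) 1
  norm_num at this
  rw [this, ← intervalIntegral.integral_const_mul]
  congr 1; ext v
  rw [mul_left_comm, ← Real.exp_add]; congr 2; ring

lemma gam_int (z a : ℝ) (hz : 0 < z) (ha : 0 < a) :
    IntegrableOn (fun v : ℝ => v ^ (a - 1) * Real.exp (-(z * v))) (Set.Ioi 0) := by
  have := integrableOn_rpow_mul_exp_neg_mul_rpow (p := 1) (s := a - 1) (b := z) (by linarith) one_pos hz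
  simpa using this

lemma g32 : Real.Gamma (3/2) = Real.sqrt Real.pi / 2 := by
  rw [show (3/2:ℝ) = 1/2 + 1 by norm_num, Real.Gamma_add_one (by norm_num), Real.Gamma_one_half_eq]; ring

lemma g52 : Real.Gamma (5/2) = 3 * Real.sqrt Real.pi / 4 := by
  rw [show (5/2:ℝ) = 3/2 + 1 by norm_num, Real.Gamma_add_one (by norm_num), g32]; ring

lemma I1_asymp (z : ℝ) (hz : 0 < z) :
    |(∫ s in (-1:ℝ)..1, Real.sqrt (1 - s^2) * Real.exp (z * s)) -
      Real.exp z * (Real.sqrt 2 * (1/z)^(3/2:ℝ) * (Real.sqrt Real.pi / 2))| ≤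
    Real.exp z * ((1/z)^(5/2:ℝ) * (3 * Real.sqrt Real.pi / 4)) := by
  have e1 : (∫ s in (-1:ℝ)..1, Real.sqrt (1 - s^2) * Real.exp (z * s)) =
      Real.exp z * ∫ v in Set.Ioi (0:ℝ), Real.sqrt v * Real.sqrt (2 - v) * Real.exp (-(z * v)) := by
    have := shift (fun v => Real.sqrt (v * (2 - v))) z
    have e : ∀ s : ℝ, (1 - s) * (2 - (1 - s)) = 1 - s^2 := fun s => by ring
    simp only [e] at this
    rw [this, intervalIntegral.integral_of_le (by norm_num)]
    congr 1
    rw [setIntegral_eq_of_subset_of_forall_sdiff_eq_zero measurableSet_Ioi (s := Set.Ioc 0 2)]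
    · refine setIntegral_congr_fun measurableSet_Ioc fun v hv => ?_
      simp only [Real.sqrt_mul hv.1.le]
    · exact fun v hv => hv.1
    · intro v hv
      have : 2 - v ≤ 0 := by
        by_contra hc
        exact hv.2 ⟨hv.1, by linarith⟩
      simp [Real.sqrt_eq_zero_of_nonpos this]
  have i1 := gam_int z (3/2) hz (by norm_num)
  have i2 := gam_int z (5/2) hz (by norm_num)
  have v1 := Real.integral_rpow_mul_exp_neg_mul_Ioi (a := 3/2) (r := z) (by norm_num) hz
  have v2 := Real.integral_rpow_mul_exp_neg_mul_Ioi (a := 5/2) (r := z) (by norm_num) hz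
  rw [g32] at v1
  rw [g52] at v2
  have bnd : ∀ v ∈ Set.Ioi (0:ℝ), ‖Real.sqrt v * Real.sqrt (2 - v) * Real.exp (-(z * v)) - 
     Real.sqrt 2 * (v ^ (3/2 - 1 : ℝ) * Real.exp (-(z * v)))‖ ≤ v ^ (5/2 - 1 : ℝ) * Real.exp (-(z * v)) := by
    intro v hv
    have hv' : 0 < v := hv
    have a1 : v ^ (3/2 - 1 : ℝ) = Real.sqrt v := by rw [Real.sqrt_eq_rpow]; norm_num
    have a2 : v ^ (5/2 - 1 : ℝ) = v * Real.sqrt v := by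
      rw [Real.sqrt_eq_rpow, ← Real.rpow_one_add' hv'.le (by norm_num)]; norm_num
    rw [a1, a2]
    have hk : |Real.sqrt (2 - v) - Real.sqrt 2| ≤ v := by
      have h2 : (1:ℝ) ≤ Real.sqrt 2 := Real.one_le_sqrt.2 (by norm_num)
      have h2' := Real.sq_sqrt (show (0:ℝ) ≤ 2 by norm_num)
      have h0 := Real.sqrt_nonneg (2 - v)
      have hle : Real.sqrt (2 - v) ≤ Real.sqrt 2 := Real.sqrt_le_sqrt (by linarith)
      rw [abs_of_nonpos (by linarith)]
      rcases le_total v 2 with h | h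
      · have h3 := Real.sq_sqrt (show (0:ℝ) ≤ 2 - v by linarith)
        nlinarith
      · nlinarith
    have : Real.sqrt v * Real.sqrt (2 - v) * Real.exp (-(z * v)) - 
     Real.sqrt 2 * (Real.sqrt v * Real.exp (-(z * v))) = (Real.sqrt (2 - v) - Real.sqrt 2) * (Real.sqrt v * Real.exp (-(z*v))) := by ring
    rw [this, norm_mul, Real.norm_of_nonneg (by positivity : 0 ≤ Real.sqrt v * Real.exp (-(z*v))), Real.norm_eq_abs, mul_assoc]
    gcongr
  have bnd' := (ae_restrict_iff' (μ := (volume : Measure ℝ)) measurableSet_Ioi).2 (Filter.Eventually.of_forall bnd)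
  have i3 : IntegrableOn (fun v : ℝ => Real.sqrt v * Real.sqrt (2 - v) * Real.exp (-(z * v))) (Set.Ioi 0) := by
    have i4 : IntegrableOn (fun v : ℝ => Real.sqrt v * Real.sqrt (2 - v) * Real.exp (-(z * v)) - 
     Real.sqrt 2 * (v ^ (3/2 - 1 : ℝ) * Real.exp (-(z * v)))) (Set.Ioi 0) := by
      refine Integrable.mono' i2 ?_ bnd'
      exact AEStronglyMeasurable.sub (Continuous.aestronglyMeasurable (by fun_prop)) (i1.const_mul _).aestronglyMeasurable
    refine (i4.add (i1.const_mul (Real.sqrt 2))).congr (Filter.Eventually.of_forall fun v => ?_)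
    simp
  have hn := norm_integral_le_of_norm_le i2 bnd'
  rw [integral_sub i3 (i1.const_mul _), integral_const_mul, v1, v2, Real.norm_eq_abs] at hn
  rw [e1, ← mul_sub, abs_mul, abs_of_pos (Real.exp_pos z), mul_assoc]
  exact mul_le_mul_of_nonneg_left hn (Real.exp_pos z).le

lemma I2_bound (z : ℝ) (hz : 0 < z) :
    (∫ s in (-1:ℝ)..1, (1 - s^2) * Real.sqrt (1 - s^2) * Real.exp (z * s)) ≤
    Real.exp z * (4 * ((1/z)^(5/2:ℝ) * (3 * Real.sqrt Real.pi / 4))) := by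
  have := shift (fun v => (v * (2 - v)) * Real.sqrt (v * (2 - v))) z
  have e : ∀ s : ℝ, (1 - s) * (2 - (1 - s)) = 1 - s^2 := fun s => by ring
  simp only [e] at this
  rw [this]
  refine mul_le_mul_of_nonneg_left ?_ (Real.exp_pos z).le
  have i2 := gam_int z (5/2) hz (by norm_num)
  have v2 := Real.integral_rpow_mul_exp_neg_mul_Ioi (a := 5/2) (r := z) (by norm_num) hz
  rw [g52] at v2
  rw [← v2, ← integral_const_mul, intervalIntegral.integral_of_le (by norm_num)]
  calc _ ≤ ∫ v in Set.Ioc (0:ℝ) 2, 4 * (v ^ (5/2 - 1 : ℝ) * Real.exp (-(z * v))) := by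
        refine setIntegral_mono_on (Continuous.integrableOn_Ioc (by fun_prop))
          (IntegrableOn.mono_set (i2.const_mul 4) (fun v hv => hv.1)) measurableSet_Ioc fun v hv => ?_
        have hv' : 0 < v := hv.1
        have a2 : v ^ (5/2 - 1 : ℝ) = v * Real.sqrt v := by
          rw [Real.sqrt_eq_rpow, ← Real.rpow_one_add' hv'.le (by norm_num)]; norm_num
        rw [a2, Real.sqrt_mul hv'.le]
        have h2 : Real.sqrt (2 - v) ≤ 2 := by
          rw [Real.sqrt_le_left (by norm_num)]; linarith
        have h3 : (2 - v) * Real.sqrt (2 - v) ≤ 4 := by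
          nlinarith [hv.2, Real.sqrt_nonneg (2-v)]
        calc _ = ((2 - v) * Real.sqrt (2 - v)) * (v * Real.sqrt v * Real.exp (-(z*v))) := by ring
          _ ≤ 4 * (v * Real.sqrt v * Real.exp (-(z*v))) := by gcongr
    _ ≤ _ := by
        refine setIntegral_mono_set (i2.const_mul 4) ?_ (Filter.Eventually.of_forall (fun v hv => hv.1))
        refine (ae_restrict_iff' measurableSet_Ioi).2 (Filter.Eventually.of_forall fun v hv => ?_)
        have hv' : 0 < v := hv
        simp only [Pi.zero_apply]
        positivity

lemma G1_bound (lam t η₁ η₂ p q : ℝ) (ht : 0 < t) (hlam : 0 < lam) (hη₁ : 0 < η₁) (hη₂ : 0 < η₂)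
    (hp : 0 < p) (hq : 0 < q) : ∃ C : ℝ, 0 ≤ C ∧ ∀ u z : ℝ, 0 < u →
      z ^ 2 / 4 = (η₁ * lam * t * p) * u →
    |G1 lam t η₁ η₂ p q u - Real.exp (η₂ * lam * t * q / (η₁ + η₂) - lam * t) * (η₁ * lam * t * p) *
      (2 / Real.pi * ∫ s in (-1:ℝ)..1, Real.sqrt (1 - s^2) * Real.exp (z * s))| ≤
      C * (4 / (3 * Real.pi) *
        ∫ s in (-1:ℝ)..1, (1 - s^2) * Real.sqrt (1 - s^2) * Real.exp (z * s)) := by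
  obtain ⟨C, hC, hb⟩ := S_bound lam t η₁ η₂ p q ht hlam hη₁ hη₂ hp hq
  refine ⟨C * (η₁ * lam * t * p), by positivity, fun u z hu hz => ?_⟩
  set A := Real.exp (η₂ * lam * t * q / (η₁ + η₂) - lam * t) with hA
  have h1 := (hasSum_F1 z).mul_left (A * (η₁ * lam * t * p))
  have h2 := (hasSum_F2 z).mul_left (C * (η₁ * lam * t * p))
  rw [hz] at h1 h2
  have key : ∀ k : ℕ, ‖aCoef lam t η₁ η₂ p q k * u ^ k -
      A * (η₁ * lam * t * p) * ((η₁ * lam * t * p * u) ^ k / (k.factorial * (k+1).factorial))‖ ≤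
      C * (η₁ * lam * t * p) * ((η₁ * lam * t * p * u) ^ k / (k.factorial * (k+2).factorial)) := by
    intro k
    have hk := hb (k+1) (by omega)
    unfold aCoef
    set S := ∑' m : ℕ, poisCoef lam t (m + (k + 1)) * Pcoef η₁ η₂ p q (m + (k + 1)) (k + 1)
    have e1 : η₁ ^ (k + 1) / (k.factorial : ℝ) * S * u ^ k -
        A * (η₁ * lam * t * p) * ((η₁ * lam * t * p * u) ^ k / (k.factorial * (k+1).factorial)) =
        (η₁ ^ (k + 1) / (k.factorial : ℝ) * u ^ k) *
          (S - A * ((lam * t * p) ^ (k+1) / ((k+1).factorial : ℝ))) := by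
      have e : η₁ * lam * t * p * u = η₁ * (lam * t * p) * u := by ring
      rw [e, mul_pow (η₁ * (lam * t * p)), mul_pow η₁, pow_succ, pow_succ (lam * t * p)]
      have : (k.factorial : ℝ) ≠ 0 := by positivity
      have : ((k+1).factorial : ℝ) ≠ 0 := by positivity
      field_simp
    have e2 : C * (η₁ * lam * t * p) * ((η₁ * lam * t * p * u) ^ k / (k.factorial * (k+2).factorial)) =
        (η₁ ^ (k + 1) / (k.factorial : ℝ) * u ^ k) *
          (C * ((lam * t * p) ^ (k+1) / ((k+1+1).factorial : ℝ))) := by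
      have e : η₁ * lam * t * p * u = η₁ * (lam * t * p) * u := by ring
      rw [e, mul_pow (η₁ * (lam * t * p)), mul_pow η₁, pow_succ, pow_succ (lam * t * p)]
      have : (k.factorial : ℝ) ≠ 0 := by positivity
      have : ((k+2).factorial : ℝ) ≠ 0 := by positivity
      rw [show k + 1 + 1 = k + 2 by ring]
      field_simp
    rw [e1, e2, norm_mul, Real.norm_eq_abs (S - _), Real.norm_of_nonneg (by positivity)]
    exact mul_le_mul_of_nonneg_left hk (by positivity)
  have h3 := Summable.of_norm_bounded h2.summable key
  have h4 : Summable (fun k => aCoef lam t η₁ η₂ p q k * u ^ k) := by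
    refine (h3.add h1.summable).congr fun m => ?_
    ring
  have h5 := tsum_of_norm_bounded h2 key
  rw [h4.tsum_sub h1.summable, h1.tsum_eq, Real.norm_eq_abs] at h5
  exact h5

lemma rpow_z (c u z e : ℝ) (hc : 0 < c) (hu : 0 < u) (hz : z = 2 * Real.sqrt c * Real.sqrt u) :
    (1 / z) ^ e = 2 ^ (-e) * c ^ (-(e / 2)) * u ^ (-(e / 2)) := by
  have hz0 : 0 < z := by rw [hz]; positivity
  rw [one_div, Real.inv_rpow hz0.le, ← Real.rpow_neg hz0.le, hz, Real.mul_rpow (by positivity) (by positivity),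
    Real.mul_rpow (by positivity) (by positivity), Real.sqrt_eq_rpow, Real.sqrt_eq_rpow,
    ← Real.rpow_mul hc.le, ← Real.rpow_mul hu.le]
  congr 2
  · congr 2; ring
  · ring

/-- Theorem: asymptotic behavior of `H₁(t,x)` as `x → ∞`:
`H₁(t,x) = (1/(2√π)) (η₁λtp)^{1/4} exp{η₂λtq/(η₁+η₂) − λt} (log x)^{−3/4}`
`· exp{2√(η₁λtp) √(log x)} (1 + O((log x)^{−1/2}))` as `x → ∞`. -/
theorem H1_asymptotics_at_infinity
    (t lam η₁ η₂ p q : ℝ)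
    (ht : 0 < t) (hlam : 0 < lam) (hη₁ : 1 < η₁) (hη₂ : 0 < η₂)
    (hp : 0 < p) (hq : 0 < q) (hpq : p + q = 1) :
    (fun x => H1fun lam t η₁ η₂ p q x -
        1 / (2 * Real.sqrt Real.pi) * (η₁ * lam * t * p) ^ ((1:ℝ)/4) *
          Real.exp (η₂ * lam * t * q / (η₁ + η₂) - lam * t) *
          (Real.log x) ^ (-(3:ℝ)/4) *
          Real.exp (2 * Real.sqrt (η₁ * lam * t * p) * Real.sqrt (Real.log x)))
      =O[atTop]
      (fun x =>
        1 / (2 * Real.sqrt Real.pi) * (η₁ * lam * t * p) ^ ((1:ℝ)/4) *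
          Real.exp (η₂ * lam * t * q / (η₁ + η₂) - lam * t) *
          (Real.log x) ^ (-(3:ℝ)/4) *
          Real.exp (2 * Real.sqrt (η₁ * lam * t * p) * Real.sqrt (Real.log x)) *
          (Real.log x) ^ (-(1:ℝ)/2)) := by
  set c := η₁ * lam * t * p with hcdef
  have hη0 : 0 < η₁ := by linarith
  have hc : 0 < c := by positivity
  obtain ⟨C, hC, hG⟩ := G1_bound lam t η₁ η₂ p q ht hlam hη0 hη₂ hp hq
  rw [← hcdef] at hG
  set A := Real.exp (η₂ * lam * t * q / (η₁ + η₂) - lam * t) with hA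
  have hA0 : 0 < A := Real.exp_pos _
  have hpi := Real.pi_pos
  set M := 1 / (2 * Real.sqrt Real.pi) * c ^ ((1:ℝ)/4) * A with hM
  have hM0 : 0 < M := by positivity
  set D := A * c * (2 / Real.pi) * (3 * Real.sqrt Real.pi / 4) +
    C * (4 / (3 * Real.pi)) * (4 * (3 * Real.sqrt Real.pi / 4)) with hD
  set E := (2:ℝ) ^ (-(5/2:ℝ)) * c ^ (-((5/2:ℝ) / 2)) with hE
  refine IsBigO.of_bound (D * E / M) ?_
  filter_upwards [eventually_gt_atTop 1] with x hx
  have hu : 0 < Real.log x := Real.log_pos hx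
  unfold H1fun
  set u := Real.log x with hudef
  set z := 2 * Real.sqrt c * Real.sqrt u with hz
  have hz0 : 0 < z := by positivity
  have hzz : z ^ 2 / 4 = c * u := by
    rw [hz, mul_pow, mul_pow, Real.sq_sqrt hc.le, Real.sq_sqrt hu.le]; ring
  have b1 := hG u z hu hzz
  have b2 := I1_asymp z hz0
  have b3 := I2_bound z hz0
  set I1 := ∫ s in (-1:ℝ)..1, Real.sqrt (1 - s^2) * Real.exp (z * s)
  set I2 := ∫ s in (-1:ℝ)..1, (1 - s^2) * Real.sqrt (1 - s^2) * Real.exp (z * s)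
  have main : M * u ^ (-(3:ℝ)/4) * Real.exp z =
      A * c * (2 / Real.pi * (Real.exp z * (Real.sqrt 2 * (1/z)^(3/2:ℝ) * (Real.sqrt Real.pi / 2)))) := by
    rw [rpow_z c u z _ hc hu hz, hM, show (-(3:ℝ)/4) = -(3/2/2) by norm_num]
    have c1 : c ^ ((1:ℝ)/4) = c * c ^ (-(3/2/2:ℝ)) := by
      rw [← Real.rpow_one_add' hc.le (by norm_num)]; norm_num
    have c2 : (2:ℝ) ^ (-(3/2:ℝ)) = 1 / (2 * Real.sqrt 2) := by
      rw [Real.rpow_neg (by norm_num), show (3/2:ℝ) = 1 + 1/2 by norm_num,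
        Real.rpow_add (by norm_num), Real.rpow_one, ← Real.sqrt_eq_rpow, one_div]
    have c3 : Real.sqrt Real.pi / Real.pi = 1 / Real.sqrt Real.pi := by
      rw [Real.sqrt_div_self', ]
    rw [c1, c2]
    have : Real.sqrt 2 ≠ 0 := by positivity
    calc _ = (1 / Real.sqrt Real.pi) * (1/2 * c * c ^ (-(3/2/2:ℝ)) * A * u ^ (-(3/2/2:ℝ)) * Real.exp z) := by
          have : Real.sqrt Real.pi ≠ 0 := by positivity
          field_simp
      _ = _ := by
          rw [← c3]
          field_simp
  have err : (1/z)^(5/2:ℝ) = E * (u ^ (-(3:ℝ)/4) * u ^ (-(1:ℝ)/2)) := by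
    rw [rpow_z c u z _ hc hu hz, hE, ← Real.rpow_add hu]
    norm_num
  rw [main]
  have t1 : |A * c * (2 / Real.pi * I1) -
      A * c * (2 / Real.pi * (Real.exp z * (Real.sqrt 2 * (1/z)^(3/2:ℝ) * (Real.sqrt Real.pi / 2))))| ≤
      A * c * (2 / Real.pi) * (Real.exp z * ((1/z)^(5/2:ℝ) * (3 * Real.sqrt Real.pi / 4))) := by
    rw [← mul_sub, ← mul_sub, ← mul_assoc, abs_mul, abs_of_nonneg (by positivity)]
    exact mul_le_mul_of_nonneg_left b2 (by positivity)
  have t2 : C * (4 / (3 * Real.pi) * I2) ≤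
      C * (4 / (3 * Real.pi) * (Real.exp z * (4 * ((1/z)^(5/2:ℝ) * (3 * Real.sqrt Real.pi / 4))))) := by
    gcongr
  have t3 := abs_sub_le (G1 lam t η₁ η₂ p q u) (A * c * (2 / Real.pi * I1))
    (A * c * (2 / Real.pi * (Real.exp z * (Real.sqrt 2 * (1/z)^(3/2:ℝ) * (Real.sqrt Real.pi / 2)))))
  rw [Real.norm_eq_abs, ← main, Real.norm_of_nonneg (by positivity), main]
  calc _ ≤ D * (Real.exp z * (1/z)^(5/2:ℝ)) := by
        refine (t3.trans (add_le_add (b1.trans t2) t1)).trans (le_of_eq ?_)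
        rw [hD]; ring
    _ = _ := by
        rw [err, ← main]
        field_simp
end

section
/- Let t > 0, λ > 0, η₁ > 1, η₂ > 0, and p, q > 0 with p + q = 1. Then H₂(t,x) = (1/(2√π))·(η₂λtq)^{1/4}·exp{η₁λtp/(η₁+η₂) − λt}·(log(1/x))^{−3/4}·exp{2√(η₂λtq)·√(log(1/x))}·(1 + O((log(1/x))^{−1/2})) as x → 0. -/
open Filter Asymptotics MeasureTheory

lemma hk_fact (K j : ℕ) (hj : 1 ≤ j) : (K+1).factorial * j.factorial ≤ (K+j).factorial := by
  induction j, hj using Nat.le_induction with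
  | base => simp
  | succ n hn ih =>
    rw [← add_assoc, Nat.factorial_succ (K+n), Nat.factorial_succ n]
    calc (K+1).factorial * ((n+1) * n.factorial) = (n+1) * ((K+1).factorial * n.factorial) := by ring
      _ ≤ (K+n+1) * (K+n).factorial := Nat.mul_le_mul (by omega) ih

noncomputable def hkS1 (w : ℝ) : ℝ := ∑' k : ℕ, w ^ k / ((k.factorial : ℝ) * ((k+1).factorial : ℝ))
noncomputable def hkS2 (w : ℝ) : ℝ := ∑' k : ℕ, w ^ k / ((k.factorial : ℝ) * ((k+2).factorial : ℝ))

lemma hkS_summable (a : ℕ) {w : ℝ} (hw : 0 ≤ w) :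
    Summable (fun k : ℕ => w ^ k / ((k.factorial : ℝ) * ((k+a).factorial : ℝ))) := by
  refine Summable.of_nonneg_of_le (fun k => by positivity) (fun k => ?_) (Real.summable_pow_div_factorial w)
  have h1 : (1:ℝ) ≤ ((k+a).factorial : ℝ) := by exact_mod_cast Nat.one_le_iff_ne_zero.2 (Nat.factorial_ne_zero _)
  have h2 : (0:ℝ) < (k.factorial : ℝ) := by exact_mod_cast Nat.factorial_pos _
  gcongr
  nlinarith

lemma hkS2_le {w : ℝ} (hw : 0 ≤ w) : Real.sqrt w * hkS2 w ≤ hkS1 w := by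
  have hs := hkS_summable 1 hw
  have hs2 := hkS_summable 2 hw
  have hs' := (summable_nat_add_iff 1).2 hs
  have key : ∀ k : ℕ, Real.sqrt w * (w ^ k / ((k.factorial : ℝ) * ((k+2).factorial : ℝ))) ≤
      (1/2) * (w ^ k / ((k.factorial : ℝ) * ((k+1).factorial : ℝ))) +
      (1/2) * (w ^ (k+1) / (((k+1).factorial : ℝ) * ((k+1+1).factorial : ℝ))) := by
    intro k
    have e1 : ((k+2).factorial : ℝ) = (k+2) * ((k+1) * (k.factorial : ℝ)) := by
      rw [Nat.factorial_succ, Nat.factorial_succ]; push_cast; ring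
    have e2 : ((k+1).factorial : ℝ) = ((k+1) * (k.factorial : ℝ)) := by
      rw [Nat.factorial_succ]; push_cast; ring
    have h2 : (0:ℝ) < (k.factorial : ℝ) := by exact_mod_cast Nat.factorial_pos _
    rw [show k+1+1 = k+2 from rfl, e1, e2]
    set s := Real.sqrt w with hs
    have hss : s * s = w := Real.mul_self_sqrt hw
    have hs0 : 0 ≤ s := Real.sqrt_nonneg w
    have h0 : 0 ≤ w ^ k / ((k.factorial : ℝ) * (k.factorial : ℝ) * ((k+1)*(k+1)*(k+2))) := by positivity
    have hk : (0:ℝ) ≤ k := by positivity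
    have h3 : 0 ≤ (1/2) * ((k+1)*(k+2) + w) - s * (k+1) := by
      nlinarith [sq_nonneg (s - (k+1))]
    have h4 := mul_nonneg h0 h3
    have h5 : w ^ k / ((k.factorial : ℝ) * (k.factorial : ℝ) * ((k+1)*(k+1)*(k+2))) * ((1/2) * ((k+1)*(k+2) + w) - s * (k+1)) =
      (1/2) * (w ^ k / ((k.factorial : ℝ) * ((k+1) * (k.factorial : ℝ)))) +
      (1/2) * (w ^ (k+1) / (((k+1) * (k.factorial : ℝ)) * ((k+2) * ((k+1) * (k.factorial : ℝ)))))
      - s * (w ^ k / ((k.factorial : ℝ) * ((k+2) * ((k+1) * (k.factorial : ℝ))))) := by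
      field_simp
      ring
    linarith
  unfold hkS1 hkS2
  rw [← tsum_mul_left]
  refine (Summable.tsum_le_tsum key (hs2.mul_left _) ((hs.mul_left _).add (hs'.mul_left _))).trans ?_
  rw [Summable.tsum_add (hs.mul_left _) (hs'.mul_left _), tsum_mul_left, tsum_mul_left]
  have := hs.tsum_eq_zero_add
  simp only [pow_zero, zero_add, Nat.factorial_zero, Nat.factorial_one] at this
  norm_num at this
  linarith

lemma hk_cos (n : ℕ) : ∫ x in (0:ℝ)..Real.pi, Real.cos x ^ (n+2) =
    (n+1)/(n+2) * ∫ x in (0:ℝ)..Real.pi, Real.cos x ^ n := by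
  rw [integral_cos_pow]; simp

lemma hk_cos_odd (k : ℕ) : ∫ x in (0:ℝ)..Real.pi, Real.cos x ^ (2*k+1) = 0 := by
  induction k with
  | zero => simp
  | succ k ih => rw [show 2*(k+1)+1 = (2*k+1)+2 by ring, hk_cos, ih, mul_zero]

lemma hk_cos_even (k : ℕ) : ∫ x in (0:ℝ)..Real.pi, Real.cos x ^ (2*k) =
    Real.pi * ((2*k).factorial : ℝ) / (4^k * (k.factorial : ℝ)^2) := by
  induction k with
  | zero => simp
  | succ k ih =>
    rw [show 2*(k+1) = (2*k)+2 by ring, hk_cos, ih, Nat.factorial_succ (2*k+1), Nat.factorial_succ (2*k), Nat.factorial_succ k]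
    have h2 : (k.factorial : ℝ) ≠ 0 := by exact_mod_cast Nat.factorial_ne_zero _
    push_cast
    field_simp
    ring

lemma hk_mom (n : ℕ) : ∫ x in (0:ℝ)..Real.pi, Real.cos x ^ n * Real.sin x ^ 2 =
    1 / (n+2) * ∫ x in (0:ℝ)..Real.pi, Real.cos x ^ n := by
  have : ∀ x : ℝ, Real.cos x ^ n * Real.sin x ^ 2 = Real.cos x ^ n - Real.cos x ^ (n+2) := by
    intro x; rw [Real.sin_sq]; ring
  simp_rw [this]
  rw [intervalIntegral.integral_sub (Continuous.intervalIntegrable (by fun_prop) _ _) (Continuous.intervalIntegrable (by fun_prop) _ _), hk_cos]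
  have : (n:ℝ) + 2 ≠ 0 := by positivity
  field_simp
  ring

lemma hk_series (y : ℝ) : HasSum (fun n : ℕ => ∫ x in (0:ℝ)..Real.pi, y ^ n / (n.factorial : ℝ) * (Real.cos x ^ n * Real.sin x ^ 2))
    (∫ x in (0:ℝ)..Real.pi, Real.exp (y * Real.cos x) * Real.sin x ^ 2) := by
  refine intervalIntegral.hasSum_integral_of_dominated_convergence
    (fun n _ => |y| ^ n / (n.factorial : ℝ)) ?_ ?_ ?_ ?_ ?_
  · intro n
    exact Continuous.aestronglyMeasurable (by fun_prop)
  · intro n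
    refine Filter.Eventually.of_forall fun x _ => ?_
    rw [norm_mul, norm_div, norm_pow, norm_mul, norm_pow, norm_pow, Real.norm_eq_abs, Real.norm_eq_abs, Real.norm_eq_abs, Real.norm_eq_abs, Nat.abs_cast]
    have h1 : |Real.cos x| ^ n ≤ 1 := pow_le_one₀ (abs_nonneg _) (Real.abs_cos_le_one x)
    have h2 : |Real.sin x| ^ 2 ≤ 1 := pow_le_one₀ (abs_nonneg _) (Real.abs_sin_le_one x)
    have h3 : |Real.cos x| ^ n * |Real.sin x| ^ 2 ≤ 1 := mul_le_one₀ h1 (by positivity) h2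
    exact mul_le_of_le_one_right (by positivity) h3
  · exact Filter.Eventually.of_forall fun x _ => Real.summable_pow_div_factorial _
  · exact intervalIntegrable_const
  · refine Filter.Eventually.of_forall fun x _ => ?_
    have := (NormedSpace.expSeries_div_hasSum_exp (y * Real.cos x)).mul_right (Real.sin x ^ 2)
    rw [← Real.exp_eq_exp_ℝ] at this
    have e : (fun n : ℕ => y ^ n / (n.factorial : ℝ) * (Real.cos x ^ n * Real.sin x ^ 2)) =
        fun n : ℕ => (y * Real.cos x) ^ n / (n.factorial : ℝ) * Real.sin x ^ 2 := by
      ext n; rw [mul_pow]; ring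
    rw [e]; exact this

lemma hkS1_eq {w : ℝ} (hw : 0 ≤ w) : hkS1 w =
    2 / Real.pi * ∫ x in (0:ℝ)..Real.pi, Real.exp (2 * Real.sqrt w * Real.cos x) * Real.sin x ^ 2 := by
  have h := hk_series (2 * Real.sqrt w)
  have hinj : Function.Injective (fun k : ℕ => 2 * k) := fun a b h => by simpa using h
  rw [← hinj.hasSum_iff] at h
  · rw [← h.tsum_eq, hkS1, ← tsum_mul_left]
    congr 1
    ext k
    simp only [Function.comp]
    rw [intervalIntegral.integral_const_mul, hk_mom, hk_cos_even, Nat.factorial_succ k, pow_mul, mul_pow, Real.sq_sqrt hw, mul_pow]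
    have h2 : (k.factorial : ℝ) ≠ 0 := by exact_mod_cast Nat.factorial_ne_zero _
    have h3 : ((2*k).factorial : ℝ) ≠ 0 := by exact_mod_cast Nat.factorial_ne_zero _
    have := Real.pi_ne_zero
    push_cast
    norm_num
    field_simp
  · intro n hn
    obtain ⟨k, hk | hk⟩ := Nat.even_or_odd' n
    · exact absurd ⟨k, hk.symm⟩ hn
    · rw [intervalIntegral.integral_const_mul, hk_mom, hk, hk_cos_odd]; simp

lemma hk_subst (y : ℝ) : ∫ x in (0:ℝ)..Real.pi, Real.exp (y * Real.cos x) * Real.sin x ^ 2 =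
    Real.exp y * ∫ r in (0:ℝ)..2, Real.sqrt r * Real.sqrt (2 - r) * Real.exp (-(y * r)) := by
  have h := intervalIntegral.integral_comp_mul_deriv (a := 0) (b := Real.pi) (f := fun x => 1 - Real.cos x) (f' := fun x => Real.sin x)
    (g := fun r => Real.sqrt r * Real.sqrt (2 - r) * Real.exp (-(y * r)))
    (fun x _ => by simpa using (Real.hasDerivAt_cos x).const_sub 1) (by fun_prop) (by fun_prop)
  simp only [Real.cos_zero, Real.cos_pi, sub_self] at h
  norm_num at h
  rw [← h, ← intervalIntegral.integral_const_mul]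
  refine intervalIntegral.integral_congr fun x hx => ?_
  rw [Set.uIcc_of_le Real.pi_pos.le] at hx
  have hs : 0 ≤ Real.sin x := Real.sin_nonneg_of_mem_Icc hx
  have h1 : Real.sqrt (1 - Real.cos x) * Real.sqrt (2 - (1 - Real.cos x)) = Real.sin x := by
    rw [← Real.sqrt_mul (by linarith [Real.cos_le_one x]), show (1 - Real.cos x) * (2 - (1 - Real.cos x)) = Real.sin x ^ 2 by
      rw [Real.sin_sq]; ring, Real.sqrt_sq hs]
  rw [h1, show y * Real.cos x = y + -(y * (1 - Real.cos x)) by ring, Real.exp_add]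
  ring

lemma hk_sqrt {r : ℝ} (hr : 0 < r) : |Real.sqrt (2 - r) - Real.sqrt 2| ≤ r := by
  have h2 : 1 ≤ Real.sqrt 2 := by rw [Real.one_le_sqrt]; norm_num
  have h3 : Real.sqrt (2 - r) ≤ Real.sqrt 2 := Real.sqrt_le_sqrt (by linarith)
  rw [abs_sub_comm, abs_of_nonneg (by linarith)]
  have h4 := Real.sqrt_nonneg (2-r)
  have h5 : Real.sqrt 2 * Real.sqrt 2 = 2 := Real.mul_self_sqrt (by norm_num)
  rcases le_total r 2 with h | h
  · have h6 : Real.sqrt (2-r) * Real.sqrt (2-r) = 2-r := Real.mul_self_sqrt (by linarith)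
    nlinarith
  · rw [Real.sqrt_eq_zero_of_nonpos (show 2 - r ≤ 0 by linarith)]
    nlinarith

lemma hk_int (s : ℝ) (hs : -1 < s) {y : ℝ} (hy : 0 < y) :
    IntegrableOn (fun r : ℝ => r ^ s * Real.exp (-(y * r))) (Set.Ioi 0) := by
  have := integrableOn_rpow_mul_exp_neg_mul_rpow hs one_pos hy
  simpa using this

lemma hk_K {y : ℝ} (hy : 0 < y) :
    |(∫ r in (0:ℝ)..2, Real.sqrt r * Real.sqrt (2 - r) * Real.exp (-(y * r))) -
      Real.sqrt 2 * (Real.sqrt Real.pi / 2) * y ^ (-(3:ℝ)/2)| ≤ Real.Gamma (5/2) * y ^ (-(5:ℝ)/2) := by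
  have i1 := hk_int (1/2) (by norm_num) hy
  have i3 := hk_int (3/2) (by norm_num) hy
  have e1 : ∫ r in Set.Ioi (0:ℝ), r ^ ((1:ℝ)/2) * Real.exp (-(y * r)) = (Real.sqrt Real.pi / 2) * y ^ (-(3:ℝ)/2) := by
    have := Real.integral_rpow_mul_exp_neg_mul_Ioi (a := 3/2) (by norm_num) hy
    norm_num at this
    norm_num
    rw [this, show (3/2:ℝ) = 1/2 + 1 by norm_num, Real.Gamma_add_one (by norm_num), Real.Gamma_one_half_eq,
      Real.inv_rpow hy.le, ← Real.rpow_neg hy.le]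
    norm_num
    ring
  have e3 : ∫ r in Set.Ioi (0:ℝ), r ^ ((3:ℝ)/2) * Real.exp (-(y * r)) = Real.Gamma (5/2) * y ^ (-(5:ℝ)/2) := by
    have := Real.integral_rpow_mul_exp_neg_mul_Ioi (a := 5/2) (by norm_num) hy
    norm_num at this
    norm_num
    rw [this, Real.inv_rpow hy.le, ← Real.rpow_neg hy.le]
    norm_num
    ring
  have hb : ∀ r ∈ Set.Ioi (0:ℝ), |Real.sqrt r * Real.sqrt (2 - r) * Real.exp (-(y * r)) - Real.sqrt 2 * (r ^ ((1:ℝ)/2) * Real.exp (-(y * r)))|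
      ≤ r ^ ((3:ℝ)/2) * Real.exp (-(y * r)) := by
    intro r hr
    have hr' : 0 < r := hr
    have : r ^ ((3:ℝ)/2) = r ^ ((1:ℝ)/2) * r := by
      rw [← Real.rpow_add_one hr'.ne']; norm_num
    rw [this, ← Real.sqrt_eq_rpow, show Real.sqrt r * Real.sqrt (2 - r) * Real.exp (-(y * r)) - Real.sqrt 2 * (Real.sqrt r * Real.exp (-(y * r))) =
      (Real.sqrt r * Real.exp (-(y*r))) * (Real.sqrt (2 - r) - Real.sqrt 2) by ring, abs_mul, abs_of_nonneg (by positivity)]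
    have := mul_le_mul_of_nonneg_left (hk_sqrt hr') (show 0 ≤ Real.sqrt r * Real.exp (-(y*r)) by positivity)
    linarith
  have im : IntegrableOn (fun r => Real.sqrt r * Real.sqrt (2 - r) * Real.exp (-(y * r)) - Real.sqrt 2 * (r ^ ((1:ℝ)/2) * Real.exp (-(y * r)))) (Set.Ioi 0) := by
    refine Integrable.mono' i3 ?_ ?_
    · refine AEStronglyMeasurable.sub (Continuous.aestronglyMeasurable (by fun_prop)) (i1.aestronglyMeasurable.const_mul _)
    · rw [ae_restrict_iff' measurableSet_Ioi]
      exact Filter.Eventually.of_forall hb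
  have i0 : IntegrableOn (fun r => Real.sqrt r * Real.sqrt (2 - r) * Real.exp (-(y * r))) (Set.Ioi 0) := by
    have := im.add (i1.const_mul (Real.sqrt 2))
    refine this.congr ?_
    refine Filter.Eventually.of_forall fun r => ?_
    simp
  have e0 : ∫ r in (0:ℝ)..2, Real.sqrt r * Real.sqrt (2 - r) * Real.exp (-(y * r)) =
      ∫ r in Set.Ioi (0:ℝ), Real.sqrt r * Real.sqrt (2 - r) * Real.exp (-(y * r)) := by
    rw [intervalIntegral.integral_of_le (by norm_num)]
    refine setIntegral_eq_of_subset_of_forall_sdiff_eq_zero measurableSet_Ioi (fun x hx => hx.1) ?_ |>.symm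
    intro x hx
    have : 2 < x := by
      by_contra hh
      exact hx.2 ⟨hx.1, not_lt.1 hh⟩
    rw [Real.sqrt_eq_zero_of_nonpos (show 2 - x ≤ 0 by linarith)]; simp
  rw [e0, mul_assoc, ← e1, ← integral_const_mul, ← integral_sub i0 (i1.const_mul _), ← e3]
  rw [← Real.norm_eq_abs]
  refine norm_integral_le_of_norm_le i3 ?_
  rw [ae_restrict_iff' measurableSet_Ioi]
  exact Filter.Eventually.of_forall hb

/-- asymptotics of the Bessel-type series -/
lemma hkS1_asymp : ∃ C : ℝ, 0 ≤ C ∧ ∀ w : ℝ, 0 < w →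
    |hkS1 w - 1 / (2 * Real.sqrt Real.pi) * w ^ (-(3:ℝ)/4) * Real.exp (2 * Real.sqrt w)| ≤
      C * (w ^ (-(3:ℝ)/4) * Real.exp (2 * Real.sqrt w) * w ^ (-(1:ℝ)/2)) := by
  refine ⟨2 / Real.pi * Real.Gamma (5/2) * 2 ^ (-(5:ℝ)/2), ?_, ?_⟩
  · have := Real.Gamma_pos_of_pos (show (0:ℝ) < 5/2 by norm_num)
    have := Real.pi_pos
    positivity
  intro w hw
  have hp := Real.pi_pos
  have hy : 0 < 2 * Real.sqrt w := by positivity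
  have h := hk_K hy
  rw [hkS1_eq hw.le, hk_subst]
  set K := ∫ r in (0:ℝ)..2, Real.sqrt r * Real.sqrt (2 - r) * Real.exp (-(2 * Real.sqrt w * r))
  have hy3 : (2 * Real.sqrt w) ^ (-(3:ℝ)/2) = 2 ^ (-(3:ℝ)/2) * w ^ (-(3:ℝ)/4) := by
    rw [Real.mul_rpow (by norm_num) (by positivity), Real.sqrt_eq_rpow, ← Real.rpow_mul hw.le]; norm_num
  have hy5 : (2 * Real.sqrt w) ^ (-(5:ℝ)/2) = 2 ^ (-(5:ℝ)/2) * (w ^ (-(3:ℝ)/4) * w ^ (-(1:ℝ)/2)) := by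
    rw [Real.mul_rpow (by norm_num) (by positivity), Real.sqrt_eq_rpow, ← Real.rpow_mul hw.le, ← Real.rpow_add hw]; norm_num
  rw [hy3, hy5] at h
  have h23 : Real.sqrt 2 * 2 ^ (-(3:ℝ)/2) = 1/2 := by
    rw [Real.sqrt_eq_rpow, ← Real.rpow_add (by norm_num)]; norm_num
  have hpp : Real.sqrt Real.pi * Real.sqrt Real.pi = Real.pi := Real.mul_self_sqrt hp.le
  have hsp : 0 < Real.sqrt Real.pi := by positivity
  have hc : 1 / (2 * Real.sqrt Real.pi) = 2 / Real.pi * (Real.sqrt 2 * (Real.sqrt Real.pi / 2) * 2 ^ (-(3:ℝ)/2)) := by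
    rw [show Real.sqrt 2 * (Real.sqrt Real.pi / 2) * (2:ℝ) ^ (-(3:ℝ)/2) = (Real.sqrt 2 * 2 ^ (-(3:ℝ)/2)) * (Real.sqrt Real.pi / 2) by ring, h23]
    nth_rewrite 2 [← hpp]
    field_simp
  rw [hc, show 2 / Real.pi * (Real.exp (2 * Real.sqrt w) * K) - 2 / Real.pi * (Real.sqrt 2 * (Real.sqrt Real.pi / 2) * 2 ^ (-(3:ℝ)/2)) * w ^ (-(3:ℝ)/4) * Real.exp (2 * Real.sqrt w)
    = (2 / Real.pi * Real.exp (2 * Real.sqrt w)) * (K - Real.sqrt 2 * (Real.sqrt Real.pi / 2) * (2 ^ (-(3:ℝ)/2) * w ^ (-(3:ℝ)/4))) by ring,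
    abs_mul, abs_of_nonneg (by positivity)]
  have := mul_le_mul_of_nonneg_left h (show 0 ≤ 2 / Real.pi * Real.exp (2 * Real.sqrt w) by positivity)
  linarith

lemma hk_coef_term (L c d p q : ℝ) (hL : 0 < L) (hc : 0 < c) (hd : 0 < d) (hp : 0 < p) (hq : 0 < q) (K m : ℕ)
    (F : ℝ) (hF0 : m = 0 → F = q ^ K)
    (hF : m ≠ 0 → F = ∑ i ∈ Finset.Ico K (m + K),
    ((m + K - K - 1).choose (i - K) : ℝ) * ((m + K).choose i : ℝ) *
      c ^ (m + K - i) * d ^ (i - K) * p ^ (m + K - i) * q ^ i) :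
    |Real.exp (-L) * L ^ (m + K) / ((m+K).factorial : ℝ) * F -
      Real.exp (-L) * (L * q) ^ K / (K.factorial : ℝ) * ((c * L * p) ^ m / (m.factorial : ℝ))| ≤
    Real.exp (-L) * (L * q) ^ K / ((K+1).factorial : ℝ) *
      ((2 * (L * q * d + c * L * p)) ^ m / (m.factorial : ℝ)) := by
  have hfp : ∀ n : ℕ, (0:ℝ) < (n.factorial : ℝ) := fun n => by exact_mod_cast Nat.factorial_pos _
  rcases m with _ | m
  · rw [hF0 rfl]
    simp only [zero_add, pow_zero, Nat.factorial_zero, Nat.cast_one, div_one, mul_one]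
    rw [show Real.exp (-L) * L ^ K / (K.factorial : ℝ) * q ^ K - Real.exp (-L) * (L * q) ^ K / (K.factorial : ℝ) = 0 by
      rw [mul_pow]; ring, abs_zero]
    have := hfp (K+1)
    positivity
  · rw [hF (by omega), Finset.sum_Ico_eq_sum_range, Nat.add_sub_cancel, Finset.mul_sum]
    set α := L * q * d with hα
    set β := c * L * p with hβ
    have hα0 : 0 < α := by positivity
    have hβ0 : 0 < β := by positivity
    have hterm : ∀ j ∈ Finset.range (m+1),
      Real.exp (-L) * L ^ (m + 1 + K) / ((m+1+K).factorial : ℝ) * (((m + 1 - 1).choose (K + j - K) : ℝ) * ((m + 1 + K).choose (K + j) : ℝ) *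
      c ^ (m + 1 + K - (K + j)) * d ^ (K + j - K) * p ^ (m + 1 + K - (K + j)) * q ^ (K + j)) =
      Real.exp (-L) * (L * q) ^ K / ((K+j).factorial : ℝ) * (m.choose j : ℝ) * α ^ j * β ^ (m+1-j) / ((m+1-j).factorial : ℝ) := by
      intro j hj
      have hj' : j ≤ m := by simpa [Nat.lt_succ_iff] using hj
      obtain ⟨l, rfl⟩ := Nat.exists_eq_add_of_le hj'
      have e1 : j + l + 1 + K - (K + j) = l + 1 := by omega
      have e2 : j + l + 1 - j = l + 1 := by omega
      rw [e1, e2, Nat.add_sub_cancel_left, Nat.add_sub_cancel]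
      have hch : (((j + l + 1 + K).choose (K + j) : ℕ) : ℝ) = ((j+l+1+K).factorial : ℝ) / (((K+j).factorial : ℝ) * ((l+1).factorial : ℝ)) := by
        rw [Nat.cast_choose ℝ (by omega), e1]
      rw [hch, hα, hβ]
      have h1 := (hfp (j+l+1+K)).ne'
      have h2 := (hfp (K+j)).ne'
      have h3 := (hfp (l+1)).ne'
      field_simp
      ring
    rw [Finset.sum_congr rfl hterm, Finset.sum_range_succ']
    simp only [Nat.choose_zero_right, add_zero, pow_zero, Nat.sub_zero, Nat.cast_one, mul_one]
    rw [show ∀ S : ℝ, S + Real.exp (-L) * (L * q) ^ K / (K.factorial : ℝ) * β ^ (m+1) / ((m+1).factorial : ℝ) -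
      Real.exp (-L) * (L * q) ^ K / (K.factorial : ℝ) * (β ^ (m+1) / ((m+1).factorial : ℝ)) = S from fun S => by ring]
    rw [abs_of_nonneg (Finset.sum_nonneg fun j _ => by positivity)]
    have hB : Real.exp (-L) * (L * q) ^ K / ((K+1).factorial : ℝ) * ((2 * (α + β)) ^ (m+1) / ((m+1).factorial : ℝ)) =
      ∑ j ∈ Finset.range (m+1+1), Real.exp (-L) * (L * q) ^ K / ((K+1).factorial : ℝ) * 2 ^ (m+1) * α ^ j * β ^ (m+1-j) / ((j.factorial : ℝ) * ((m+1-j).factorial : ℝ)) := by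
      rw [mul_pow 2, add_pow, Finset.mul_sum, Finset.sum_div, Finset.mul_sum]
      refine Finset.sum_congr rfl fun j hj => ?_
      rw [Nat.cast_choose ℝ (by simpa [Nat.lt_succ_iff] using hj)]
      have h1 := (hfp (m+1)).ne'
      have h2 := (hfp j).ne'
      have h3 := (hfp (m+1-j)).ne'
      field_simp
    rw [hB, Finset.sum_range_succ', Finset.sum_range_succ]
    refine le_trans (Finset.sum_le_sum fun j hj => ?_) (le_trans (le_add_of_nonneg_right (by positivity)) (le_add_of_nonneg_right (by positivity)))
    have hc1 : ((m.choose (j+1) : ℕ) : ℝ) ≤ 2 ^ (m+1) := by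
      have : m.choose (j+1) ≤ 2 ^ (m+1) := (Nat.choose_le_two_pow m (j+1)).trans (Nat.pow_le_pow_right (by norm_num) (by omega))
      exact_mod_cast this
    have hc2 : ((K+1).factorial : ℝ) * ((j+1).factorial : ℝ) ≤ ((K+(j+1)).factorial : ℝ) := by
      exact_mod_cast hk_fact K (j+1) (by omega)
    have h1 := hfp (K+1)
    have h2 := hfp (j+1)
    have h3 := hfp (m+1-(j+1))
    have h4 := hfp (K+(j+1))
    calc Real.exp (-L) * (L * q) ^ K / ((K+(j+1)).factorial : ℝ) * (m.choose (j+1) : ℝ) * α ^ (j+1) * β ^ (m+1-(j+1)) / ((m+1-(j+1)).factorial : ℝ)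
        ≤ Real.exp (-L) * (L * q) ^ K / (((K+1).factorial : ℝ) * ((j+1).factorial : ℝ)) * 2 ^ (m+1) * α ^ (j+1) * β ^ (m+1-(j+1)) / ((m+1-(j+1)).factorial : ℝ) := by
          gcongr
      _ = _ := by field_simp

lemma hk_tsum_bound {f g h : ℕ → ℝ} {a b : ℝ} (hg : HasSum g a) (hh : HasSum h b)
    (H : ∀ n, |f n - g n| ≤ h n) : |∑' n, f n - a| ≤ b := by
  have hs : Summable (fun n => f n - g n) := Summable.of_norm_bounded hh.summable H
  have hf : Summable f := by
    have := hs.add hg.summable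
    simpa using this
  rw [← hg.tsum_eq, ← hf.tsum_sub hg.summable]
  rw [← Real.norm_eq_abs]
  exact tsum_of_norm_bounded hh (fun n => by rw [Real.norm_eq_abs]; exact H n)

lemma hk_expsum (A x : ℝ) : HasSum (fun m : ℕ => A * (x ^ m / (m.factorial : ℝ))) (A * Real.exp x) := by
  have := (NormedSpace.expSeries_div_hasSum_exp x).mul_left A
  rwa [← Real.exp_eq_exp_ℝ] at this

lemma hk_b (t lam η₁ η₂ p q : ℝ)
    (ht : 0 < t) (hlam : 0 < lam) (hη₁ : 1 < η₁) (hη₂ : 0 < η₂)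
    (hp : 0 < p) (hq : 0 < q) : ∃ C : ℝ, 0 ≤ C ∧ ∀ k : ℕ,
    |bCoef lam t η₁ η₂ p q k - Real.exp (η₁ * lam * t * p / (η₁ + η₂) - lam * t) *
      ((η₂ * lam * t * q) ^ (k+1) / ((k.factorial : ℝ) * ((k+1).factorial : ℝ)))| ≤
      C * ((η₂ * lam * t * q) ^ (k+1) / ((k.factorial : ℝ) * ((k+2).factorial : ℝ))) := by
  have hη : 0 < η₁ := by linarith
  have hs : 0 < η₁ + η₂ := by linarith
  set c := η₁ / (η₁ + η₂) with hc
  set d := η₂ / (η₁ + η₂) with hd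
  set L := lam * t with hL
  have hL0 : 0 < L := by positivity
  refine ⟨Real.exp (-L) * Real.exp (2 * (L * q * d + c * L * p)), by positivity, fun k => ?_⟩
  have key := hk_tsum_bound (f := fun m : ℕ => poisCoef lam t (m + (k + 1)) * Qcoef η₁ η₂ p q (m + (k + 1)) (k + 1))
    (hk_expsum (Real.exp (-L) * (L * q) ^ (k+1) / ((k+1).factorial : ℝ)) (c * L * p))
    (hk_expsum (Real.exp (-L) * (L * q) ^ (k+1) / ((k+1+1).factorial : ℝ)) (2 * (L * q * d + c * L * p)))
    (fun m => hk_coef_term L c d p q hL0 (by positivity) (by positivity) hp hq (k+1) m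
      (Qcoef η₁ η₂ p q (m + (k + 1)) (k + 1))
      (fun h => by subst h; simp [Qcoef])
      (fun h => by
        unfold Qcoef
        rw [if_neg (by omega)]))
  have hfp : ∀ n : ℕ, (0:ℝ) < (n.factorial : ℝ) := fun n => by exact_mod_cast Nat.factorial_pos _
  have h1 := hfp k
  have h2 := hfp (k+1)
  have h3 := hfp (k+2)
  have := mul_le_mul_of_nonneg_left key (show 0 ≤ η₂ ^ (k+1) / (k.factorial : ℝ) by positivity)
  rw [← abs_of_nonneg (show 0 ≤ η₂ ^ (k+1) / (k.factorial : ℝ) by positivity), ← abs_mul, mul_sub,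
    abs_of_nonneg (show 0 ≤ η₂ ^ (k+1) / (k.factorial : ℝ) by positivity)] at this
  have hE : Real.exp (η₁ * lam * t * p / (η₁ + η₂) - L) = Real.exp (-L) * Real.exp (c * L * p) := by
    rw [← Real.exp_add]; congr 1; rw [hc, hL]; field_simp; ring
  have hz : η₂ * lam * t * q = η₂ * (L * q) := by rw [hL]; ring
  rw [hE, hz, mul_pow]
  unfold bCoef
  refine le_trans (le_of_eq ?_) (this.trans (le_of_eq ?_))
  · congr 2
    field_simp
  · field_simp

lemma hk_G (t lam η₁ η₂ p q : ℝ)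
    (ht : 0 < t) (hlam : 0 < lam) (hη₁ : 1 < η₁) (hη₂ : 0 < η₂)
    (hp : 0 < p) (hq : 0 < q) : ∃ C : ℝ, 0 ≤ C ∧ ∀ u : ℝ, 0 < u →
    |G2m lam t η₁ η₂ p q u - Real.exp (η₁ * lam * t * p / (η₁ + η₂) - lam * t) *
      ((η₂ * lam * t * q) * hkS1 (η₂ * lam * t * q * u))| ≤
      C * ((η₂ * lam * t * q) * hkS2 (η₂ * lam * t * q * u)) := by
  obtain ⟨C, hC, H⟩ := hk_b t lam η₁ η₂ p q ht hlam hη₁ hη₂ hp hq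
  refine ⟨C, hC, fun u hu => ?_⟩
  set z := η₂ * lam * t * q with hz
  have hz0 : 0 < z := by positivity
  set E := Real.exp (η₁ * lam * t * p / (η₁ + η₂) - lam * t)
  refine hk_tsum_bound
    (((hkS_summable 1 (show 0 ≤ z * u by positivity)).hasSum.mul_left z).mul_left E)
    (((hkS_summable 2 (show 0 ≤ z * u by positivity)).hasSum.mul_left z).mul_left C) (fun k => ?_)
  have := mul_le_mul_of_nonneg_right (H k) (show 0 ≤ u ^ k by positivity)
  rw [← abs_of_nonneg (show 0 ≤ u ^ k by positivity), ← abs_mul, sub_mul, abs_of_nonneg (show 0 ≤ u ^ k by positivity)] at this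
  refine le_trans (le_of_eq ?_) (this.trans (le_of_eq ?_))
  · congr 2
    rw [mul_pow]; ring
  · rw [mul_pow]; ring

/-- Theorem: asymptotic behavior of `H₂(t,x)` as `x → 0`:
`H₂(t,x) = (1/(2√π)) (η₂λtq)^{1/4} exp{η₁λtp/(η₁+η₂) − λt} (log(1/x))^{−3/4}`
`· exp{2√(η₂λtq) √(log(1/x))} (1 + O((log(1/x))^{−1/2}))` as `x → 0`. -/
theorem H2_asymptotics_at_zero
    (t lam η₁ η₂ p q : ℝ)
    (ht : 0 < t) (hlam : 0 < lam) (hη₁ : 1 < η₁) (hη₂ : 0 < η₂)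
    (hp : 0 < p) (hq : 0 < q) (hpq : p + q = 1) :
    (fun x => H2fun lam t η₁ η₂ p q x -
        1 / (2 * Real.sqrt Real.pi) * (η₂ * lam * t * q) ^ ((1:ℝ)/4) *
          Real.exp (η₁ * lam * t * p / (η₁ + η₂) - lam * t) *
          (Real.log x⁻¹) ^ (-(3:ℝ)/4) *
          Real.exp (2 * Real.sqrt (η₂ * lam * t * q) * Real.sqrt (Real.log x⁻¹)))
      =O[nhdsWithin 0 (Set.Ioi 0)]
      (fun x =>
        1 / (2 * Real.sqrt Real.pi) * (η₂ * lam * t * q) ^ ((1:ℝ)/4) *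
          Real.exp (η₁ * lam * t * p / (η₁ + η₂) - lam * t) *
          (Real.log x⁻¹) ^ (-(3:ℝ)/4) *
          Real.exp (2 * Real.sqrt (η₂ * lam * t * q) * Real.sqrt (Real.log x⁻¹)) *
          (Real.log x⁻¹) ^ (-(1:ℝ)/2)) := by
  obtain ⟨C, hC, H⟩ := hk_G t lam η₁ η₂ p q ht hlam hη₁ hη₂ hp hq
  obtain ⟨D, hD, HD⟩ := hkS1_asymp
  set z := η₂ * lam * t * q with hz
  have hz0 : 0 < z := by positivity
  set E := Real.exp (η₁ * lam * t * p / (η₁ + η₂) - lam * t) with hE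
  have hE0 : 0 < E := Real.exp_pos _
  have hpi := Real.pi_pos
  set κ := 1 / (2 * Real.sqrt Real.pi) with hκ
  have hκ0 : 0 < κ := by positivity
  have hlim : Tendsto (fun x : ℝ => Real.log x⁻¹) (nhdsWithin 0 (Set.Ioi 0)) atTop :=
    Real.tendsto_log_atTop.comp tendsto_inv_nhdsGT_zero
  set M : ℝ := (E * D + C * (κ + D)) / (κ * E) * z ^ (-(1:ℝ)/2) with hM
  refine IsBigO.of_bound M ?_
  filter_upwards [hlim.eventually_ge_atTop (max 1 z⁻¹)] with x hx
  unfold H2fun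
  generalize Real.log x⁻¹ = u at hx
  have hu1 : 1 ≤ u := (le_max_left _ _).trans hx
  have hu0 : 0 < u := by linarith
  have hzu : 1 ≤ z * u := by
    have : z⁻¹ ≤ u := (le_max_right _ _).trans hx
    calc (1:ℝ) = z * z⁻¹ := by field_simp
      _ ≤ z * u := by gcongr
  have hw0 : 0 < z * u := by positivity
  have h1 := H u hu0
  have h2 := HD (z * u) hw0
  have h3 := hkS2_le hw0.le
  rw [Real.norm_eq_abs, Real.norm_of_nonneg (by positivity)]
  have hsq : Real.sqrt z * Real.sqrt u = Real.sqrt (z * u) := (Real.sqrt_mul hz0.le u).symm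
  rw [mul_assoc 2 (Real.sqrt z), hsq]
  set X := Real.exp (2 * Real.sqrt (z * u)) with hX
  have hX0 : 0 < X := Real.exp_pos _
  set V := (z * u) ^ (-(3:ℝ)/4) with hV
  have hV0 : 0 < V := by positivity
  set R := (z * u) ^ (-(1:ℝ)/2) with hR
  have hR0 : 0 < R := by positivity
  have hR1 : R ≤ 1 := Real.rpow_le_one_of_one_le_of_nonpos hzu (by norm_num)
  have hzV : z ^ ((1:ℝ)/4) * u ^ (-(3:ℝ)/4) = z * V := by
    rw [hV, Real.mul_rpow hz0.le hu0.le, ← mul_assoc]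
    congr 1
    nth_rewrite 2 [← Real.rpow_one z]
    rw [← Real.rpow_add hz0]; norm_num
  have hRz : R = z ^ (-(1:ℝ)/2) * u ^ (-(1:ℝ)/2) := Real.mul_rpow hz0.le hu0.le
  have hsR : Real.sqrt (z * u) * R = 1 := by
    rw [hR, Real.sqrt_eq_rpow, ← Real.rpow_add hw0]; norm_num
  -- bound on the second series
  have h4 : hkS2 (z * u) ≤ R * hkS1 (z * u) := by
    have := mul_le_mul_of_nonneg_left h3 hR0.le
    calc hkS2 (z * u) = (Real.sqrt (z * u) * R) * hkS2 (z * u) := by rw [hsR, one_mul]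
      _ = R * (Real.sqrt (z * u) * hkS2 (z * u)) := by ring
      _ ≤ _ := this
  have h5 : hkS1 (z * u) ≤ (κ + D) * (V * X) := by
    have h6 := (abs_le.1 h2).2
    have h7 : D * (V * X * R) ≤ D * (V * X) := by
      apply mul_le_mul_of_nonneg_left _ hD
      exact mul_le_of_le_one_right (by positivity) hR1
    linarith
  have h8 : hkS2 (z * u) ≤ R * ((κ + D) * (V * X)) := h4.trans (mul_le_mul_of_nonneg_left h5 hR0.le)
  have e1 : κ * z ^ ((1:ℝ)/4) * E * u ^ (-(3:ℝ)/4) * X = E * (z * (κ * V * X)) := by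
    rw [show κ * z ^ ((1:ℝ)/4) * E * u ^ (-(3:ℝ)/4) * X = κ * (z ^ ((1:ℝ)/4) * u ^ (-(3:ℝ)/4)) * E * X by ring, hzV]; ring
  rw [e1]
  have e2 : M * (E * (z * (κ * V * X)) * u ^ (-(1:ℝ)/2)) = (E * D + C * (κ + D)) * (z * V * X * R) := by
    rw [hM, hRz]
    field_simp
  rw [e2]
  have h9 : |E * (z * hkS1 (z * u)) - E * (z * (κ * V * X))| ≤ E * (z * (D * (V * X * R))) := by
    rw [← mul_sub, ← mul_sub, abs_mul, abs_mul, abs_of_pos hE0, abs_of_pos hz0]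
    gcongr
  have h10 : C * (z * hkS2 (z * u)) ≤ C * (z * (R * ((κ + D) * (V * X)))) := by
    gcongr
  have h11 := abs_sub_le (G2m lam t η₁ η₂ p q u) (E * (z * hkS1 (z * u))) (E * (z * (κ * V * X)))
  linarith
end
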